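/- (Lemma A.1: energy of the singular vortex-ring field outside the cores.) Let n ≥ 1. There exist constants C > 0 and δ₀ > 0, depending only on n, such that for all distinct points a₁,…,aₙ ∈ H and all 0 < ρ ≤ δ₀ ρ_a, | ∫_{H ∖ ∪ᵢ B(aᵢ,ρ)} (1/(2r)) |∇(r Ψ*_a)|² dr dz − π Σᵢ r(aᵢ)[ log(r(aᵢ)/ρ) + Σ_{j≠i} A_{a_j}(aᵢ) + 3 log 2 − 2 ] | ≤ C (Σᵢ r(aᵢ)) (ρ/ρ_a) log²(ρ/ρ_a). -/

import Mathlib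

open MeasureTheory Filter Metric
open scoped Topology Real

noncomputable section

/-- Euclidean norm on `ℝ × ℝ`. -/
def nE (v : ℝ × ℝ) : ℝ := Real.sqrt (v.1 ^ 2 + v.2 ^ 2)

/-- Euclidean squared norm on `ℝ × ℝ`. -/
def sqE (v : ℝ × ℝ) : ℝ := v.1 ^ 2 + v.2 ^ 2

/-- Euclidean distance on `ℝ × ℝ`. -/
def dE (p q : ℝ × ℝ) : ℝ := nE (p - q)

/-- Euclidean open ball in `ℝ × ℝ`. -/
def ballE (a : ℝ × ℝ) (r : ℝ) : Set (ℝ × ℝ) := {p | dE p a < r}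

/-- The open half plane `H = {(r,z) : r > 0}`. -/
def Hp : Set (ℝ × ℝ) := {p | 0 < p.1}

/-- Partial derivative in the `r` direction, complex valued. -/
def pdR (u : ℝ × ℝ → ℂ) (p : ℝ × ℝ) : ℂ := fderiv ℝ u p (1, 0)
/-- Partial derivative in the `z` direction, complex valued. -/
def pdZ (u : ℝ × ℝ → ℂ) (p : ℝ × ℝ) : ℂ := fderiv ℝ u p (0, 1)
/-- Partial derivative in the `r` direction, real valued. -/
def pdRr (f : ℝ × ℝ → ℝ) (p : ℝ × ℝ) : ℝ := fderiv ℝ f p (1, 0)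
/-- Partial derivative in the `z` direction, real valued. -/
def pdZr (f : ℝ × ℝ → ℝ) (p : ℝ × ℝ) : ℝ := fderiv ℝ f p (0, 1)

/-- Gradient of a real function on `ℝ × ℝ`. -/
def gradR (f : ℝ × ℝ → ℝ) (p : ℝ × ℝ) : ℝ × ℝ := (pdRr f p, pdZr f p)

/-- `y × w = Re (i y conj w)`. -/
def crossC (y w : ℂ) : ℝ := (Complex.I * y * (starRingEnd ℂ) w).re

/-- Jacobian `Ju = ∂_r u × ∂_z u`. -/
def Jac (u : ℝ × ℝ → ℂ) (p : ℝ × ℝ) : ℝ := crossC (pdR u p) (pdZ u p)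

/-- Ginzburg–Landau energy density. -/
def eGL (ε : ℝ) (u : ℝ × ℝ → ℂ) (p : ℝ × ℝ) : ℝ :=
  (‖pdR u p‖ ^ 2 + ‖pdZ u p‖ ^ 2) / 2 + (1 - ‖u p‖ ^ 2) ^ 2 / (4 * ε ^ 2)

/-- Weighted Ginzburg–Landau energy on the half plane. -/
def Ew (ε : ℝ) (u : ℝ × ℝ → ℂ) : ℝ := ∫ p in Hp, eGL ε u p * p.1

/-- `r` component of the current `j(u) = Im (conj u ∇u)`. -/
def jr (u : ℝ × ℝ → ℂ) (p : ℝ × ℝ) : ℝ := ((starRingEnd ℂ) (u p) * pdR u p).im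
/-- `z` component of the current `j(u)`. -/
def jz (u : ℝ × ℝ → ℂ) (p : ℝ × ℝ) : ℝ := ((starRingEnd ℂ) (u p) * pdZ u p).im

/-- The loop-current vector potential `A_a`. -/
def Avec (a : ℝ × ℝ) (p : ℝ × ℝ) : ℝ :=
  (a.1 / 2) * ∫ t in (0:ℝ)..(2 * π),
    Real.cos t / Real.sqrt (a.1 ^ 2 + p.1 ^ 2 + (p.2 - a.2) ^ 2 - 2 * a.1 * p.1 * Real.cos t)

/-- Ginzburg–Landau energy on the unit disc. -/
def eDisc (ε : ℝ) (v : ℝ × ℝ → ℂ) : ℝ :=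
  ∫ p in ballE ((0:ℝ), (0:ℝ)) 1,
    ((‖pdR v p‖ ^ 2 + ‖pdZ v p‖ ^ 2) / 2 + (1 - ‖v p‖ ^ 2) ^ 2 / (4 * ε ^ 2))

/-- The constant `γ` of Bethuel–Brezis–Hélein. -/
def glGamma : ℝ :=
  Filter.liminf (fun ε : ℝ =>
      sInf {E : ℝ | ∃ v : ℝ × ℝ → ℂ,
        DifferentiableOn ℝ v (ballE ((0:ℝ), (0:ℝ)) 1) ∧
        IntegrableOn (fun p => (‖pdR v p‖ ^ 2 + ‖pdZ v p‖ ^ 2) / 2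
            + (1 - ‖v p‖ ^ 2) ^ 2 / (4 * ε ^ 2)) (ballE ((0:ℝ), (0:ℝ)) 1) ∧
        (∀ p : ℝ × ℝ, nE p = 1 → v p = (p.1 : ℂ) + (p.2 : ℂ) * Complex.I) ∧
        E = eDisc ε v}
      - π * |Real.log ε|) (𝓝[>] (0:ℝ))

/-- The Hamiltonian `H_ε`. -/
def Hfun (ε : ℝ) {n : ℕ} (a : Fin n → ℝ × ℝ) : ℝ :=
  ∑ i, (a i).1 * (π * Real.log ((a i).1 / ε) + glGamma + π * (3 * Real.log 2 - 2)
      + π * ∑ j ∈ Finset.univ.erase i, Avec (a j) (a i))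

/-- `ρ_a = (1/4) min (min_{i≠j} |aᵢ-aⱼ|, minᵢ r(aᵢ))`. -/
def rhoConf {n : ℕ} (a : Fin n → ℝ × ℝ) : ℝ :=
  (1 / 4) * sInf ({d | ∃ i j : Fin n, i ≠ j ∧ d = dE (a i) (a j)} ∪ {d | ∃ i, d = (a i).1})

/-- Positive part. -/
def posPart' (x : ℝ) : ℝ := max x 0

/-- Admissible test functions for the `Ẇ^{-1,1}(Ω)` norm. -/
def W11Adm (Ω : Set (ℝ × ℝ)) (φ : ℝ × ℝ → ℝ) : Prop :=
  (∀ p q : ℝ × ℝ, |φ p - φ q| ≤ dE p q) ∧ HasCompactSupport φ ∧ ∀ p ∉ Ω, φ p = 0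

/-- `‖Ju − π Σᵢ δ_{aᵢ}‖_{Ẇ^{-1,1}(Ω)}`. -/
def w11JacDiff (Ω : Set (ℝ × ℝ)) (u : ℝ × ℝ → ℂ) {n : ℕ} (a : Fin n → ℝ × ℝ) : ℝ :=
  sSup {x | ∃ φ, W11Adm Ω φ ∧ x = (∫ p in Ω, Jac u p * φ p) - π * ∑ i, φ (a i)}

/-- `Ẇ^{-1,1}(Ω)` norm of a locally integrable function. -/
def w11Fn (Ω : Set (ℝ × ℝ)) (f : ℝ × ℝ → ℝ) : ℝ :=
  sSup {x | ∃ φ, W11Adm Ω φ ∧ x = ∫ p in Ω, f p * φ p}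

/-- `div (r ∇ v)`. -/
def divRGrad (v : ℝ × ℝ → ℂ) (p : ℝ × ℝ) : ℂ :=
  fderiv ℝ (fun q => (q.1 : ℂ) * pdR v q) p (1, 0)
    + fderiv ℝ (fun q => (q.1 : ℂ) * pdZ v q) p (0, 1)

/-- A finite-energy solution of the cylindrical Gross–Pitaevskii equation `(GP)^c_ε`. -/
structure IsGPSolution (ε : ℝ) (u : ℝ → ℝ × ℝ → ℂ) : Prop where
  smooth : ContDiffOn ℝ (⊤ : ℕ∞) (fun q : (ℝ × ℝ) × ℝ => u q.2 q.1) (closure Hp ×ˢ (Set.univ : Set ℝ))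
  eqn : ∀ t : ℝ, ∀ p ∈ Hp,
    Complex.I * (p.1 : ℂ) * deriv (fun τ => u τ p) t - divRGrad (u t) p
      = ((p.1 : ℂ) / (ε : ℂ) ^ 2) * u t p * (1 - (‖u t p‖ : ℂ) ^ 2)
  bdry : ∀ t : ℝ, ∀ p : ℝ × ℝ, p.1 = 0 → pdR (u t) p = 0
  energyFin : ∀ t : ℝ, IntegrableOn (fun p => eGL ε (u t) p * p.1) Hp volume
  energyConst : ∀ t : ℝ, Ew ε (u t) = Ew ε (u 0)

/-- `∇_{aᵢ} H_ε`. -/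
def gradHi (ε : ℝ) {n : ℕ} (a : Fin n → ℝ × ℝ) (i : Fin n) : ℝ × ℝ :=
  gradR (fun x => Hfun ε (Function.update a i x)) (a i)

/-- The matrix `𝕁` with rows `(0, -1/r)` and `(1/r, 0)`. -/
def Jmat (r : ℝ) (v : ℝ × ℝ) : ℝ × ℝ := (-v.2 / r, v.1 / r)

/-- The system `(LF)_ε`. -/
def IsLFepsSol (ε : ℝ) {n : ℕ} (a : ℝ → Fin n → ℝ × ℝ) (I : Set ℝ) : Prop :=
  ∀ i : Fin n, ∀ s ∈ I,
    HasDerivWithinAt (fun τ => a τ i)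
      ((1 / (π * |Real.log ε|)) • Jmat ((a s i).1) (gradHi ε (a s) i)) I s

/-- `(x, y)^⊥ = (-y, x)`. -/
def perp2 (v : ℝ × ℝ) : ℝ × ℝ := (-v.2, v.1)

/-- The limiting leapfrogging system `(LF)`. -/
def IsLFSol (r₀ : ℝ) {n : ℕ} (b : ℝ → Fin n → ℝ × ℝ) (I : Set ℝ) : Prop :=
  ∀ i : Fin n, ∀ s ∈ I,
    HasDerivWithinAt (fun τ => b τ i)
      ((∑ j ∈ Finset.univ.erase i, (sqE (b s i - b s j))⁻¹ • perp2 (b s i - b s j))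
        - ((b s i).1 / r₀ ^ 2) • ((0:ℝ), (1:ℝ))) I s

/-- The `ε`-scaled configuration of points around `(r₀, z₀)`. -/
def aScaled (r₀ z₀ : ℝ) {n : ℕ} (b : Fin n → ℝ × ℝ) (ε : ℝ) (i : Fin n) : ℝ × ℝ :=
  (r₀ + (b i).1 / Real.sqrt |Real.log ε|, z₀ + (b i).2 / Real.sqrt |Real.log ε|)

/-- `Ψ*_ξ = Σᵢ A_{ξᵢ}`. -/
def PsiStar {n : ℕ} (ξ : Fin n → ℝ × ℝ) (p : ℝ × ℝ) : ℝ := ∑ i, Avec (ξ i) p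

/-- `r Ψ*_ξ`. -/
def rPsiStar {n : ℕ} (ξ : Fin n → ℝ × ℝ) (p : ℝ × ℝ) : ℝ := p.1 * PsiStar ξ p

/-- `r` component of `j*_ξ = -(1/r) ∇^⊥ (r Ψ*_ξ)`. -/
def jrStar {n : ℕ} (ξ : Fin n → ℝ × ℝ) (p : ℝ × ℝ) : ℝ := (1 / p.1) * pdZr (rPsiStar ξ) p
/-- `z` component of `j*_ξ`. -/
def jzStar {n : ℕ} (ξ : Fin n → ℝ × ℝ) (p : ℝ × ℝ) : ℝ := -(1 / p.1) * pdRr (rPsiStar ξ) p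

/-- Energy density of the modulus `e_ε(|u|)`. -/
def eGLmod (ε : ℝ) (u : ℝ × ℝ → ℂ) (p : ℝ × ℝ) : ℝ :=
  ((pdRr (fun q => ‖u q‖) p) ^ 2 + (pdZr (fun q => ‖u q‖) p) ^ 2) / 2
    + (1 - ‖u p‖ ^ 2) ^ 2 / (4 * ε ^ 2)

/-- The core component `𝒞ᵢ`. -/
def coreComp {n : ℕ} (ξ : Fin n → ℝ × ℝ) (rξ : ℝ) (i : Fin n) : Set (ℝ × ℝ) :=
  insert (ξ i)
    (connectedComponentIn {p : ℝ × ℝ | rPsiStar ξ (ξ i + (rξ, 0)) ≤ rPsiStar ξ p}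
      (ξ i + (rξ, 0)))

-- `r Ψ^♮_ξ`, the truncated stream function.
open Classical in
def rPsiNat {n : ℕ} (ξ : Fin n → ℝ × ℝ) (rξ : ℝ) (p : ℝ × ℝ) : ℝ :=
  if h : ∃ i, p ∈ coreComp ξ rξ i then rPsiStar ξ (ξ h.choose + (rξ, 0))
  else rPsiStar ξ p

/-- `r` component of the truncated current `j^♮(u*_ξ)`. -/
def jrNat {n : ℕ} (ξ : Fin n → ℝ × ℝ) (rξ : ℝ) (p : ℝ × ℝ) : ℝ :=
  (1 / p.1) * pdZr (rPsiNat ξ rξ) p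
/-- `z` component of the truncated current `j^♮(u*_ξ)`. -/
def jzNat {n : ℕ} (ξ : Fin n → ℝ × ℝ) (rξ : ℝ) (p : ℝ × ℝ) : ℝ :=
  -(1 / p.1) * pdRr (rPsiNat ξ rξ) p
/-- The truncated current `j^♮(u*_ξ)`. -/
def jNat {n : ℕ} (ξ : Fin n → ℝ × ℝ) (rξ : ℝ) (p : ℝ × ℝ) : ℝ × ℝ :=
  (jrNat ξ rξ p, jzNat ξ rξ p)

/-- Second partial derivatives. -/
def pd2RRr (f : ℝ × ℝ → ℝ) (p : ℝ × ℝ) : ℝ := fderiv ℝ (pdRr f) p (1, 0)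
def pd2RZr (f : ℝ × ℝ → ℝ) (p : ℝ × ℝ) : ℝ := fderiv ℝ (pdZr f) p (1, 0)
def pd2ZZr (f : ℝ × ℝ → ℝ) (p : ℝ × ℝ) : ℝ := fderiv ℝ (pdZr f) p (0, 1)

/-- The functional `F(X, φ)` for a vector field `X`. -/
def Ffun (X : ℝ × ℝ → ℝ × ℝ) (φ : ℝ × ℝ → ℝ) : ℝ :=
  ∫ p in Hp,
    (-(1 / p.1) * (X p).1 * (X p).2 * pdRr φ p + (1 / p.1) * (X p).1 ^ 2 * pdZr φ p
      + (X p).1 * (X p).2 * pd2RRr φ p + (X p).2 ^ 2 * pd2RZr φ p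
      - (X p).1 ^ 2 * pd2RZr φ p - (X p).1 * (X p).2 * pd2ZZr φ p)

/-- `Ω₀ = {r ≥ r₀/4}`. -/
def Omega0 (r₀ : ℝ) : Set (ℝ × ℝ) := {p | r₀ / 4 ≤ p.1}

/-- Excess energy `Σ_a = [E^w_ε(u) − H_ε(a)]⁺`. -/
def SigA (ε : ℝ) {n : ℕ} (u : ℝ × ℝ → ℂ) (a : Fin n → ℝ × ℝ) : ℝ :=
  posPart' (Ew ε u - Hfun ε a)

/-- Localization scale `r_a`. -/
def rA (r₀ : ℝ) {n : ℕ} (u : ℝ × ℝ → ℂ) (a : Fin n → ℝ × ℝ) : ℝ :=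
  w11JacDiff (Omega0 r₀) u a

/-- `Σ^r_a = Σ_a + r_a |log ε|`. -/
def SigRA (ε r₀ : ℝ) {n : ℕ} (u : ℝ × ℝ → ℂ) (a : Fin n → ℝ × ℝ) : ℝ :=
  SigA ε u a + rA r₀ u a * |Real.log ε|

/-- Hypothesis `(H₁)`. -/
def HypH1 (ε K₁ r₀ : ℝ) {n : ℕ} (a : Fin n → ℝ × ℝ) : Prop :=
  (∀ i j : Fin n, i ≠ j → 8 / |Real.log ε| ≤ dE (a i) (a j) ∧ dE (a i) (a j) ≤ K₁) ∧
  ∀ i, r₀ / 2 ≤ (a i).1 ∧ (a i).1 ≤ 2 * r₀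

/-- Hypothesis `(H₀)`. -/
def HypH0 (ε K₀ r₀ : ℝ) {n : ℕ} (a : Fin n → ℝ × ℝ) : Prop :=
  (∀ i j : Fin n, i ≠ j →
    K₀⁻¹ / Real.sqrt |Real.log ε| ≤ dE (a i) (a j) ∧
    dE (a i) (a j) ≤ K₀ / Real.sqrt |Real.log ε|) ∧
  (∀ i, r₀ / 2 ≤ (a i).1 ∧ (a i).1 ≤ 2 * r₀) ∧
  (∀ i, |(a i).2| ≤ K₀)

/-- The conclusions of Proposition 2.1 for the points `ξ`. -/
def Concl21 (ε C₁ r₀ : ℝ) {n : ℕ} (u : ℝ × ℝ → ℂ) (a ξ : Fin n → ℝ × ℝ) : Prop :=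
  (∀ i, ξ i ∈ Hp) ∧
  w11JacDiff {p : ℝ × ℝ | C₁ * (SigA ε u ξ + 1) / |Real.log ε| ≤ p.1} u ξ
      ≤ C₁ * ε * |Real.log ε| ^ C₁ * Real.exp (C₁ * SigRA ε r₀ u a) ∧
  (∫ p in Hp \ ⋃ i, ballE (ξ i) (ε ^ ((2:ℝ)/3)),
      (eGLmod ε u p
        + ((jr u p / ‖u p‖ - jrStar ξ p) ^ 2 + (jz u p / ‖u p‖ - jzStar ξ p) ^ 2)) * p.1)
      ≤ C₁ * (SigA ε u ξ
        + ε ^ ((1:ℝ)/3) * |Real.log ε| ^ C₁ * Real.exp (C₁ * SigRA ε r₀ u a)) ∧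
  SigA ε u ξ ≤ SigA ε u a + C₁ * rA r₀ u a * |Real.log ε|
      + C₁ * ε * |Real.log ε| ^ C₁ * Real.exp (C₁ * SigRA ε r₀ u a)

/-- A smooth cut-off at scale `Rε`. -/
def IsCutoff (Cχ Rε : ℝ) (χ : ℝ × ℝ → ℝ) : Prop :=
  ContDiff ℝ (⊤ : ℕ∞) χ ∧ (∀ p, χ p ∈ Set.Icc (0:ℝ) 1) ∧
  (∀ p : ℝ × ℝ, p ∉ (Set.Icc (0:ℝ) (2 * Rε)) ×ˢ (Set.Icc (-(2 * Rε)) (2 * Rε)) → χ p = 0) ∧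
  HasCompactSupport χ ∧
  (∀ p ∈ (Set.Icc (0:ℝ) Rε) ×ˢ (Set.Icc (-Rε) Rε), χ p = 1) ∧
  (∀ p, nE (gradR χ p) ≤ Cχ / Rε)

/-- Localized momentum `P_ε(u)`. -/
def Peps (χ : ℝ × ℝ → ℝ) (u : ℝ × ℝ → ℂ) : ℝ := ∫ p in Hp, Jac u p * p.1 ^ 2 * χ p

/-- The setting of Theorem 1.2 : a solution of `(LF)_ε` on `[0,S₀]` with the
separation and radius bounds. -/
def LFSetting (ε K₀ r₀ S₀ : ℝ) {n : ℕ} (a : ℝ → Fin n → ℝ × ℝ) : Prop :=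
  IsLFepsSol ε a (Set.Icc 0 S₀) ∧
  ∀ s ∈ Set.Icc (0:ℝ) S₀,
    (∀ i j : Fin n, i ≠ j →
      K₀⁻¹ / Real.sqrt |Real.log ε| ≤ dE (a s i) (a s j) ∧
      dE (a s i) (a s j) ≤ K₀ / Real.sqrt |Real.log ε|) ∧
    ∀ i, r₀ / 2 ≤ (a s i).1 ∧ (a s i).1 ≤ 2 * r₀

/-- `r_a^s`. -/
def rasF (ε r₀ : ℝ) {n : ℕ} (u : ℝ → ℝ × ℝ → ℂ) (a : ℝ → Fin n → ℝ × ℝ) (s : ℝ) : ℝ :=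
  rA r₀ (u (s / |Real.log ε|)) (a s)

/-- `ρ_min = K₀⁻¹/√|log ε|`. -/
def rhoMinF (ε K₀ : ℝ) : ℝ := K₀⁻¹ / Real.sqrt |Real.log ε|

/-- The stopping time `S_stop`. -/
def SstopF (ε K₀ r₀ S₀ : ℝ) {n : ℕ} (u : ℝ → ℝ × ℝ → ℂ) (a : ℝ → Fin n → ℝ × ℝ) : ℝ :=
  sSup {S | S ∈ Set.Icc (0:ℝ) S₀ ∧ ∀ s ∈ Set.Icc (0:ℝ) S, rasF ε r₀ u a s ≤ rhoMinF ε K₀ / 8}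

/-- `r_ξ^s`. -/
def rxiF (ε C₁ r₀ : ℝ) {n : ℕ} (u : ℝ → ℝ × ℝ → ℂ) (a : ℝ → Fin n → ℝ × ℝ) (s : ℝ) : ℝ :=
  C₁ * ε * |Real.log ε| ^ C₁ *
    Real.exp (C₁ * (SigA ε (u 0) (a 0) + rasF ε r₀ u a s * |Real.log ε|))

/-- The radial Ginzburg–Landau vortex profile. -/
def IsProfile (f : ℝ → ℝ) : Prop :=
  f 0 = 0 ∧ Filter.Tendsto f Filter.atTop (𝓝 1) ∧ (∀ ρ : ℝ, f ρ ∈ Set.Icc (0:ℝ) 1) ∧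
  ∃ f' f'' : ℝ → ℝ, ∀ ρ : ℝ, 0 < ρ →
    HasDerivAt f (f' ρ) ρ ∧ HasDerivAt f' (f'' ρ) ρ ∧
    f'' ρ + f' ρ / ρ - f ρ / ρ ^ 2 + f ρ * (1 - f ρ ^ 2) = 0

/-- The singular unimodular vortex-ring map associated to a point `a ∈ H`. -/
def IsSingularRing (a : ℝ × ℝ) (u : ℝ × ℝ → ℂ) : Prop :=
  ContDiffOn ℝ (⊤ : ℕ∞) u (Hp \ {a}) ∧ (∀ p ∈ Hp, ‖u p‖ = 1) ∧
  ∀ p ∈ Hp \ {a},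
    p.1 * jr u p = pdZr (fun q => q.1 * Avec a q) p ∧
    p.1 * jz u p = -pdRr (fun q => q.1 * Avec a q) p

/-- Standard basis of `ℝ × ℝ`. -/
def e2 (k : Fin 2) : ℝ × ℝ := if k = 0 then (1, 0) else (0, 1)
/-- Antisymmetric symbol. -/
def epsSym (i j : Fin 2) : ℝ := if i = 0 ∧ j = 1 then 1 else if i = 1 ∧ j = 0 then -1 else 0
/-- `(y, w) = Re (y conj w)`. -/
def rinnerC (y w : ℂ) : ℝ := (y * (starRingEnd ℂ) w).re
/-- `∂_k u`. -/
def pdC (k : Fin 2) (u : ℝ × ℝ → ℂ) (p : ℝ × ℝ) : ℂ := fderiv ℝ u p (e2 k)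
/-- `∂_{ik} φ`. -/
def pdr2 (i k : Fin 2) (φ : ℝ × ℝ → ℝ) (p : ℝ × ℝ) : ℝ :=
  fderiv ℝ (fun q => fderiv ℝ φ q (e2 k)) p (e2 i)

/-- The functional `F(∇v, φ)` of equation (2.8). -/
def FGPc (v : ℝ × ℝ → ℂ) (φ : ℝ × ℝ → ℝ) : ℝ :=
  -(∫ p in Hp, ∑ i : Fin 2, ∑ j : Fin 2, ∑ k : Fin 2,
      epsSym i j * ((if k = (0 : Fin 2) then 1 / p.1 else 0) * rinnerC (pdC j v p) (pdC k v p))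
        * fderiv ℝ φ p (e2 i))
  + ∫ p in Hp, ∑ i : Fin 2, ∑ j : Fin 2, ∑ k : Fin 2,
      epsSym i j * rinnerC (pdC j v p) (pdC k v p) * pdr2 i k φ p

/-!
Away from its core, the stream function of a ring at `a` is `r A_a = √(r r(a)) K(h)`, with `h` the
reduced squared distance to `a`, and the field `j = r⁻¹ ∇(r A_a)` is divergence free. Hence the
total stream function `Ψ` and total field `J = r⁻¹ ∇Ψ` satisfy `r |J|² = div (Ψ J)` off the cores,
and `Ψ J` decays at the axis and at infinity. Multiplying by a cutoff that vanishes on the cores and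
integrating by parts turns the energy into a sum of fluxes of `Ψ J` through thin annuli around the
cores. On such an annulus the logarithmic expansion of `K` and the smoothness of the other rings
make `Ψ` almost constant, while the flux of `J` is exactly `-2π`. The sharp cutoff at radius `ρ`
lies between two radial cutoffs supported at distance `O(ρ² / ρ_a)` from it.
-/

/-! ### The ring integrals and their kernel -/

/-- The reciprocal distance factor `(h + sin² u)^{-1/2}` of the ring potential, where `2u` is the
angle along the ring and `h` is the reduced squared distance of `sqDistRatio`. -/
def invDist (h u : ℝ) : ℝ := (√(h + Real.sin u ^ 2))⁻¹

/-- The parametric integral `∫₀^{π/2} g(u) (h + sin² u)^{-k/2} du`. The family is closed under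
differentiation in `h`, which raises `k` by `2`. -/
def ringIntegral (g : ℝ → ℝ) (k : ℕ) (h : ℝ) : ℝ :=
  ∫ u in (0 : ℝ)..(π / 2), g u * invDist h u ^ k

/-- The profile `K` of the ring potential: `r A_a(p) = √(r r(a)) K(h)`. -/
def ringKernel (h : ℝ) : ℝ := ringIntegral (fun u => Real.cos (2 * u)) 1 h

section RingIntegral

variable {h : ℝ} (hh : 0 < h)
include hh

lemma invDist_pos (u : ℝ) : 0 < invDist h u := by
  unfold invDist; positivity

lemma invDist_sq_mul (u : ℝ) : invDist h u ^ 2 * (h + Real.sin u ^ 2) = 1 := by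
  have : 0 < h + Real.sin u ^ 2 := by positivity
  rw [invDist, inv_pow, Real.sq_sqrt this.le, inv_mul_cancel₀ this.ne']

lemma invDist_le (u : ℝ) : invDist h u ≤ (√h)⁻¹ := by
  unfold invDist
  gcongr
  exact le_add_of_nonneg_right (sq_nonneg _)

lemma sin_sq_mul_invDist_sq_le_one (u : ℝ) : Real.sin u ^ 2 * invDist h u ^ 2 ≤ 1 := by
  have := invDist_sq_mul hh u
  have : 0 ≤ invDist h u ^ 2 * h := by positivity
  linarith

@[fun_prop]
lemma continuous_invDist : Continuous (invDist h) := by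
  have (u : ℝ) : √(h + Real.sin u ^ 2) ≠ 0 := by positivity
  unfold invDist
  fun_prop (disch := assumption)

lemma continuous_mul_invDist_pow {g : ℝ → ℝ} (hg : Continuous g) (k : ℕ) :
    Continuous fun u => g u * invDist h u ^ k :=
  hg.mul ((continuous_invDist hh).pow k)

lemma hasDerivAt_invDist_left (u : ℝ) :
    HasDerivAt (fun x => invDist x u) (-(1 / 2) * invDist h u ^ 3) h := by
  have hD : 0 < h + Real.sin u ^ 2 := by positivity
  refine (((hasDerivAt_id h).add_const _).sqrt hD.ne').inv (by positivity) |>.congr_deriv ?_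
  simp only [invDist, id_eq]
  field_simp

lemma hasDerivAt_invDist (u : ℝ) :
    HasDerivAt (invDist h) (-(Real.sin u * Real.cos u) * invDist h u ^ 3) u := by
  have hD : 0 < h + Real.sin u ^ 2 := by positivity
  refine ((((Real.hasDerivAt_sin u).pow 2).const_add h).sqrt hD.ne').inv (by positivity)
    |>.congr_deriv ?_
  simp only [invDist, Pi.pow_apply]
  field_simp
  norm_num
  ring

lemma hasDerivAt_invDist_pow_left (k : ℕ) (u : ℝ) :
    HasDerivAt (fun x => invDist x u ^ k) (-(k / 2) * invDist h u ^ (k + 2)) h := by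
  refine ((hasDerivAt_invDist_left hh u).pow k).congr_deriv ?_
  cases k with
  | zero => simp
  | succ k => simp only [Nat.add_sub_cancel]; push_cast; ring

lemma hasDerivAt_invDist_pow (k : ℕ) (u : ℝ) :
    HasDerivAt (fun v => invDist h v ^ k)
      (-k * (Real.sin u * Real.cos u) * invDist h u ^ (k + 2)) u := by
  refine ((hasDerivAt_invDist hh u).pow k).congr_deriv ?_
  cases k with
  | zero => simp
  | succ k => simp only [Nat.add_sub_cancel]; push_cast; ring

lemma hasDerivAt_ringIntegral {g : ℝ → ℝ} (hg : Continuous g) (k : ℕ) :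
    HasDerivAt (ringIntegral g k) (-(k / 2) * ringIntegral g (k + 2) h) h := by
  have hderiv := (intervalIntegral.hasDerivAt_integral_of_dominated_loc_of_deriv_le
    (μ := volume) (a := 0) (b := π / 2) (F := fun x u => g u * invDist x u ^ k)
    (F' := fun x u => g u * (-(k / 2) * invDist x u ^ (k + 2)))
    (bound := fun u => |g u| * (k / 2 * (√(h / 2))⁻¹ ^ (k + 2)))
    (Ioi_mem_nhds (half_lt_self hh)) ?_ ?_ ?_ ?_ ?_ ?_).2
  · refine hderiv.congr_deriv ?_
    rw [ringIntegral, ← intervalIntegral.integral_const_mul]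
    exact intervalIntegral.integral_congr fun u _ => mul_left_comm _ _ _
  · filter_upwards [Ioi_mem_nhds hh] with x hx
    exact (continuous_mul_invDist_pow hx hg k).aestronglyMeasurable
  · exact (continuous_mul_invDist_pow hh hg k).intervalIntegrable _ _
  · exact (hg.mul (((continuous_invDist hh).pow _).const_mul _)).aestronglyMeasurable
  · refine .of_forall fun u _ x (hx : h / 2 < x) => ?_
    have hx0 : 0 < x := (half_pos hh).trans hx
    have hle : invDist x u ≤ (√(h / 2))⁻¹ := (invDist_le hx0 u).trans (by gcongr)
    have hpos := invDist_pos hx0 u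
    rw [norm_mul, norm_mul, norm_neg, norm_pow,
      Real.norm_of_nonneg (by positivity : 0 ≤ (k : ℝ) / 2),
      Real.norm_of_nonneg hpos.le, Real.norm_eq_abs]
    gcongr
  · exact (hg.abs.mul continuous_const).intervalIntegrable _ _
  · exact .of_forall fun u _ x (hx : h / 2 < x) =>
      (hasDerivAt_invDist_pow_left ((half_pos hh).trans hx) k u).const_mul _

omit hh in
lemma contDiffOn_ringIntegral {g : ℝ → ℝ} (hg : Continuous g) (k n : ℕ) :
    ContDiffOn ℝ n (ringIntegral g k) (Set.Ioi 0) := by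
  induction n generalizing k with
  | zero =>
    exact contDiffOn_zero.2 fun x hx =>
      (hasDerivAt_ringIntegral hx hg k).continuousAt.continuousWithinAt
  | succ n ih =>
    push_cast
    refine (contDiffOn_succ_iff_deriv_of_isOpen isOpen_Ioi).2 ⟨fun x hx =>
      (hasDerivAt_ringIntegral hx hg k).differentiableAt.differentiableWithinAt, by simp, ?_⟩
    exact (contDiffOn_const.mul (ih (k + 2))).congr fun x hx =>
      (hasDerivAt_ringIntegral hx hg k).deriv

lemma ringIntegral_sub {g₁ g₂ : ℝ → ℝ} (hg₁ : Continuous g₁) (hg₂ : Continuous g₂) (k : ℕ) :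
    ringIntegral (fun u => g₁ u - g₂ u) k h = ringIntegral g₁ k h - ringIntegral g₂ k h := by
  simp only [ringIntegral, sub_mul]
  exact intervalIntegral.integral_sub ((continuous_mul_invDist_pow hh hg₁ k).intervalIntegrable _ _)
    ((continuous_mul_invDist_pow hh hg₂ k).intervalIntegrable _ _)

omit hh in
lemma abs_integral_le_two_mul {f : ℝ → ℝ} {B : ℝ} (hB : 0 ≤ B)
    (hf : ∀ u ∈ Set.Icc (0 : ℝ) (π / 2), |f u| ≤ B) :
    |∫ u in (0 : ℝ)..(π / 2), f u| ≤ 2 * B := by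
  have hpi : (0 : ℝ) ≤ π / 2 := by positivity
  have := intervalIntegral.norm_integral_le_of_norm_le_const (f := f) (C := B) fun u hu =>
    hf u (Set.uIcc_of_le hpi ▸ Set.uIoc_subset_uIcc hu)
  rw [sub_zero, abs_of_nonneg hpi] at this
  exact this.trans (by nlinarith [Real.pi_le_four])

lemma abs_ringIntegral_le {g : ℝ → ℝ} (hg : ∀ u, |g u| ≤ 1) (k : ℕ) :
    |ringIntegral g k h| ≤ 2 / √h ^ k := by
  rw [div_eq_mul_inv, ← inv_pow]
  refine abs_integral_le_two_mul (by positivity) fun u _ => ?_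
  have hpos := invDist_pos hh u
  have hle := invDist_le hh u
  rw [abs_mul, abs_of_pos (pow_pos hpos k)]
  calc |g u| * invDist h u ^ k ≤ 1 * (√h)⁻¹ ^ k := by gcongr; exact hg u
    _ = _ := one_mul _

lemma ringIntegral_mono {g₁ g₂ : ℝ → ℝ} (hg₁ : Continuous g₁) (hg₂ : Continuous g₂) {k₁ k₂ : ℕ}
    (hle : ∀ u ∈ Set.Icc (0 : ℝ) (π / 2), g₁ u * invDist h u ^ k₁ ≤ g₂ u * invDist h u ^ k₂) :
    ringIntegral g₁ k₁ h ≤ ringIntegral g₂ k₂ h :=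
  intervalIntegral.integral_mono_on (by positivity)
    ((continuous_mul_invDist_pow hh hg₁ k₁).intervalIntegrable _ _)
    ((continuous_mul_invDist_pow hh hg₂ k₂).intervalIntegrable _ _) hle

lemma ringIntegral_eq_sub_of_hasDerivAt {g F : ℝ → ℝ} (hg : Continuous g) {k : ℕ}
    (hF : ∀ u, HasDerivAt F (g u * invDist h u ^ k) u) :
    ringIntegral g k h = F (π / 2) - F 0 :=
  intervalIntegral.integral_eq_sub_of_hasDerivAt (fun u _ => hF u)
    ((continuous_mul_invDist_pow hh hg k).intervalIntegrable _ _)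

lemma ringIntegral_sin_sq_mul_cos_sq (k : ℕ) :
    (k + 1) * ringIntegral (fun u => Real.sin u ^ 2 * Real.cos u ^ 2) (k + 3) h =
      ringIntegral (fun u => Real.cos (2 * u)) (k + 1) h := by
  have hderiv (u : ℝ) : HasDerivAt (fun v => Real.sin v * Real.cos v * invDist h v ^ (k + 1))
      (Real.cos (2 * u) * invDist h u ^ (k + 1) -
        (k + 1) * (Real.sin u ^ 2 * Real.cos u ^ 2 * invDist h u ^ (k + 3))) u := by
    refine (((Real.hasDerivAt_sin u).mul (Real.hasDerivAt_cos u)).mul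
      (hasDerivAt_invDist_pow hh (k + 1) u)).congr_deriv ?_
    simp only [Pi.mul_apply, Real.cos_two_mul']
    push_cast
    ring
  have hcos := continuous_mul_invDist_pow hh (by fun_prop : Continuous fun u => Real.cos (2 * u))
    (k + 1)
  have hsin := (continuous_mul_invDist_pow hh
    (by fun_prop : Continuous fun u => Real.sin u ^ 2 * Real.cos u ^ 2) (k + 3)).const_mul
      ((k : ℝ) + 1)
  have hint := intervalIntegral.integral_eq_sub_of_hasDerivAt (a := 0) (b := π / 2)
    (fun u _ => hderiv u) ((hcos.sub hsin).intervalIntegrable _ _)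
  rw [intervalIntegral.integral_sub (hcos.intervalIntegrable _ _) (hsin.intervalIntegrable _ _),
    intervalIntegral.integral_const_mul] at hint
  simp only [Real.cos_pi_div_two, Real.sin_zero, mul_zero, zero_mul, sub_zero] at hint
  simp only [ringIntegral]
  linarith

lemma hasDerivAt_ringKernel : HasDerivAt ringKernel (deriv ringKernel h) h :=
  (hasDerivAt_ringIntegral hh (by fun_prop) 1).differentiableAt.hasDerivAt

omit hh in
lemma eqOn_deriv_ringKernel : Set.EqOn (deriv ringKernel)
    (fun h => -(1 / 2) * ringIntegral (fun u => Real.cos (2 * u)) 3 h) (Set.Ioi 0) := by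
  intro x hx
  have := (hasDerivAt_ringIntegral hx (g := fun u => Real.cos (2 * u)) (by fun_prop) 1).deriv
  norm_num at this ⊢
  exact this

lemma hasDerivAt_deriv_ringKernel :
    HasDerivAt (deriv ringKernel) (deriv (deriv ringKernel) h) h :=
  (((hasDerivAt_ringIntegral hh (by fun_prop) 3).const_mul _).congr_of_eventuallyEq
    (eqOn_deriv_ringKernel.eventuallyEq_of_mem (Ioi_mem_nhds hh))).differentiableAt.hasDerivAt

lemma deriv_deriv_ringKernel :
    deriv (deriv ringKernel) h = 3 / 4 * ringIntegral (fun u => Real.cos (2 * u)) 5 h := by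
  rw [(eqOn_deriv_ringKernel.eventuallyEq_of_mem (Ioi_mem_nhds hh)).deriv_eq,
    ((hasDerivAt_ringIntegral hh (by fun_prop) 3).const_mul _).deriv]
  push_cast
  ring

lemma contDiffAt_ringKernel : ContDiffAt ℝ 2 ringKernel h :=
  (contDiffOn_ringIntegral (by fun_prop) 1 2).contDiffAt (Ioi_mem_nhds hh)

lemma contDiffAt_deriv_ringKernel : ContDiffAt ℝ 1 (deriv ringKernel) h :=
  ((contDiffOn_const.mul (contDiffOn_ringIntegral (by fun_prop) 3 1)).congr
    eqOn_deriv_ringKernel).contDiffAt (Ioi_mem_nhds hh)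

lemma hasDerivAt_legendrePrimitive (u : ℝ) :
    HasDerivAt (fun v => Real.cos (2 * v) * (Real.sin v * Real.cos v) *
          (1 / 4 * invDist h v ^ 3) - Real.sin v * Real.cos v * invDist h v ^ 1)
        (h * (1 + h) * (3 / 4) * (Real.cos (2 * u) * invDist h u ^ 5) +
          (1 + 2 * h) * (-(1 / 2)) * (Real.cos (2 * u) * invDist h u ^ 3) -
          3 / 4 * (Real.cos (2 * u) * invDist h u ^ 1)) u := by
  simp only [Real.cos_two_mul']
  have hs := Real.hasDerivAt_sin u
  have hc := Real.hasDerivAt_cos u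
  refine ((((hc.pow 2).sub (hs.pow 2)).mul (hs.mul hc)).mul
    ((hasDerivAt_invDist_pow hh 3 u).const_mul (1 / 4))).sub
    ((hs.mul hc).mul (hasDerivAt_invDist_pow hh 1 u)) |>.congr_deriv ?_
  simp only [Pi.mul_apply, Pi.sub_apply, Pi.pow_apply]
  have hD := invDist_sq_mul hh u
  have hcs := Real.sin_sq_add_cos_sq u
  generalize invDist h u = y at hD ⊢
  generalize Real.sin u = s at hD hcs ⊢
  generalize Real.cos u = c at hcs ⊢
  norm_num
  linear_combination (c ^ 2 - s ^ 2) * ((y / 4 - 3 / 4 * y ^ 3 * (h + c ^ 2)) * hD +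
    (3 / 4 * h * y ^ 5 - y ^ 3 / 2) * hcs)

/-- The Legendre equation that makes the ring field divergence free. -/
lemma ringKernel_legendre :
    h * (1 + h) * deriv (deriv ringKernel) h + (1 + 2 * h) * deriv ringKernel h =
      3 / 4 * ringKernel h := by
  rw [deriv_deriv_ringKernel hh, eqOn_deriv_ringKernel hh, ringKernel]
  have hcont (k : ℕ) (c : ℝ) : Continuous fun u => c * (Real.cos (2 * u) * invDist h u ^ k) :=
    (continuous_mul_invDist_pow hh (by fun_prop) k).const_mul c
  have hadd : Continuous fun u => h * (1 + h) * (3 / 4) * (Real.cos (2 * u) * invDist h u ^ 5) +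
      (1 + 2 * h) * (-(1 / 2)) * (Real.cos (2 * u) * invDist h u ^ 3) :=
    (hcont 5 _).add (hcont 3 _)
  have hint := intervalIntegral.integral_eq_sub_of_hasDerivAt (a := 0) (b := π / 2)
    (fun u _ => hasDerivAt_legendrePrimitive hh u) ((hadd.sub (hcont 1 _)).intervalIntegrable _ _)
  rw [intervalIntegral.integral_sub (hadd.intervalIntegrable _ _)
      ((hcont 1 _).intervalIntegrable _ _),
    intervalIntegral.integral_add ((hcont 5 _).intervalIntegrable _ _)
      ((hcont 3 _).intervalIntegrable _ _)] at hint
  simp only [intervalIntegral.integral_const_mul, Real.cos_pi_div_two, Real.sin_zero, mul_zero,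
    zero_mul, sub_zero] at hint
  simp only [ringIntegral]
  linarith

end RingIntegral

/-! ### Bounds and asymptotics of the kernel -/

section RingKernelBounds

variable {h : ℝ} (hh : 0 < h)
include hh

lemma ringKernel_eq_ringIntegral :
    ringKernel h = ringIntegral (fun u => Real.sin u ^ 2 * Real.cos u ^ 2) 3 h := by
  simpa [ringKernel] using (ringIntegral_sin_sq_mul_cos_sq hh 0).symm

lemma deriv_ringKernel_eq_ringIntegral :
    deriv ringKernel h =
      -(3 / 2) * ringIntegral (fun u => Real.sin u ^ 2 * Real.cos u ^ 2) 5 h := by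
  have := ringIntegral_sin_sq_mul_cos_sq hh 2
  norm_num at this
  rw [eqOn_deriv_ringKernel hh]
  linarith

lemma ringIntegral_nonneg {g : ℝ → ℝ} (hg : ∀ u, 0 ≤ g u) (k : ℕ) : 0 ≤ ringIntegral g k h :=
  intervalIntegral.integral_nonneg (by positivity) fun u _ =>
    mul_nonneg (hg u) (pow_pos (invDist_pos hh u) k).le

lemma ringKernel_nonneg : 0 ≤ ringKernel h :=
  (ringIntegral_nonneg hh (fun u => by positivity) 3).trans_eq (ringKernel_eq_ringIntegral hh).symm

lemma deriv_ringKernel_nonpos : deriv ringKernel h ≤ 0 := by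
  rw [deriv_ringKernel_eq_ringIntegral hh]
  linarith [ringIntegral_nonneg hh (g := fun u => Real.sin u ^ 2 * Real.cos u ^ 2)
    (fun u => by positivity) 5]

lemma ringKernel_le_two_div_sqrt : ringKernel h ≤ 2 / √h := by
  simpa [ringKernel] using
    (le_abs_self _).trans (abs_ringIntegral_le hh (fun u => Real.abs_cos_le_one (2 * u)) 1)

omit hh in
lemma abs_sin_sq_mul_cos_sq_le_one (u : ℝ) : |Real.sin u ^ 2 * Real.cos u ^ 2| ≤ 1 := by
  rw [abs_of_nonneg (by positivity)]
  exact mul_le_one₀ (Real.sin_sq_le_one u) (sq_nonneg _) (Real.cos_sq_le_one u)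

lemma ringKernel_le_two_div_sqrt_pow_three : ringKernel h ≤ 2 / √h ^ 3 := by
  rw [ringKernel_eq_ringIntegral hh]
  exact (le_abs_self _).trans (abs_ringIntegral_le hh abs_sin_sq_mul_cos_sq_le_one 3)

lemma abs_deriv_ringKernel_le_three_div_sqrt_pow_five : |deriv ringKernel h| ≤ 3 / √h ^ 5 := by
  rw [deriv_ringKernel_eq_ringIntegral hh, abs_mul, abs_neg,
    abs_of_pos (by norm_num : (0 : ℝ) < 3 / 2)]
  calc _ ≤ 3 / 2 * (2 / √h ^ 5) := by
        gcongr; exact abs_ringIntegral_le hh abs_sin_sq_mul_cos_sq_le_one 5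
    _ = _ := by ring

lemma ringIntegral_cos_three : ringIntegral Real.cos 3 h = (√(h + 1))⁻¹ / h := by
  rw [ringIntegral_eq_sub_of_hasDerivAt hh Real.continuous_cos
    (F := fun u => Real.sin u * invDist h u ^ 1 / h) fun u => ?_]
  · simp [invDist]
  refine (((Real.hasDerivAt_sin u).mul (hasDerivAt_invDist_pow hh 1 u)).div_const h).congr_deriv ?_
  rw [div_eq_iff hh.ne']
  push_cast
  linear_combination -(Real.cos u * invDist h u) * invDist_sq_mul hh u

lemma abs_deriv_ringKernel_le : |deriv ringKernel h| ≤ 3 / 2 * ((√(h + 1))⁻¹ / h) := by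
  rw [abs_of_nonpos (deriv_ringKernel_nonpos hh), deriv_ringKernel_eq_ringIntegral hh,
    ← ringIntegral_cos_three hh, neg_mul, neg_neg]
  gcongr
  refine ringIntegral_mono hh (by fun_prop) Real.continuous_cos fun u hu => ?_
  have hcos : 0 ≤ Real.cos u := Real.cos_nonneg_of_mem_Icc ⟨by linarith [hu.1, Real.pi_pos], hu.2⟩
  have hpos := invDist_pos hh u
  calc Real.sin u ^ 2 * Real.cos u ^ 2 * invDist h u ^ 5
      = (Real.sin u ^ 2 * invDist h u ^ 2) * Real.cos u * (Real.cos u * invDist h u ^ 3) := by ring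
    _ ≤ 1 * 1 * (Real.cos u * invDist h u ^ 3) := by
      gcongr
      exacts [sin_sq_mul_invDist_sq_le_one hh u, Real.cos_le_one u]
    _ = _ := by ring

lemma ringIntegral_sin_sq_mul_cos_five :
    ringIntegral (fun u => Real.sin u ^ 2 * Real.cos u) 5 h = (√(h + 1))⁻¹ ^ 3 / (3 * h) := by
  rw [ringIntegral_eq_sub_of_hasDerivAt hh (by fun_prop)
    (F := fun u => Real.sin u ^ 3 * invDist h u ^ 3 / (3 * h)) fun u => ?_]
  · simp [invDist]
  refine ((((Real.hasDerivAt_sin u).pow 3).mul (hasDerivAt_invDist_pow hh 3 u)).div_const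
    (3 * h)).congr_deriv ?_
  rw [div_eq_iff (by positivity)]
  norm_num
  linear_combination -3 * (Real.sin u ^ 2 * Real.cos u * invDist h u ^ 3) * invDist_sq_mul hh u

lemma ringIntegral_sin_sq_mul_cos_three :
    ringIntegral (fun u => Real.sin u ^ 2 * Real.cos u) 3 h =
      Real.log (1 + √(h + 1)) - Real.log h / 2 - (√(h + 1))⁻¹ := by
  rw [ringIntegral_eq_sub_of_hasDerivAt hh (by fun_prop) (F := fun u =>
    Real.log (Real.sin u + (invDist h u)⁻¹) - Real.sin u * invDist h u) fun u => ?_]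
  · simp only [invDist, Real.sin_pi_div_two, Real.sin_zero, inv_inv, one_pow, one_mul, zero_mul,
      zero_add, sub_zero, ne_eq, OfNat.ofNat_ne_zero, not_false_eq_true, zero_pow, add_zero,
      Real.log_sqrt hh.le]
    ring
  have hy := invDist_pos hh u
  have hD := invDist_sq_mul hh u
  have hlt : invDist h u * |Real.sin u| < 1 := by
    refine lt_of_pow_lt_pow_left₀ 2 zero_le_one ?_
    rw [mul_pow, sq_abs]
    have : 0 < invDist h u ^ 2 * h := by positivity
    linarith
  have hpos : 0 < invDist h u * Real.sin u + 1 := by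
    have := mul_le_mul_of_nonneg_left (neg_abs_le (Real.sin u)) hy.le
    linarith
  have hne : Real.sin u + (invDist h u)⁻¹ ≠ 0 := by
    rw [← mul_ne_zero_iff_left hy.ne', mul_add, mul_inv_cancel₀ hy.ne']
    exact hpos.ne'
  have hne' : Real.sin u * invDist h u + 1 ≠ 0 := by rw [mul_comm]; exact hpos.ne'
  refine ((((Real.hasDerivAt_sin u).add ((hasDerivAt_invDist hh u).inv hy.ne')).log hne).sub
    ((Real.hasDerivAt_sin u).mul (hasDerivAt_invDist hh u))).congr_deriv ?_
  simp only [Pi.add_apply, Pi.inv_apply]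
  field_simp
  ring

lemma inv_sqrt_add_one_mem_Icc : (√(h + 1))⁻¹ ∈ Set.Icc (1 - h) 1 := by
  have hle : 1 ≤ √(h + 1) := Real.one_le_sqrt.2 (by linarith)
  have hle' : √(h + 1) ≤ h + 1 := Real.sqrt_le_self_iff.2 (.inr (by linarith))
  refine ⟨?_, inv_le_one_of_one_le₀ hle⟩
  calc 1 - h ≤ (h + 1)⁻¹ := by
        rw [← one_div, le_div_iff₀ (by positivity)]
        nlinarith
    _ ≤ (√(h + 1))⁻¹ := by gcongr

/-- On replacing one factor `cos` by `1`, the integral for `deriv ringKernel` becomes elementary;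
the error involves `1 - cos u ≤ sin² u`, which compensates two powers of the distance. -/
lemma abs_ringIntegral_cos_sub_cos_sq_le :
    |ringIntegral (fun u => Real.sin u ^ 2 * Real.cos u) 5 h -
      ringIntegral (fun u => Real.sin u ^ 2 * Real.cos u ^ 2) 5 h| ≤ 2 / √h := by
  rw [← ringIntegral_sub hh (by fun_prop) (by fun_prop), div_eq_mul_inv]
  refine abs_integral_le_two_mul (by positivity) fun u hu => ?_
  have hcos : 0 ≤ Real.cos u := Real.cos_nonneg_of_mem_Icc ⟨by linarith [hu.1, Real.pi_pos], hu.2⟩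
  have hcos' : 0 ≤ 1 - Real.cos u := sub_nonneg.2 (Real.cos_le_one u)
  have hsin : 1 - Real.cos u ≤ Real.sin u ^ 2 := by nlinarith [Real.sin_sq_add_cos_sq u]
  have hy := invDist_pos hh u
  have hsy := sin_sq_mul_invDist_sq_le_one hh u
  calc |(Real.sin u ^ 2 * Real.cos u - Real.sin u ^ 2 * Real.cos u ^ 2) * invDist h u ^ 5|
      = (Real.sin u ^ 2 * invDist h u ^ 2) * Real.cos u * ((1 - Real.cos u) * invDist h u ^ 2) *
          invDist h u := by rw [← abs_of_nonneg (a := _ * invDist h u) (by positivity)]; ring_nf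
    _ ≤ 1 * 1 * (Real.sin u ^ 2 * invDist h u ^ 2) * (√h)⁻¹ := by
      gcongr
      exacts [Real.cos_le_one u, invDist_le hh u]
    _ ≤ 1 * 1 * 1 * (√h)⁻¹ := by gcongr
    _ = _ := by ring

lemma abs_mul_deriv_ringKernel_add_half_le (h1 : h ≤ 1) :
    |h * deriv ringKernel h + 1 / 2| ≤ 5 * √h := by
  have hs : 0 < √h := Real.sqrt_pos.2 hh
  have hclose := abs_ringIntegral_cos_sub_cos_sq_le hh
  rw [ringIntegral_sin_sq_mul_cos_five hh] at hclose
  rw [deriv_ringKernel_eq_ringIntegral hh]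
  generalize ringIntegral (fun u => Real.sin u ^ 2 * Real.cos u ^ 2) 5 h = I at hclose ⊢
  obtain ⟨hy0, hy1⟩ := inv_sqrt_add_one_mem_Icc hh
  have hypos : 0 ≤ (√(h + 1))⁻¹ := by positivity
  generalize (√(h + 1))⁻¹ = y at hclose hy0 hy1 hypos
  have hy3 : |1 - y ^ 3| ≤ 3 * h := by
    rw [abs_of_nonneg (sub_nonneg.2 (pow_le_one₀ hypos hy1))]
    nlinarith [mul_nonneg (mul_nonneg hypos hypos) (sub_nonneg.2 hy1),
      mul_nonneg hypos (sub_nonneg.2 hy1)]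
  calc |h * (-(3 / 2) * I) + 1 / 2| = |3 / 2 * h * (y ^ 3 / (3 * h) - I) + (1 - y ^ 3) / 2| := by
        congr 1; field_simp; ring
    _ ≤ 3 / 2 * h * |y ^ 3 / (3 * h) - I| + |1 - y ^ 3| / 2 := by
      refine (abs_add_le _ _).trans_eq ?_
      rw [abs_mul, abs_of_pos (by positivity : 0 < 3 / 2 * h), abs_div, abs_two]
    _ ≤ 3 / 2 * h * (2 / √h) + 3 * h / 2 := by gcongr
    _ = 3 * √h + 3 / 2 * h := by
      have := Real.div_sqrt (x := h); linear_combination 3 * this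
    _ ≤ 5 * √h := by linarith [Real.le_sqrt_self_iff.2 h1]

omit hh in
lemma integral_sin_mul_cos_div_one_add_cos :
    ∫ u in (0 : ℝ)..(π / 2), Real.sin u * Real.cos u / (1 + Real.cos u) = 1 - Real.log 2 := by
  have hpos (u : ℝ) (hu : u ∈ Set.uIcc 0 (π / 2)) : 0 < 1 + Real.cos u := by
    rw [Set.uIcc_of_le (by positivity)] at hu
    linarith [Real.cos_nonneg_of_mem_Icc ⟨by linarith [hu.1, Real.pi_pos], hu.2⟩]
  rw [intervalIntegral.integral_eq_sub_of_hasDerivAt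
    (f := fun u => Real.log (1 + Real.cos u) - Real.cos u)]
  · norm_num [sub_eq_add_neg, add_comm]
  · intro u hu
    have := (hpos u hu).ne'
    refine (((Real.hasDerivAt_cos u).const_add 1).log this |>.sub
      (Real.hasDerivAt_cos u)).congr_deriv ?_
    field_simp
    ring
  · exact (ContinuousOn.div (by fun_prop) (by fun_prop)
      fun u hu => (hpos u hu).ne').intervalIntegrable

lemma abs_sin_mul_cos_div_sub_le {u : ℝ} (hu : u ∈ Set.Icc (0 : ℝ) (π / 2)) :
    |Real.sin u * Real.cos u / (1 + Real.cos u) -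
      (Real.sin u ^ 2 * Real.cos u - Real.sin u ^ 2 * Real.cos u ^ 2) * invDist h u ^ 3| ≤
      3 / 2 * √h := by
  have hs := Real.sin_nonneg_of_nonneg_of_le_pi hu.1 (by linarith [hu.2, Real.pi_pos])
  have hc := Real.cos_nonneg_of_mem_Icc ⟨by linarith [hu.1, Real.pi_pos], hu.2⟩
  have hsc := Real.sin_sq_add_cos_sq u
  have hy := invDist_pos hh u
  have hD := invDist_sq_mul hh u
  have hss := Real.sq_sqrt hh.le
  generalize invDist h u = y at hy hD ⊢
  generalize Real.sin u = s at *
  generalize Real.cos u = c at *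
  have hfactor : s * c / (1 + c) - (s ^ 2 * c - s ^ 2 * c ^ 2) * y ^ 3 =
      c / (1 + c) * (s * (1 - (s * y) ^ 3)) := by
    field_simp
    linear_combination s ^ 2 * c * y ^ 3 * hsc
  have hsy0 : 0 ≤ s * y := by positivity
  have hsy1 : s * y ≤ 1 := by
    refine (sq_le_one_iff₀ hsy0).1 ?_
    have : 0 ≤ y ^ 2 * h := by positivity
    linarith
  have hcube : 1 - (s * y) ^ 3 ≤ 3 * (h * y ^ 2) := by
    nlinarith [mul_nonneg (mul_nonneg hsy0 hsy0) (sub_nonneg.2 hsy1)]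
  have hamgm : s * (h * y ^ 2) ≤ √h / 2 := by
    calc s * (h * y ^ 2) = √h / 2 * (2 * (√h * s) * y ^ 2) := by
          linear_combination -(s * y ^ 2) * hss
      _ ≤ √h / 2 * ((h + s ^ 2) * y ^ 2) := by gcongr; nlinarith [sq_nonneg (√h - s)]
      _ = √h / 2 := by linear_combination √h / 2 * hD
  have hnonneg : 0 ≤ s * (1 - (s * y) ^ 3) :=
    mul_nonneg hs (sub_nonneg.2 (pow_le_one₀ hsy0 hsy1))
  rw [hfactor, abs_of_nonneg (by positivity)]
  calc c / (1 + c) * (s * (1 - (s * y) ^ 3)) ≤ 1 * (s * (3 * (h * y ^ 2))) := by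
        gcongr
        exact div_le_one_of_le₀ (by linarith) (by positivity)
    _ ≤ 3 / 2 * √h := by linarith

lemma abs_ringIntegral_cos_sub_ringKernel_sub_le :
    |1 - Real.log 2 - (ringIntegral (fun u => Real.sin u ^ 2 * Real.cos u) 3 h - ringKernel h)| ≤
      3 * √h := by
  have hcont : ContinuousOn (fun u => Real.sin u * Real.cos u / (1 + Real.cos u))
      (Set.uIcc 0 (π / 2)) := by
    refine ContinuousOn.div (by fun_prop) (by fun_prop) fun u hu => ?_
    rw [Set.uIcc_of_le (by positivity)] at hu
    have := Real.cos_nonneg_of_mem_Icc ⟨by linarith [hu.1, Real.pi_pos], hu.2⟩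
    positivity
  rw [ringKernel_eq_ringIntegral hh, ← ringIntegral_sub hh (by fun_prop) (by fun_prop),
    ← integral_sin_mul_cos_div_one_add_cos, ringIntegral,
    ← intervalIntegral.integral_sub hcont.intervalIntegrable
      ((continuous_mul_invDist_pow hh (by fun_prop) 3).intervalIntegrable _ _)]
  exact (abs_integral_le_two_mul (by positivity)
    fun u hu => abs_sin_mul_cos_div_sub_le hh hu).trans_eq (by ring)

lemma abs_ringKernel_sub_le (h1 : h ≤ 1) :
    |ringKernel h - (2 * Real.log 2 - Real.log h / 2 - 2)| ≤ 5 * √h := by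
  have hclose := abs_ringIntegral_cos_sub_ringKernel_sub_le hh
  rw [ringIntegral_sin_sq_mul_cos_three hh, abs_le] at hclose
  obtain ⟨hy0, hy1⟩ := inv_sqrt_add_one_mem_Icc hh
  have hsqrt : 1 ≤ √(h + 1) := Real.one_le_sqrt.2 (by linarith)
  have hsqrt' : √(h + 1) ≤ h + 1 := Real.sqrt_le_self_iff.2 (.inr (by linarith))
  have hlog : Real.log 2 ≤ Real.log (1 + √(h + 1)) := by gcongr; linarith
  have hlog' : Real.log (1 + √(h + 1)) - Real.log 2 ≤ h / 2 := by
    rw [← Real.log_div (by positivity) (by norm_num)]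
    exact (Real.log_le_sub_one_of_pos (by positivity)).trans (by linarith)
  have := Real.le_sqrt_self_iff.2 h1
  rw [abs_le]
  constructor <;> linarith

end RingKernelBounds

/-! ### Calculus in the plane -/

/-- Euclidean inner product on `ℝ × ℝ`. -/
def dotE (u v : ℝ × ℝ) : ℝ := u.1 * v.1 + u.2 * v.2

/-- Euclidean divergence of a planar vector field. -/
def divE (W : ℝ × ℝ → ℝ × ℝ) (p : ℝ × ℝ) : ℝ :=
  pdRr (fun q => (W q).1) p + pdZr (fun q => (W q).2) p

lemma nE_eq_norm (v : ℝ × ℝ) : nE v = ‖Complex.equivRealProdCLM.symm v‖ := by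
  simp [nE, Complex.norm_eq_sqrt_sq_add_sq]

lemma dE_eq_dist (p q : ℝ × ℝ) :
    dE p q = dist (Complex.equivRealProdCLM.symm p) (Complex.equivRealProdCLM.symm q) := by
  rw [dE, nE_eq_norm, map_sub, dist_eq_norm]

lemma nE_nonneg (v : ℝ × ℝ) : 0 ≤ nE v := Real.sqrt_nonneg _

lemma nE_sq (v : ℝ × ℝ) : nE v ^ 2 = sqE v := Real.sq_sqrt (by positivity)

lemma nE_add_le (u v : ℝ × ℝ) : nE (u + v) ≤ nE u + nE v := by
  simp only [nE_eq_norm, map_add, norm_add_le]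

lemma nE_smul (c : ℝ) (v : ℝ × ℝ) : nE (c • v) = |c| * nE v := by
  simp only [nE_eq_norm, map_smul, norm_smul, Real.norm_eq_abs]

lemma nE_sum_le {ι : Type*} (s : Finset ι) (v : ι → ℝ × ℝ) :
    nE (∑ i ∈ s, v i) ≤ ∑ i ∈ s, nE (v i) := by
  simp only [nE_eq_norm, map_sum]
  exact norm_sum_le _ _

lemma dE_comm (p q : ℝ × ℝ) : dE p q = dE q p := by simp only [dE_eq_dist, dist_comm]

lemma dE_self (p : ℝ × ℝ) : dE p p = 0 := by simp only [dE_eq_dist, dist_self]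

lemma dE_triangle (p q r : ℝ × ℝ) : dE p r ≤ dE p q + dE q r := by
  simp only [dE_eq_dist, dist_triangle]

lemma dE_pos {p q : ℝ × ℝ} : 0 < dE p q ↔ p ≠ q := by
  rw [dE_eq_dist, dist_pos, Complex.equivRealProdCLM.symm.injective.ne_iff]

lemma dE_nonneg (p q : ℝ × ℝ) : 0 ≤ dE p q := nE_nonneg _

lemma abs_fst_le_nE (v : ℝ × ℝ) : |v.1| ≤ nE v := Real.abs_le_sqrt (by nlinarith)

lemma continuous_nE : Continuous nE := by unfold nE; fun_prop

lemma continuous_dE (a : ℝ × ℝ) : Continuous fun p => dE p a :=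
  continuous_nE.comp (continuous_id.sub continuous_const)

lemma abs_dotE_le (u v : ℝ × ℝ) : |dotE u v| ≤ nE u * nE v := by
  rw [nE, nE, ← Real.sqrt_mul (by positivity)]
  refine Real.abs_le_sqrt ?_
  unfold dotE
  nlinarith [sq_nonneg (u.1 * v.2 - u.2 * v.1)]

lemma dotE_smul_left (c : ℝ) (u v : ℝ × ℝ) : dotE (c • u) v = c * dotE u v := by
  simp only [dotE, Prod.smul_fst, Prod.smul_snd, smul_eq_mul]; ring

lemma dotE_smul_right (c : ℝ) (u v : ℝ × ℝ) : dotE u (c • v) = c * dotE u v := by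
  simp only [dotE, Prod.smul_fst, Prod.smul_snd, smul_eq_mul]; ring

lemma dotE_sum_left {ι : Type*} (s : Finset ι) (u : ι → ℝ × ℝ) (v : ℝ × ℝ) :
    dotE (∑ i ∈ s, u i) v = ∑ i ∈ s, dotE (u i) v := by
  simp only [dotE, Prod.fst_sum, Prod.snd_sum, Finset.sum_mul, Finset.sum_add_distrib]

lemma isCompact_dE_le (a : ℝ × ℝ) (t : ℝ) : IsCompact {p | dE p a ≤ t} := by
  simp only [dE_eq_dist]
  exact Complex.equivRealProdCLM.symm.toHomeomorph.isCompact_preimage.2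
    (isCompact_closedBall (Complex.equivRealProdCLM.symm a) t)

lemma convex_dE_le (a : ℝ × ℝ) (t : ℝ) : Convex ℝ {p | dE p a ≤ t} := by
  simp only [dE_eq_dist]
  exact (convex_closedBall (Complex.equivRealProdCLM.symm a) t).linear_preimage
    Complex.equivRealProdCLM.symm.toLinearMap

lemma fderiv_eq_dotE_gradR (f : ℝ × ℝ → ℝ) (p v : ℝ × ℝ) :
    fderiv ℝ f p v = dotE (gradR f p) v := by
  have hv : v = v.1 • ((1 : ℝ), (0 : ℝ)) + v.2 • ((0 : ℝ), (1 : ℝ)) := by ext <;> simp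
  conv_lhs => rw [hv]
  simp only [map_add, map_smul, smul_eq_mul, dotE, gradR, pdRr, pdZr, mul_comm]

lemma hasDerivAt_slice_fst {f : ℝ × ℝ → ℝ} {p : ℝ × ℝ} (hf : DifferentiableAt ℝ f p) :
    HasDerivAt (fun r => f (r, p.2)) (pdRr f p) p.1 :=
  hf.hasFDerivAt.comp_hasDerivAt (f := fun r => (r, p.2)) p.1
    ((hasDerivAt_id _).prodMk (hasDerivAt_const _ _))

lemma hasDerivAt_slice_snd {f : ℝ × ℝ → ℝ} {p : ℝ × ℝ} (hf : DifferentiableAt ℝ f p) :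
    HasDerivAt (fun z => f (p.1, z)) (pdZr f p) p.2 :=
  hf.hasFDerivAt.comp_hasDerivAt (f := fun z => (p.1, z)) p.2
    ((hasDerivAt_const _ _).prodMk (hasDerivAt_id _))

lemma gradR_congr {f g : ℝ × ℝ → ℝ} {p : ℝ × ℝ} (h : f =ᶠ[𝓝 p] g) : gradR f p = gradR g p := by
  simp only [gradR, pdRr, pdZr, h.fderiv_eq]

lemma gradR_sum {ι : Type*} {s : Finset ι} {f : ι → ℝ × ℝ → ℝ} {p : ℝ × ℝ}
    (hf : ∀ i ∈ s, DifferentiableAt ℝ (f i) p) :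
    gradR (fun q => ∑ i ∈ s, f i q) p = ∑ i ∈ s, gradR (f i) p := by
  ext <;> simp only [gradR, pdRr, pdZr, fderiv_fun_sum hf, sum_apply,
    Prod.fst_sum, Prod.snd_sum]

lemma divE_sum {ι : Type*} {s : Finset ι} {W : ι → ℝ × ℝ → ℝ × ℝ} {p : ℝ × ℝ}
    (hW : ∀ i ∈ s, DifferentiableAt ℝ (W i) p) :
    divE (fun q => ∑ i ∈ s, W i q) p = ∑ i ∈ s, divE (W i) p := by
  simp only [divE, pdRr, pdZr, Prod.fst_sum, Prod.snd_sum, fderiv_fun_sum fun i hi => (hW i hi).fst,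
    fderiv_fun_sum fun i hi => (hW i hi).snd, sum_apply,
    Finset.sum_add_distrib]

lemma divE_smul {X : ℝ × ℝ → ℝ} {W : ℝ × ℝ → ℝ × ℝ} {p : ℝ × ℝ} (hX : DifferentiableAt ℝ X p)
    (hW : DifferentiableAt ℝ W p) :
    divE (fun q => X q • W q) p = X p * divE W p + dotE (gradR X p) (W p) := by
  simp only [divE, pdRr, pdZr, gradR, dotE, Prod.smul_fst, Prod.smul_snd, smul_eq_mul,
    fderiv_fun_mul hX hW.fst, fderiv_fun_mul hX hW.snd, add_apply,
    smul_apply]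
  ring

lemma divE_congr {V W : ℝ × ℝ → ℝ × ℝ} {p : ℝ × ℝ} (h : V =ᶠ[𝓝 p] W) : divE V p = divE W p := by
  have hfst : (fun q => (V q).1) =ᶠ[𝓝 p] fun q => (W q).1 := h.fun_comp Prod.fst
  have hsnd : (fun q => (V q).2) =ᶠ[𝓝 p] fun q => (W q).2 := h.fun_comp Prod.snd
  simp only [divE, pdRr, pdZr, hfst.fderiv_eq, hsnd.fderiv_eq]

lemma continuousAt_fderiv_apply {f : ℝ × ℝ → ℝ} {p : ℝ × ℝ} (hf : ContDiffAt ℝ 1 f p)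
    (v : ℝ × ℝ) : ContinuousAt (fun q => fderiv ℝ f q v) p :=
  (hf.fderiv_right (m := 0) le_rfl).continuousAt.clm_apply continuousAt_const

lemma abs_sub_le_of_nE_gradR_le {f : ℝ × ℝ → ℝ} {s : Set (ℝ × ℝ)} {p q : ℝ × ℝ} {C : ℝ}
    (hs : Convex ℝ s) (hp : p ∈ s) (hq : q ∈ s) (hf : ∀ x ∈ s, DifferentiableAt ℝ f x)
    (hC : ∀ x ∈ s, nE (gradR f x) ≤ C) : |f p - f q| ≤ C * dE p q := by
  have hmem (t : ℝ) (ht : t ∈ Set.Icc (0 : ℝ) 1) : q + t • (p - q) ∈ s :=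
    hs.add_smul_sub_mem hq hp ht
  have hderiv (t : ℝ) (ht : t ∈ Set.Icc (0 : ℝ) 1) : HasDerivWithinAt
      (fun u : ℝ => f (q + u • (p - q))) (dotE (gradR f (q + t • (p - q))) (p - q))
      (Set.Icc 0 1) t := by
    rw [← fderiv_eq_dotE_gradR]
    refine ((hf _ (hmem t ht)).hasFDerivAt.comp_hasDerivAt (f := fun u => q + u • (p - q)) t
      ?_).hasDerivWithinAt
    simpa using ((hasDerivAt_id t).smul_const (p - q)).const_add q
  have hmvt := norm_image_sub_le_of_norm_deriv_le_segment_01' hderiv (C := C * dE p q)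
    fun t ht => (abs_dotE_le _ _).trans <|
      mul_le_mul_of_nonneg_right (hC _ (hmem t (Set.Ico_subset_Icc_self ht))) (nE_nonneg _)
  simpa using hmvt

lemma integrable_of_continuousOn_of_eq_zero {f : ℝ × ℝ → ℝ} {K : Set (ℝ × ℝ)} (hK : IsCompact K)
    (hf : ContinuousOn f K) (hzero : ∀ p ∉ K, f p = 0) : Integrable f :=
  (integrableOn_iff_integrable_of_support_subset fun p hp =>
    by_contra fun hpK => hp (hzero p hpK)).1 (hf.integrableOn_compact hK)

lemma integrable_and_integral_mul_fderiv {X V : ℝ × ℝ → ℝ} (hX : ContDiff ℝ 1 X)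
    (hXc : HasCompactSupport X) (hV : ∀ p ∈ tsupport X, ContDiffAt ℝ 1 V p) (v : ℝ × ℝ) :
    Integrable (fun p => X p * fderiv ℝ V p v) ∧ Integrable (fun p => fderiv ℝ X p v * V p) ∧
      ∫ p, X p * fderiv ℝ V p v = -∫ p, fderiv ℝ X p v * V p := by
  have hV0 : ContinuousOn V (tsupport X) := fun p hp => (hV p hp).continuousAt.continuousWithinAt
  have hV1 : ContinuousOn (fun p => fderiv ℝ V p v) (tsupport X) := fun p hp =>
    (continuousAt_fderiv_apply (hV p hp) v).continuousWithinAt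
  have hX0 (p) (hp : p ∉ tsupport X) : X p = 0 := image_eq_zero_of_notMem_tsupport hp
  have hX1 (p) (hp : p ∉ tsupport X) : fderiv ℝ X p v = 0 := by
    rw [fderiv_of_notMem_tsupport ℝ hp, zero_apply]
  have hXcont := hX.continuous.continuousOn (s := tsupport X)
  have hint : Integrable fun p => X p * fderiv ℝ V p v :=
    integrable_of_continuousOn_of_eq_zero hXc (hXcont.mul hV1) fun p hp => by simp [hX0 p hp]
  have hint' : Integrable fun p => fderiv ℝ X p v * V p :=
    integrable_of_continuousOn_of_eq_zero hXc
      (((hX.continuous_fderiv one_ne_zero).clm_apply continuous_const).continuousOn.mul hV0)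
      fun p hp => by simp [hX1 p hp]
  exact ⟨hint, hint', integral_mul_fderiv_eq_neg_fderiv_mul_of_integrable hint' hint
    (integrable_of_continuousOn_of_eq_zero hXc (hXcont.mul hV0) fun p hp => by simp [hX0 p hp])
    (fun p _ => hX.differentiable one_ne_zero p)
    fun p hp => (hV p hp).differentiableAt one_ne_zero⟩

lemma integral_mul_divE {X : ℝ × ℝ → ℝ} {W : ℝ × ℝ → ℝ × ℝ} (hX : ContDiff ℝ 1 X)
    (hXc : HasCompactSupport X) (hW : ∀ p ∈ tsupport X, ContDiffAt ℝ 1 W p) :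
    ∫ p, X p * divE W p = -∫ p, dotE (gradR X p) (W p) := by
  obtain ⟨hr, hr', hibp_r⟩ :=
    integrable_and_integral_mul_fderiv hX hXc (fun p hp => (hW p hp).fst) (1, 0)
  obtain ⟨hz, hz', hibp_z⟩ :=
    integrable_and_integral_mul_fderiv hX hXc (fun p hp => (hW p hp).snd) (0, 1)
  simp only [divE, pdRr, pdZr, gradR, dotE, mul_add]
  rw [integral_add hr hz, integral_add hr' hz', hibp_r, hibp_z, neg_add]

/-! ### Radial cutoffs -/

/-- Smooth radial cutoff about `a`, equal to `0` on the disc of radius `s` and to `1` off the disc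
of radius `t`. -/
def radialCutoff (a : ℝ × ℝ) (s t : ℝ) (p : ℝ × ℝ) : ℝ :=
  Real.smoothTransition ((sqE (p - a) - s ^ 2) / (t ^ 2 - s ^ 2))

/-- The factor by which the gradient of `radialCutoff a s t` at `p` is a multiple of `p - a`. -/
def radialWeight (a : ℝ × ℝ) (s t : ℝ) (p : ℝ × ℝ) : ℝ :=
  deriv Real.smoothTransition ((sqE (p - a) - s ^ 2) / (t ^ 2 - s ^ 2)) * (2 / (t ^ 2 - s ^ 2))

/-- The closed annulus of radii `s` and `t` about `a`. -/
def closedAnnulus (a : ℝ × ℝ) (s t : ℝ) : Set (ℝ × ℝ) := {p | s ≤ dE p a ∧ dE p a ≤ t}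

lemma hasDerivAt_smoothTransition (x : ℝ) :
    HasDerivAt Real.smoothTransition (deriv Real.smoothTransition x) x :=
  (Real.smoothTransition.contDiff (n := 1) |>.differentiable one_ne_zero x).hasDerivAt

lemma continuous_deriv_smoothTransition : Continuous (deriv Real.smoothTransition) :=
  (Real.smoothTransition.contDiff (n := 1)).continuous_deriv le_rfl

lemma deriv_smoothTransition_eq_zero {x : ℝ} (hx : x ≤ 0 ∨ 1 ≤ x) :
    deriv Real.smoothTransition x = 0 := by
  rcases hx with hx | hx
  · exact IsLocalMin.deriv_eq_zero <| .of_forall fun y => by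
      simpa only [Real.smoothTransition.zero_of_nonpos hx] using Real.smoothTransition.nonneg y
  · exact IsLocalMax.deriv_eq_zero <| .of_forall fun y => by
      simpa only [Real.smoothTransition.one_of_one_le hx] using Real.smoothTransition.le_one y

lemma exists_deriv_smoothTransition_le : ∃ B, ∀ x, |deriv Real.smoothTransition x| ≤ B := by
  obtain ⟨B, hB⟩ := (isCompact_Icc (a := (0 : ℝ)) (b := 1)).exists_bound_of_continuousOn
    continuous_deriv_smoothTransition.continuousOn
  refine ⟨B, fun x => ?_⟩
  by_cases hx : x ∈ Set.Icc (0 : ℝ) 1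
  · exact hB x hx
  · rw [deriv_smoothTransition_eq_zero, abs_zero]
    · exact (norm_nonneg _).trans (hB 0 (by simp))
    · rw [Set.mem_Icc, not_and_or, not_le, not_le] at hx
      exact hx.imp le_of_lt le_of_lt

lemma contDiff_radialCutoff (a : ℝ × ℝ) (s t : ℝ) : ContDiff ℝ 1 (radialCutoff a s t) := by
  refine (Real.smoothTransition.contDiff (n := 1)).comp ?_
  unfold sqE
  fun_prop

lemma gradR_radialCutoff (a : ℝ × ℝ) (s t : ℝ) (p : ℝ × ℝ) :
    gradR (radialCutoff a s t) p = radialWeight a s t p • (p - a) := by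
  have hdiff := (contDiff_radialCutoff a s t).differentiable one_ne_zero p
  have hr : HasDerivAt (fun r => (sqE ((r, p.2) - a) - s ^ 2) / (t ^ 2 - s ^ 2))
      (2 * (p.1 - a.1) / (t ^ 2 - s ^ 2)) p.1 := by
    have := (((hasDerivAt_id p.1).sub_const a.1).pow 2).add_const ((p.2 - a.2) ^ 2)
    simpa [sqE] using (this.sub_const (s ^ 2)).div_const (t ^ 2 - s ^ 2)
  have hz : HasDerivAt (fun z => (sqE ((p.1, z) - a) - s ^ 2) / (t ^ 2 - s ^ 2))
      (2 * (p.2 - a.2) / (t ^ 2 - s ^ 2)) p.2 := by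
    have := (((hasDerivAt_id p.2).sub_const a.2).pow 2).const_add ((p.1 - a.1) ^ 2)
    simpa [sqE] using (this.sub_const (s ^ 2)).div_const (t ^ 2 - s ^ 2)
  ext
  · rw [gradR, (hasDerivAt_slice_fst hdiff).unique ((hasDerivAt_smoothTransition _).comp p.1 hr)]
    simp only [radialWeight, Prod.smul_fst, Prod.fst_sub, smul_eq_mul]
    ring
  · rw [gradR, (hasDerivAt_slice_snd hdiff).unique ((hasDerivAt_smoothTransition _).comp p.2 hz)]
    simp only [radialWeight, Prod.smul_snd, Prod.snd_sub, smul_eq_mul]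
    ring

lemma radialCutoff_nonneg (a : ℝ × ℝ) (s t : ℝ) (p : ℝ × ℝ) : 0 ≤ radialCutoff a s t p :=
  Real.smoothTransition.nonneg _

lemma radialCutoff_le_one (a : ℝ × ℝ) (s t : ℝ) (p : ℝ × ℝ) : radialCutoff a s t p ≤ 1 :=
  Real.smoothTransition.le_one _

lemma continuous_radialWeight (a : ℝ × ℝ) (s t : ℝ) : Continuous (radialWeight a s t) := by
  refine (continuous_deriv_smoothTransition.comp ?_).mul continuous_const
  unfold sqE
  fun_prop

lemma isCompact_closedAnnulus (a : ℝ × ℝ) (s t : ℝ) : IsCompact (closedAnnulus a s t) :=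
  (isCompact_dE_le a t).inter_left (isClosed_le continuous_const (continuous_dE a))

section RadialCutoff

variable {a p : ℝ × ℝ} {s t : ℝ} (hs : 0 ≤ s) (hst : s < t)
include hs hst

lemma radialCutoff_param_nonpos (hp : dE p a ≤ s) :
    (sqE (p - a) - s ^ 2) / (t ^ 2 - s ^ 2) ≤ 0 := by
  rw [← nE_sq]
  exact div_nonpos_of_nonpos_of_nonneg (sub_nonpos.2 (pow_le_pow_left₀ (nE_nonneg _) hp 2))
    (sub_nonneg.2 (pow_le_pow_left₀ hs hst.le 2))

lemma one_le_radialCutoff_param (hp : t ≤ dE p a) :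
    1 ≤ (sqE (p - a) - s ^ 2) / (t ^ 2 - s ^ 2) := by
  rw [← nE_sq, one_le_div (sub_pos.2 (pow_lt_pow_left₀ hst hs two_ne_zero))]
  exact sub_le_sub_right (pow_le_pow_left₀ (hs.trans hst.le) hp 2) _

lemma radialCutoff_eq_zero (hp : dE p a ≤ s) : radialCutoff a s t p = 0 :=
  Real.smoothTransition.zero_of_nonpos (radialCutoff_param_nonpos hs hst hp)

lemma radialCutoff_eq_one (hp : t ≤ dE p a) : radialCutoff a s t p = 1 :=
  Real.smoothTransition.one_of_one_le (one_le_radialCutoff_param hs hst hp)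

lemma radialWeight_nonneg (p : ℝ × ℝ) : 0 ≤ radialWeight a s t p :=
  mul_nonneg Real.smoothTransition.monotone.deriv_nonneg
    (div_nonneg zero_le_two (sub_nonneg.2 (pow_le_pow_left₀ hs hst.le 2)))

lemma radialWeight_eq_zero (hp : p ∉ closedAnnulus a s t) : radialWeight a s t p = 0 := by
  rw [radialWeight, deriv_smoothTransition_eq_zero, zero_mul]
  rcases not_and_or.1 hp with hp | hp
  · exact .inl (radialCutoff_param_nonpos hs hst (not_le.1 hp).le)
  · exact .inr (one_le_radialCutoff_param hs hst (not_le.1 hp).le)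

lemma integrable_radialWeight_mul {f : ℝ × ℝ → ℝ} (hf : ContinuousOn f (closedAnnulus a s t)) :
    Integrable fun p => radialWeight a s t p * f p :=
  integrable_of_continuousOn_of_eq_zero (isCompact_closedAnnulus a s t)
    ((continuous_radialWeight a s t).continuousOn.mul hf)
    fun p hp => by rw [radialWeight_eq_zero hs hst hp, zero_mul]

lemma integral_Ioi_mul_deriv_smoothTransition :
    ∫ x in Set.Ioi (0 : ℝ), x * (deriv Real.smoothTransition ((x ^ 2 - s ^ 2) / (t ^ 2 - s ^ 2)) *
      (2 / (t ^ 2 - s ^ 2))) = 1 := by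
  have hts : 0 < t ^ 2 - s ^ 2 := sub_pos.2 (pow_lt_pow_left₀ hst hs two_ne_zero)
  have hderiv (x : ℝ) : HasDerivAt
      (fun x => Real.smoothTransition ((x ^ 2 - s ^ 2) / (t ^ 2 - s ^ 2)))
      (x * (deriv Real.smoothTransition ((x ^ 2 - s ^ 2) / (t ^ 2 - s ^ 2)) *
        (2 / (t ^ 2 - s ^ 2)))) x := by
    refine ((hasDerivAt_smoothTransition _).comp x
      (((hasDerivAt_pow 2 x).sub_const (s ^ 2)).div_const (t ^ 2 - s ^ 2))).congr_deriv ?_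
    ring
  have hlim : Tendsto (fun x => Real.smoothTransition ((x ^ 2 - s ^ 2) / (t ^ 2 - s ^ 2)))
      atTop (𝓝 1) := by
    refine tendsto_const_nhds.congr' ?_
    filter_upwards [eventually_ge_atTop t] with x hx
    rw [Real.smoothTransition.one_of_one_le]
    rw [one_le_div hts]
    nlinarith
  rw [integral_Ioi_of_hasDerivAt_of_nonneg' (fun x _ => hderiv x) (fun x hx => ?_) hlim,
    Real.smoothTransition.zero_of_nonpos, sub_zero]
  · exact div_nonpos_of_nonpos_of_nonneg (by nlinarith) hts.le
  · have := Real.smoothTransition.monotone.deriv_nonneg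
      (x := (x ^ 2 - s ^ 2) / (t ^ 2 - s ^ 2))
    have hx : 0 < x := hx
    positivity

lemma integral_radialWeight : ∫ p, radialWeight a s t p = 2 * π := by
  have hcenter : ∫ p, radialWeight a s t p = ∫ p, radialWeight 0 s t p := by
    rw [← integral_sub_right_eq_self (radialWeight 0 s t) a]
    simp only [radialWeight, sub_zero]
  have hpolar (q : ℝ × ℝ) : q.1 • radialWeight 0 s t (polarCoord.symm q) =
      (q.1 * (deriv Real.smoothTransition ((q.1 ^ 2 - s ^ 2) / (t ^ 2 - s ^ 2)) *
        (2 / (t ^ 2 - s ^ 2)))) * (fun _ : ℝ => (1 : ℝ)) q.2 := by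
    have : sqE (polarCoord.symm q - 0) = q.1 ^ 2 := by
      simp only [sub_zero, sqE, polarCoord_symm_apply]
      linear_combination q.1 ^ 2 * Real.sin_sq_add_cos_sq q.2
    simp only [radialWeight, this, smul_eq_mul, mul_one]
  rw [hcenter, ← integral_comp_polarCoord_symm]
  simp_rw [hpolar]
  rw [polarCoord_target, Measure.volume_eq_prod, setIntegral_prod_mul
    (f := fun x : ℝ => x * (deriv Real.smoothTransition ((x ^ 2 - s ^ 2) / (t ^ 2 - s ^ 2)) *
      (2 / (t ^ 2 - s ^ 2)))) (g := fun _ : ℝ => (1 : ℝ)),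
    integral_Ioi_mul_deriv_smoothTransition hs hst, setIntegral_const, Real.volume_real_Ioo_of_le
      (by linarith [Real.pi_pos])]
  simp only [smul_eq_mul, mul_one, one_mul]
  ring

end RadialCutoff

/-! ### The stream function and the field of a single ring -/

/-- The reduced squared distance `|p - a|² / (4 r r(a))`, on which the ring potential depends. -/
def sqDistRatio (a p : ℝ × ℝ) : ℝ := sqE (p - a) / (4 * p.1 * a.1)

/-- The radial derivative of `sqDistRatio a`. -/
def sqDistRatioR (a p : ℝ × ℝ) : ℝ :=
  (p.1 ^ 2 - a.1 ^ 2 - (p.2 - a.2) ^ 2) / (4 * p.1 ^ 2 * a.1)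

/-- The axial derivative of `sqDistRatio a`. -/
def sqDistRatioZ (a p : ℝ × ℝ) : ℝ := (p.2 - a.2) / (2 * p.1 * a.1)

/-- The stream function `r A_a` of a single ring, in closed form (see `mul_Avec_eq_ringStream`). -/
def ringStream (a p : ℝ × ℝ) : ℝ := √(p.1 * a.1) * ringKernel (sqDistRatio a p)

/-- The field `r⁻¹ ∇(r A_a)` of a single ring, in closed form (see `gradR_ringStream`). -/
def ringField (a p : ℝ × ℝ) : ℝ × ℝ :=
  (√(p.1 * a.1) / p.1) • (ringKernel (sqDistRatio a p) / (2 * p.1) +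
    deriv ringKernel (sqDistRatio a p) * sqDistRatioR a p,
    deriv ringKernel (sqDistRatio a p) * sqDistRatioZ a p)

lemma integral_eq_two_mul_of_symm {g : ℝ → ℝ} (hg : Continuous g) {b : ℝ}
    (hsymm : ∀ u, g (2 * b - u) = g u) :
    ∫ u in (0 : ℝ)..(2 * b), g u = 2 * ∫ u in (0 : ℝ)..b, g u := by
  have hreflect := intervalIntegral.integral_comp_sub_left (a := 0) (b := b) g (2 * b)
  simp only [hsymm, sub_zero, show 2 * b - b = b by ring] at hreflect
  rw [← intervalIntegral.integral_add_adjacent_intervals (hg.intervalIntegrable 0 b)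
    (hg.intervalIntegrable b (2 * b)), ← hreflect, two_mul]

section SingleRing

variable {a p : ℝ × ℝ} (ha : 0 < a.1) (hp : 0 < p.1)
include ha hp

lemma sqDistRatio_pos (hpa : p ≠ a) : 0 < sqDistRatio a p := by
  have := pow_pos (dE_pos.2 hpa) 2
  rw [dE, nE_sq] at this
  unfold sqDistRatio
  positivity

lemma loop_distance_sq_eq (u : ℝ) :
    a.1 ^ 2 + p.1 ^ 2 + (p.2 - a.2) ^ 2 - 2 * a.1 * p.1 * Real.cos (2 * u) =
      (2 * √(p.1 * a.1)) ^ 2 * (sqDistRatio a p + Real.sin u ^ 2) := by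
  rw [mul_pow, Real.sq_sqrt (by positivity), sqDistRatio, sqE, Real.cos_two_mul, Real.cos_sq',
    Prod.fst_sub, Prod.snd_sub]
  field_simp
  ring

lemma mul_Avec_eq_ringStream (hpa : p ≠ a) : p.1 * Avec a p = ringStream a p := by
  have hh := sqDistRatio_pos ha hp hpa
  have hintegrand (t : ℝ) : Real.cos t /
      √(a.1 ^ 2 + p.1 ^ 2 + (p.2 - a.2) ^ 2 - 2 * a.1 * p.1 * Real.cos t) =
      (2 * √(p.1 * a.1))⁻¹ * (Real.cos t * invDist (sqDistRatio a p) (t / 2)) := by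
    have := loop_distance_sq_eq ha hp (t / 2)
    rw [mul_div_cancel₀ t two_ne_zero] at this
    rw [this, Real.sqrt_mul (by positivity), Real.sqrt_sq (by positivity), invDist]
    field_simp
  have hcont : Continuous fun t => Real.cos t * invDist (sqDistRatio a p) (t / 2) :=
    Real.continuous_cos.mul ((continuous_invDist hh).comp (continuous_id.div_const 2))
  have hscale := intervalIntegral.mul_integral_comp_mul_left (a := 0) (b := π / 2) (c := 2)
    (f := fun t => Real.cos t * invDist (sqDistRatio a p) (t / 2))
  rw [mul_zero, mul_div_cancel₀ π two_ne_zero] at hscale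
  unfold Avec ringStream ringKernel ringIntegral
  simp only [hintegrand, intervalIntegral.integral_const_mul, pow_one]
  rw [integral_eq_two_mul_of_symm hcont fun u => by
    rw [show (2 * π - u) / 2 = π - u / 2 by ring, invDist, Real.sin_pi_sub, Real.cos_two_pi_sub,
      invDist], ← hscale]
  simp only [mul_div_cancel_left₀ _ (two_ne_zero' ℝ)]
  have := Real.sq_sqrt (by positivity : 0 ≤ p.1 * a.1)
  field_simp
  linear_combination -(∫ u in (0 : ℝ)..(π / 2),
    Real.cos (2 * u) * invDist (sqDistRatio a p) u) * this

lemma hasDerivAt_sqDistRatio_fst :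
    HasDerivAt (fun r => sqDistRatio a (r, p.2)) (sqDistRatioR a p) p.1 := by
  unfold sqDistRatio sqE
  refine (((((hasDerivAt_id p.1).sub_const a.1).pow 2).add_const ((p.2 - a.2) ^ 2)).div
    (((hasDerivAt_id p.1).const_mul 4).mul_const a.1)
    (show 4 * p.1 * a.1 ≠ 0 by positivity)).congr_deriv ?_
  simp only [sqDistRatioR, id_eq, Pi.pow_apply]
  field_simp
  ring

lemma hasDerivAt_sqDistRatio_snd :
    HasDerivAt (fun z => sqDistRatio a (p.1, z)) (sqDistRatioZ a p) p.2 := by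
  unfold sqDistRatio sqE
  refine (((((hasDerivAt_id p.2).sub_const a.2).pow 2).const_add ((p.1 - a.1) ^ 2)).div_const
    (4 * p.1 * a.1)).congr_deriv ?_
  simp only [sqDistRatioZ, id_eq]
  field_simp
  ring

lemma hasDerivAt_sqDistRatioR_fst :
    HasDerivAt (fun r => sqDistRatioR a (r, p.2))
      (1 / (2 * p.1 * a.1) - 2 * sqDistRatioR a p / p.1) p.1 := by
  refine ((((hasDerivAt_pow 2 p.1).sub_const (a.1 ^ 2)).sub_const ((p.2 - a.2) ^ 2)).div
    (((hasDerivAt_pow 2 p.1).const_mul 4).mul_const a.1)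
    (show 4 * p.1 ^ 2 * a.1 ≠ 0 by positivity)).congr_deriv ?_
  simp only [sqDistRatioR]
  field_simp
  ring

omit ha hp in
lemma hasDerivAt_sqDistRatioZ_snd :
    HasDerivAt (fun z => sqDistRatioZ a (p.1, z)) (1 / (2 * p.1 * a.1)) p.2 :=
  ((hasDerivAt_id p.2).sub_const a.2).div_const (2 * p.1 * a.1)

lemma hasDerivAt_sqrt_mul : HasDerivAt (fun r => √(r * a.1)) (√(p.1 * a.1) / (2 * p.1)) p.1 := by
  refine (((hasDerivAt_id p.1).mul_const a.1).sqrt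
    (show p.1 * a.1 ≠ 0 by positivity)).congr_deriv ?_
  rw [id_eq, one_mul, div_eq_div_iff (by positivity) (by positivity)]
  linear_combination -2 * Real.mul_self_sqrt (by positivity : 0 ≤ p.1 * a.1)

lemma hasDerivAt_sqrt_mul_div :
    HasDerivAt (fun r => √(r * a.1) / r) (-(√(p.1 * a.1) / p.1 / (2 * p.1))) p.1 := by
  refine ((hasDerivAt_sqrt_mul ha hp).div (hasDerivAt_id p.1) hp.ne').congr_deriv ?_
  simp only [id_eq]
  field_simp
  ring

lemma contDiffAt_sqDistRatio {n : ℕ∞} : ContDiffAt ℝ n (sqDistRatio a) p := by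
  unfold sqDistRatio sqE
  exact ContDiffAt.div (by fun_prop) (by fun_prop) (by positivity)

lemma contDiffAt_sqrt_mul {n : ℕ∞} : ContDiffAt ℝ n (fun q : ℝ × ℝ => √(q.1 * a.1)) p :=
  ContDiffAt.sqrt (by fun_prop) (by positivity)

lemma contDiffAt_deriv_ringKernel_comp (hpa : p ≠ a) :
    ContDiffAt ℝ 1 (fun q => deriv ringKernel (sqDistRatio a q)) p :=
  (contDiffAt_deriv_ringKernel (sqDistRatio_pos ha hp hpa)).comp p (contDiffAt_sqDistRatio ha hp)

lemma contDiffAt_ringKernel_comp (hpa : p ≠ a) :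
    ContDiffAt ℝ 2 (fun q => ringKernel (sqDistRatio a q)) p :=
  (contDiffAt_ringKernel (sqDistRatio_pos ha hp hpa)).comp p (contDiffAt_sqDistRatio ha hp)

lemma contDiffAt_ringStream (hpa : p ≠ a) : ContDiffAt ℝ 2 (ringStream a) p :=
  (contDiffAt_sqrt_mul ha hp).mul (contDiffAt_ringKernel_comp ha hp hpa)

lemma contDiffAt_ringField (hpa : p ≠ a) : ContDiffAt ℝ 1 (ringField a) p := by
  have hK := (contDiffAt_ringKernel_comp ha hp hpa).of_le one_le_two
  have hK' := contDiffAt_deriv_ringKernel_comp ha hp hpa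
  refine ((contDiffAt_sqrt_mul ha hp).div contDiffAt_fst hp.ne').smul
    (((hK.div (contDiffAt_const.mul contDiffAt_fst) (by positivity)).add
      (hK'.mul ?_)).prodMk (hK'.mul ?_))
  · exact ContDiffAt.div (by fun_prop) (by fun_prop) (by positivity)
  · exact ContDiffAt.div (by fun_prop) (by fun_prop) (by positivity)

lemma gradR_ringStream (hpa : p ≠ a) : gradR (ringStream a) p = p.1 • ringField a p := by
  have hK := hasDerivAt_ringKernel (sqDistRatio_pos ha hp hpa)
  have hdiff := (contDiffAt_ringStream ha hp hpa).differentiableAt two_ne_zero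
  have hr := (hasDerivAt_sqrt_mul ha hp).mul (hK.comp p.1 (hasDerivAt_sqDistRatio_fst ha hp))
  have hz := (hK.comp p.2 (hasDerivAt_sqDistRatio_snd ha hp)).const_mul (√(p.1 * a.1))
  rw [gradR, (hasDerivAt_slice_fst hdiff).unique hr, (hasDerivAt_slice_snd hdiff).unique hz,
    ringField]
  ext
  · simp only [Function.comp_apply, Prod.smul_fst, smul_eq_mul]
    field_simp
  · simp only [Prod.smul_snd, smul_eq_mul]
    field_simp

lemma sqDistRatioR_sq_add_sqDistRatioZ_sq :
    sqDistRatioR a p ^ 2 + sqDistRatioZ a p ^ 2 =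
      sqDistRatio a p * (1 + sqDistRatio a p) / p.1 ^ 2 := by
  simp only [sqDistRatioR, sqDistRatioZ, sqDistRatio, sqE, Prod.fst_sub, Prod.snd_sub]
  field_simp
  ring

lemma one_div_sub_sqDistRatioR :
    1 / (p.1 * a.1) - 2 * sqDistRatioR a p / p.1 = (1 + 2 * sqDistRatio a p) / p.1 ^ 2 := by
  simp only [sqDistRatioR, sqDistRatio, sqE, Prod.fst_sub, Prod.snd_sub]
  field_simp
  ring

lemma divE_ringField (hpa : p ≠ a) : divE (ringField a) p = 0 := by
  have hh := sqDistRatio_pos ha hp hpa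
  have hlegendre : deriv (deriv ringKernel) (sqDistRatio a p) *
        (sqDistRatioR a p ^ 2 + sqDistRatioZ a p ^ 2) +
      (1 / (p.1 * a.1) - 2 * sqDistRatioR a p / p.1) * deriv ringKernel (sqDistRatio a p) =
        3 / 4 * ringKernel (sqDistRatio a p) / p.1 ^ 2 := by
    rw [sqDistRatioR_sq_add_sqDistRatioZ_sq ha hp, one_div_sub_sqDistRatioR ha hp,
      ← ringKernel_legendre hh]
    ring
  have hK := (hasDerivAt_ringKernel hh).comp p.1 (hasDerivAt_sqDistRatio_fst ha hp)
  have hKr := (hasDerivAt_deriv_ringKernel hh).comp p.1 (hasDerivAt_sqDistRatio_fst ha hp)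
  have hKz := (hasDerivAt_deriv_ringKernel hh).comp p.2 (hasDerivAt_sqDistRatio_snd ha hp)
  have hR := (hasDerivAt_sqrt_mul_div ha hp).mul
    ((hK.div ((hasDerivAt_id p.1).const_mul 2) (show 2 * p.1 ≠ 0 by positivity)).add
      (hKr.mul (hasDerivAt_sqDistRatioR_fst ha hp)))
  have hZ := (hKz.mul (hasDerivAt_sqDistRatioZ_snd (a := a))).const_mul (√(p.1 * a.1) / p.1)
  have hdiff := (contDiffAt_ringField ha hp hpa).differentiableAt one_ne_zero
  rw [divE, (hasDerivAt_slice_fst hdiff.fst).unique hR, (hasDerivAt_slice_snd hdiff.snd).unique hZ]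
  simp only [Function.comp_apply, Pi.add_apply, Pi.mul_apply, Pi.div_apply, id_eq]
  generalize √(p.1 * a.1) = s
  field_simp at hlegendre ⊢
  linear_combination s * hlegendre

end SingleRing

/-! ### Bounds on the field of a single ring -/

section FieldBounds

variable {a p : ℝ × ℝ} (ha : 0 < a.1) (hp : 0 < p.1)
include ha hp

lemma two_mul_sqrt_mul_sqrt_sqDistRatio :
    2 * √(p.1 * a.1) * √(sqDistRatio a p) = dE p a := by
  have : sqE (p - a) = (2 * √(p.1 * a.1)) ^ 2 * sqDistRatio a p := by
    rw [mul_pow, Real.sq_sqrt (by positivity), sqDistRatio]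
    field_simp
    ring
  calc 2 * √(p.1 * a.1) * √(sqDistRatio a p)
      = √((2 * √(p.1 * a.1)) ^ 2 * sqDistRatio a p) := by
        rw [Real.sqrt_mul (sq_nonneg (2 * √(p.1 * a.1))), Real.sqrt_sq (by positivity)]
    _ = dE p a := by rw [← this, ← nE_sq, Real.sqrt_sq (nE_nonneg _), dE]

lemma sq_mul_nE_ringField_le (hpa : p ≠ a) :
    p.1 ^ 2 * nE (ringField a p) ≤ √(p.1 * a.1) * (ringKernel (sqDistRatio a p) / 2 +
      |deriv ringKernel (sqDistRatio a p)| * √(sqDistRatio a p * (1 + sqDistRatio a p))) := by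
  have hK := ringKernel_nonneg (sqDistRatio_pos ha hp hpa)
  have hgrad : nE (sqDistRatioR a p, sqDistRatioZ a p) =
      √(sqDistRatio a p * (1 + sqDistRatio a p)) / p.1 := by
    rw [nE, sqDistRatioR_sq_add_sqDistRatioZ_sq ha hp, Real.sqrt_div' _ (by positivity),
      Real.sqrt_sq hp.le]
  have hsplit : ringField a p = (√(p.1 * a.1) / p.1) •
      ((ringKernel (sqDistRatio a p) / (2 * p.1)) • ((1 : ℝ), (0 : ℝ)) +
        deriv ringKernel (sqDistRatio a p) • (sqDistRatioR a p, sqDistRatioZ a p)) := by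
    simp [ringField]
  calc p.1 ^ 2 * nE (ringField a p)
      ≤ p.1 ^ 2 * (√(p.1 * a.1) / p.1 * (ringKernel (sqDistRatio a p) / (2 * p.1) +
        |deriv ringKernel (sqDistRatio a p)| *
          (√(sqDistRatio a p * (1 + sqDistRatio a p)) / p.1))) := by
        rw [hsplit, nE_smul, abs_of_nonneg (by positivity)]
        gcongr
        refine (nE_add_le _ _).trans_eq ?_
        rw [nE_smul, nE_smul, hgrad, abs_of_nonneg (by positivity)]
        simp [nE]
    _ = _ := by field_simp

lemma dE_mul_nE_ringField_le (hpa : p ≠ a) : dE p a * (p.1 * nE (ringField a p)) ≤ 5 * a.1 := by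
  have hh := sqDistRatio_pos ha hp hpa
  have hK' : |deriv ringKernel (sqDistRatio a p)| * √(sqDistRatio a p * (1 + sqDistRatio a p)) ≤
      3 / 2 / √(sqDistRatio a p) := by
    calc _ ≤ 3 / 2 * ((√(sqDistRatio a p + 1))⁻¹ / sqDistRatio a p) *
          √(sqDistRatio a p * (1 + sqDistRatio a p)) := by gcongr; exact abs_deriv_ringKernel_le hh
      _ = 3 / 2 / √(sqDistRatio a p) := by
        rw [Real.sqrt_mul hh.le, add_comm 1]
        field_simp
        rw [Real.sq_sqrt hh.le]
  have hfield : p.1 ^ 2 * nE (ringField a p) ≤ √(p.1 * a.1) * (5 / 2 / √(sqDistRatio a p)) := by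
    refine (sq_mul_nE_ringField_le ha hp hpa).trans (mul_le_mul_of_nonneg_left ?_ (by positivity))
    have hK := ringKernel_le_two_div_sqrt hh
    linear_combination hK / 2 + hK'
  refine le_of_mul_le_mul_left ?_ hp
  calc p.1 * (dE p a * (p.1 * nE (ringField a p)))
      = dE p a * (p.1 ^ 2 * nE (ringField a p)) := by ring
    _ ≤ 2 * √(p.1 * a.1) * √(sqDistRatio a p) *
        (√(p.1 * a.1) * (5 / 2 / √(sqDistRatio a p))) := by
        rw [two_mul_sqrt_mul_sqrt_sqDistRatio ha hp]
        exact mul_le_mul_of_nonneg_left hfield (dE_nonneg _ _)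
    _ = p.1 * (5 * a.1) := by
        field_simp
        rw [Real.sq_sqrt (by positivity)]

lemma sq_mul_nE_ringField_le_of_one_le (hpa : p ≠ a) (h1 : 1 ≤ sqDistRatio a p) :
    p.1 ^ 2 * nE (ringField a p) ≤ √(p.1 * a.1) * (7 / √(sqDistRatio a p) ^ 3) := by
  have hh := sqDistRatio_pos ha hp hpa
  have hsqrt : √(sqDistRatio a p * (1 + sqDistRatio a p)) ≤ 2 * √(sqDistRatio a p) ^ 2 := by
    rw [Real.sq_sqrt hh.le]
    exact Real.sqrt_le_iff.2 ⟨by positivity, by nlinarith⟩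
  refine (sq_mul_nE_ringField_le ha hp hpa).trans (mul_le_mul_of_nonneg_left ?_ (by positivity))
  calc _ ≤ 2 / √(sqDistRatio a p) ^ 3 / 2 + 3 / √(sqDistRatio a p) ^ 5 *
        (2 * √(sqDistRatio a p) ^ 2) := by
        gcongr
        · exact ringKernel_le_two_div_sqrt_pow_three hh
        · exact abs_deriv_ringKernel_le_three_div_sqrt_pow_five hh
    _ = 7 / √(sqDistRatio a p) ^ 3 := by field_simp; norm_num

lemma dotE_ringField_sub_self : dotE (ringField a p) (p - a) =
    √(p.1 * a.1) / p.1 * (ringKernel (sqDistRatio a p) * (p.1 - a.1) / (2 * p.1) +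
      sqDistRatio a p * deriv ringKernel (sqDistRatio a p) * (1 + a.1 / p.1)) := by
  have hradial : sqDistRatioR a p * (p.1 - a.1) + sqDistRatioZ a p * (p.2 - a.2) =
      sqDistRatio a p * (1 + a.1 / p.1) := by
    simp only [sqDistRatioR, sqDistRatioZ, sqDistRatio, sqE, Prod.fst_sub, Prod.snd_sub]
    field_simp
    ring
  simp only [ringField, dotE, Prod.smul_fst, Prod.smul_snd, smul_eq_mul, Prod.fst_sub, Prod.snd_sub]
  linear_combination (√(p.1 * a.1) / p.1 * deriv ringKernel (sqDistRatio a p)) * hradial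

end FieldBounds

lemma tendsto_sqrt_nhdsGT_zero : Tendsto (fun h => √h) (𝓝[>] 0) (𝓝 0) := by
  simpa using (Real.continuous_sqrt.tendsto 0).mono_left (nhdsWithin_le_nhds (s := Set.Ioi 0))

lemma eventually_mem_Ioc_nhdsGT_zero : ∀ᶠ h : ℝ in 𝓝[>] 0, h ∈ Set.Ioc 0 1 :=
  Ioc_mem_nhdsGT one_pos

lemma tendsto_mul_deriv_ringKernel :
    Tendsto (fun h => h * deriv ringKernel h) (𝓝[>] 0) (𝓝 (-1 / 2)) := by
  rw [tendsto_iff_norm_sub_tendsto_zero]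
  have hbound : Tendsto (fun h : ℝ => 5 * √h) (𝓝[>] 0) (𝓝 0) := by
    simpa using tendsto_sqrt_nhdsGT_zero.const_mul 5
  refine squeeze_zero' (.of_forall fun _ => norm_nonneg _) ?_ hbound
  filter_upwards [eventually_mem_Ioc_nhdsGT_zero] with h ⟨h0, h1⟩
  simpa [Real.norm_eq_abs, neg_div] using abs_mul_deriv_ringKernel_add_half_le h0 h1

lemma tendsto_sqrt_mul_ringKernel :
    Tendsto (fun h => √h * ringKernel h) (𝓝[>] 0) (𝓝 0) := by
  have hsqrt := tendsto_sqrt_nhdsGT_zero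
  have hlog : Tendsto (fun h => Real.log h * √h) (𝓝[>] 0) (𝓝 0) := by
    simpa only [Real.sqrt_eq_rpow] using tendsto_log_mul_rpow_nhdsGT_zero one_half_pos
  have hbound : Tendsto (fun h => √h * (2 * Real.log 2 - 2) - Real.log h * √h / 2 + √h * (5 * √h))
      (𝓝[>] 0) (𝓝 0) := by
    simpa using ((hsqrt.mul_const (2 * Real.log 2 - 2)).sub (hlog.div_const 2)).add
      (hsqrt.mul (hsqrt.const_mul 5))
  refine squeeze_zero_norm' ?_ hbound
  filter_upwards [eventually_mem_Ioc_nhdsGT_zero] with h ⟨h0, h1⟩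
  rw [Real.norm_of_nonneg (mul_nonneg (Real.sqrt_nonneg _) (ringKernel_nonneg h0))]
  have hK := (abs_le.1 (abs_ringKernel_sub_le h0 h1)).2
  linear_combination √h * hK

section OwnFlux

variable {a : ℝ × ℝ} (ha : 0 < a.1)
include ha

lemma eventually_fst_pos : ∀ᶠ p : ℝ × ℝ in 𝓝[≠] a, 0 < p.1 :=
  nhdsWithin_le_nhds (continuous_fst.continuousAt.eventually_const_lt ha)

lemma tendsto_sqDistRatio : Tendsto (sqDistRatio a) (𝓝[≠] a) (𝓝[>] 0) := by
  refine tendsto_nhdsWithin_iff.2 ⟨?_, ?_⟩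
  · have hcont := (contDiffAt_sqDistRatio (n := 0) ha ha).continuousAt.tendsto
    rw [show sqDistRatio a a = 0 by simp [sqDistRatio, sqE]] at hcont
    exact hcont.mono_left nhdsWithin_le_nhds
  · filter_upwards [eventually_fst_pos ha, self_mem_nhdsWithin] with p hp hpa
    exact sqDistRatio_pos ha hp hpa

lemma tendsto_ringKernel_mul_sub :
    Tendsto (fun p : ℝ × ℝ => ringKernel (sqDistRatio a p) * (p.1 - a.1)) (𝓝[≠] a) (𝓝 0) := by
  have hscale : Tendsto (fun p : ℝ × ℝ => 2 * √(p.1 * a.1)) (𝓝[≠] a) (𝓝 (2 * √(a.1 * a.1))) :=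
    (Continuous.continuousAt (by fun_prop)).tendsto.mono_left nhdsWithin_le_nhds
  have hbound := hscale.mul (tendsto_sqrt_mul_ringKernel.comp (tendsto_sqDistRatio ha))
  rw [mul_zero] at hbound
  refine squeeze_zero_norm' ?_ hbound
  filter_upwards [eventually_fst_pos ha, self_mem_nhdsWithin] with p hp hpa
  have hK := ringKernel_nonneg (sqDistRatio_pos ha hp hpa)
  rw [norm_mul, Real.norm_eq_abs, Real.norm_eq_abs, abs_of_nonneg hK,
    Function.comp_apply, ← mul_assoc, two_mul_sqrt_mul_sqrt_sqDistRatio ha hp, mul_comm]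
  exact mul_le_mul_of_nonneg_right (abs_fst_le_nE (p - a)) hK

lemma tendsto_dotE_ringField_self :
    Tendsto (fun p => dotE (ringField a p) (p - a)) (𝓝[≠] a) (𝓝 (-1)) := by
  have hcont {f : ℝ × ℝ → ℝ} (hf : ContinuousAt f a) : Tendsto f (𝓝[≠] a) (𝓝 (f a)) :=
    hf.tendsto.mono_left nhdsWithin_le_nhds
  have hscale := hcont (f := fun p => √(p.1 * a.1) / p.1)
    (ContinuousAt.div (by fun_prop) (by fun_prop) ha.ne')
  have hratio := hcont (f := fun p => 1 + a.1 / p.1)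
    (continuousAt_const.add (ContinuousAt.div (by fun_prop) (by fun_prop) ha.ne'))
  have htotal := hscale.mul (((tendsto_ringKernel_mul_sub ha).div
    (hcont (f := fun p => 2 * p.1) (by fun_prop)) (by positivity)).add
    ((tendsto_mul_deriv_ringKernel.comp (tendsto_sqDistRatio ha)).mul hratio))
  rw [Real.sqrt_mul_self ha.le, div_self ha.ne', zero_div,
    show (1 : ℝ) * (0 + -1 / 2 * (1 + 1)) = -1 by norm_num] at htotal
  refine htotal.congr' ?_
  filter_upwards [eventually_fst_pos ha] with p hp
  rw [dotE_ringField_sub_self ha hp]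
  rfl

end OwnFlux

/-! ### Flux of a divergence-free field around a puncture -/

section Flux

variable {b : ℝ × ℝ} {s t t₀ c : ℝ} {W : ℝ × ℝ → ℝ × ℝ}

lemma continuousOn_dotE {K : Set (ℝ × ℝ)} {V : ℝ × ℝ → ℝ × ℝ} (hV : ContinuousOn V K)
    (hW : ContinuousOn W K) : ContinuousOn (fun p => dotE (V p) (W p)) K :=
  (hV.fst.mul hW.fst).add (hV.snd.mul hW.snd)

lemma tsupport_radialCutoff_sub_subset {s' t' : ℝ} (hs : 0 ≤ s) (hst : s < t) (ht : t ≤ t₀)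
    (hs' : 0 ≤ s') (hst' : s' < t') (ht' : t' ≤ t₀) :
    tsupport (fun p => radialCutoff b s t p - radialCutoff b s' t' p) ⊆
      closedAnnulus b (min s s') t₀ := by
  refine closure_minimal (fun p hp => ?_) (isCompact_closedAnnulus _ _ _).isClosed
  by_contra hc
  refine hp ?_
  rcases not_and_or.1 hc with hc | hc
  · obtain ⟨h, h'⟩ := lt_min_iff.1 (not_le.1 hc)
    simp only [radialCutoff_eq_zero hs hst h.le, radialCutoff_eq_zero hs' hst' h'.le, sub_self]
  · have h := (not_le.1 hc).le
    simp only [radialCutoff_eq_one hs hst (ht.trans h), radialCutoff_eq_one hs' hst' (ht'.trans h),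
      sub_self]

lemma ne_of_mem_closedAnnulus {p : ℝ × ℝ} (hs : 0 < s) (hp : p ∈ closedAnnulus b s t) : p ≠ b :=
  dE_pos.1 (hs.trans_le hp.1)

variable (hW : ∀ p, p ≠ b → dE p b ≤ t₀ → ContDiffAt ℝ 1 W p)
include hW

lemma integrable_radialWeight_mul_flux (hs : 0 < s) (hst : s < t) (ht : t ≤ t₀) :
    Integrable fun p => radialWeight b s t p * dotE (W p) (p - b) :=
  integrable_radialWeight_mul hs.le hst <| continuousOn_dotE (fun p hp =>
    (hW p (ne_of_mem_closedAnnulus hs hp) (hp.2.trans ht)).continuousAt.continuousWithinAt)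
    (by fun_prop)

variable (hdiv : ∀ p, p ≠ b → dE p b ≤ t₀ → divE W p = 0)
include hdiv

lemma integral_radialWeight_mul_flux_congr {s' t' : ℝ} (hs : 0 < s) (hst : s < t) (ht : t ≤ t₀)
    (hs' : 0 < s') (hst' : s' < t') (ht' : t' ≤ t₀) :
    ∫ p, radialWeight b s t p * dotE (W p) (p - b) =
      ∫ p, radialWeight b s' t' p * dotE (W p) (p - b) := by
  set X : ℝ × ℝ → ℝ := fun p => radialCutoff b s t p - radialCutoff b s' t' p
  have htsupp : tsupport X ⊆ closedAnnulus b (min s s') t₀ :=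
    tsupport_radialCutoff_sub_subset hs.le hst ht hs'.le hst' ht'
  have hmem (p) (hp : p ∈ tsupport X) : p ≠ b ∧ dE p b ≤ t₀ :=
    ⟨ne_of_mem_closedAnnulus (lt_min hs hs') (htsupp hp), (htsupp hp).2⟩
  have hgrad (p : ℝ × ℝ) : dotE (gradR X p) (W p) =
      radialWeight b s t p * dotE (W p) (p - b) - radialWeight b s' t' p * dotE (W p) (p - b) := by
    have hχ (s t : ℝ) := (contDiff_radialCutoff b s t).differentiable one_ne_zero p
    have : gradR X p = gradR (radialCutoff b s t) p - gradR (radialCutoff b s' t') p := by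
      simp only [X, gradR, pdRr, pdZr, fderiv_fun_sub (hχ s t) (hχ s' t'), sub_apply,
        Prod.mk_sub_mk]
    rw [this, gradR_radialCutoff, gradR_radialCutoff]
    simp only [dotE, Prod.fst_sub, Prod.snd_sub, Prod.smul_fst, Prod.smul_snd, smul_eq_mul]
    ring
  have hzero (p : ℝ × ℝ) : X p * divE W p = 0 := by
    by_cases hp : p ∈ tsupport X
    · rw [hdiv p (hmem p hp).1 (hmem p hp).2, mul_zero]
    · rw [image_eq_zero_of_notMem_tsupport hp, zero_mul]
  have hibp := integral_mul_divE ((contDiff_radialCutoff b s t).sub (contDiff_radialCutoff b s' t'))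
    ((isCompact_closedAnnulus _ _ _).of_isClosed_subset (isClosed_tsupport X) htsupp)
    fun p hp => hW p (hmem p hp).1 (hmem p hp).2
  change ∫ p, X p * divE W p = -∫ p, dotE (gradR X p) (W p) at hibp
  simp only [hzero, hgrad, integral_zero] at hibp
  rw [integral_sub (integrable_radialWeight_mul_flux hW hs hst ht)
    (integrable_radialWeight_mul_flux hW hs' hst' ht')] at hibp
  linarith

omit hdiv in
lemma abs_integral_radialWeight_mul_flux_sub_le {ε : ℝ} (hs : 0 < s) (hst : s < t) (ht : t ≤ t₀)
    (hε : ∀ p ∈ closedAnnulus b s t, |dotE (W p) (p - b) - c| ≤ ε) :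
    |(∫ p, radialWeight b s t p * dotE (W p) (p - b)) - 2 * π * c| ≤ 2 * π * ε := by
  have hint : Integrable (radialWeight b s t) := by
    simpa using integrable_radialWeight_mul (f := fun _ => 1) hs.le hst continuousOn_const
  rw [← integral_radialWeight hs.le hst (a := b), ← integral_mul_const, ← integral_mul_const,
    ← integral_sub (integrable_radialWeight_mul_flux hW hs hst ht) (hint.mul_const c),
    ← Real.norm_eq_abs]
  refine norm_integral_le_of_norm_le (hint.mul_const ε) (.of_forall fun p => ?_)
  by_cases hp : p ∈ closedAnnulus b s t
  · have hw := radialWeight_nonneg hs.le hst (a := b) p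
    rw [← mul_sub, norm_mul, Real.norm_of_nonneg hw]
    exact mul_le_mul_of_nonneg_left (hε p hp) hw
  · simp only [radialWeight_eq_zero hs.le hst hp, zero_mul, sub_zero, norm_zero, le_refl]

/-- The flux does not depend on the annulus, so it is computed on arbitrarily small ones. -/
lemma integral_radialWeight_mul_flux
    (hlim : Tendsto (fun p => dotE (W p) (p - b)) (𝓝[≠] b) (𝓝 c)) (hs : 0 < s) (hst : s < t)
    (ht : t ≤ t₀) : ∫ p, radialWeight b s t p * dotE (W p) (p - b) = 2 * π * c := by
  refine sub_eq_zero.1 (abs_nonpos_iff.1 (le_of_forall_pos_le_add fun ε hε => ?_))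
  obtain ⟨η, hη, hclose⟩ := Metric.eventually_nhds_iff.1 (eventually_nhdsWithin_iff.1
    (Metric.tendsto_nhds.1 hlim (ε / (2 * π)) (by positivity)))
  have hpos : 0 < min t (η / 2) := lt_min (hs.trans hst) (half_pos hη)
  rw [integral_radialWeight_mul_flux_congr hW hdiv hs hst ht (half_pos hpos) (half_lt_self hpos)
    ((min_le_left _ _).trans ht), zero_add, ← mul_div_cancel₀ ε Real.two_pi_pos.ne']
  refine abs_integral_radialWeight_mul_flux_sub_le hW (half_pos hpos) (half_lt_self hpos)
    ((min_le_left _ _).trans ht)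
    fun p hp => (hclose ?_ (ne_of_mem_closedAnnulus (half_pos hpos) hp)).le
  have hdist : dist p b ≤ dE p b :=
    max_le (abs_fst_le_nE (p - b)) (Real.abs_le_sqrt (le_add_of_nonneg_left (sq_nonneg _)))
  linarith [hp.2, min_le_right t (η / 2)]

end Flux

/-! ### Configurations of rings -/

/-- Total stream function of the rings through the points `a i`. -/
def totalStream {ι : Type*} [Fintype ι] (a : ι → ℝ × ℝ) (p : ℝ × ℝ) : ℝ := ∑ i, ringStream (a i) p

/-- Total field of the rings through the points `a i`: off these points
`∇ (totalStream a) = r • totalField a`. -/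
def totalField {ι : Type*} [Fintype ι] (a : ι → ℝ × ℝ) (p : ℝ × ℝ) : ℝ × ℝ :=
  ∑ i, ringField (a i) p

/-- Twice the energy density of the total field. -/
def energyDensity {ι : Type*} [Fintype ι] (a : ι → ℝ × ℝ) (p : ℝ × ℝ) : ℝ :=
  p.1 * sqE (totalField a p)

/-- The open half plane with the points `a i` removed. -/
def puncturedHp {ι : Type*} (a : ι → ℝ × ℝ) : Set (ℝ × ℝ) := {p | p ∈ Hp ∧ ∀ i, p ≠ a i}

section Configuration

variable {ι : Type*} {a : ι → ℝ × ℝ}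

lemma isOpen_Hp : IsOpen Hp := isOpen_lt continuous_const continuous_fst

lemma isOpen_puncturedHp [Finite ι] (a : ι → ℝ × ℝ) : IsOpen (puncturedHp a) := by
  simp only [puncturedHp, Set.ofPred_and, Set.ofPred_forall]
  exact isOpen_Hp.inter (isOpen_iInter_of_finite fun i => isOpen_ne)

variable [Fintype ι]

lemma energyDensity_nonneg {p : ℝ × ℝ} (hp : p ∈ Hp) : 0 ≤ energyDensity a p :=
  mul_nonneg (le_of_lt hp) (add_nonneg (sq_nonneg _) (sq_nonneg _))

variable (ha : ∀ i, a i ∈ Hp) {p : ℝ × ℝ}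
include ha

lemma contDiffAt_totalStream (hp : p ∈ puncturedHp a) : ContDiffAt ℝ 1 (totalStream a) p :=
  ContDiffAt.sum fun i _ => (contDiffAt_ringStream (ha i) hp.1 (hp.2 i)).of_le one_le_two

lemma contDiffAt_totalField (hp : p ∈ puncturedHp a) : ContDiffAt ℝ 1 (totalField a) p :=
  ContDiffAt.sum fun i _ => contDiffAt_ringField (ha i) hp.1 (hp.2 i)

lemma gradR_totalStream (hp : p ∈ puncturedHp a) :
    gradR (totalStream a) p = p.1 • totalField a p := by
  rw [totalField, Finset.smul_sum, ← Finset.sum_congr rfl fun i _ =>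
    gradR_ringStream (ha i) hp.1 (hp.2 i)]
  exact gradR_sum fun i _ =>
    (contDiffAt_ringStream (ha i) hp.1 (hp.2 i)).differentiableAt two_ne_zero

lemma divE_totalField (hp : p ∈ puncturedHp a) : divE (totalField a) p = 0 :=
  (divE_sum fun i _ =>
    (contDiffAt_ringField (ha i) hp.1 (hp.2 i)).differentiableAt one_ne_zero).trans
    (Finset.sum_eq_zero fun i _ => divE_ringField (ha i) hp.1 (hp.2 i))

lemma divE_totalStream_smul_totalField (hp : p ∈ puncturedHp a) :
    divE (fun q => totalStream a q • totalField a q) p = energyDensity a p := by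
  rw [divE_smul ((contDiffAt_totalStream ha hp).differentiableAt one_ne_zero)
    ((contDiffAt_totalField ha hp).differentiableAt one_ne_zero), divE_totalField ha hp,
    gradR_totalStream ha hp, dotE_smul_left, mul_zero, zero_add, energyDensity]
  simp only [dotE, sqE, sq]

lemma tendsto_dotE_totalField (hinj : Function.Injective a) (i : ι) :
    Tendsto (fun p => dotE (totalField a p) (p - a i)) (𝓝[≠] (a i)) (𝓝 (-1)) := by
  classical
  have hother (j) (hj : j ∈ Finset.univ.erase i) :
      Tendsto (fun p => dotE (ringField (a j) p) (p - a i)) (𝓝[≠] (a i)) (𝓝 0) := by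
    have hcont := (contDiffAt_ringField (ha j) (ha i)
      (hinj.ne (Finset.ne_of_mem_erase hj).symm)).continuousAt
    have hflux : ContinuousAt (fun p => dotE (ringField (a j) p) (p - a i)) (a i) :=
      (hcont.fst.mul (by fun_prop)).add (hcont.snd.mul (by fun_prop))
    simpa [dotE] using hflux.tendsto.mono_left (nhdsWithin_le_nhds (s := {a i}ᶜ))
  have hsum := (tendsto_dotE_ringField_self (ha i)).add (tendsto_finsetSum _ hother)
  simp only [Finset.sum_const_zero, add_zero] at hsum
  refine hsum.congr fun p => ?_
  rw [totalField, dotE_sum_left]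
  exact Finset.add_sum_erase _ (fun j => dotE (ringField (a j) p) (p - a i)) (Finset.mem_univ i)

end Configuration

lemma energyDensity_eq {n : ℕ} {a : Fin n → ℝ × ℝ} (ha : ∀ i, a i ∈ Hp) {p : ℝ × ℝ}
    (hp : p ∈ puncturedHp a) :
    1 / (2 * p.1) * (pdRr (rPsiStar a) p ^ 2 + pdZr (rPsiStar a) p ^ 2) =
      energyDensity a p / 2 := by
  have hstream : rPsiStar a =ᶠ[𝓝 p] totalStream a := by
    filter_upwards [(isOpen_puncturedHp a).mem_nhds hp] with q hq
    simp only [rPsiStar, PsiStar, totalStream, Finset.mul_sum]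
    exact Finset.sum_congr rfl fun i _ => mul_Avec_eq_ringStream (ha i) hq.1 (hq.2 i)
  have hgrad := (gradR_congr hstream).trans (gradR_totalStream ha hp)
  have hp0 : p.1 ≠ 0 := ne_of_gt hp.1
  have hr : pdRr (rPsiStar a) p = p.1 * (totalField a p).1 := congrArg Prod.fst hgrad
  have hz : pdZr (rPsiStar a) p = p.1 * (totalField a p).2 := congrArg Prod.snd hgrad
  rw [hr, hz, energyDensity, sqE]
  field_simp

/-- The points `a i` are at distance at least `4 d` from each other and from the axis. -/
structure IsSeparated {ι : Type*} (a : ι → ℝ × ℝ) (d : ℝ) : Prop where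
  pos : 0 < d
  le_fst : ∀ i, 4 * d ≤ (a i).1
  le_dE : ∀ i j, i ≠ j → 4 * d ≤ dE (a i) (a j)

namespace IsSeparated

variable {ι : Type*} {a : ι → ℝ × ℝ} {d : ℝ} (hd : IsSeparated a d)
include hd

lemma mem_Hp (i : ι) : a i ∈ Hp := (mul_pos four_pos hd.pos).trans_le (hd.le_fst i)

lemma injective : Function.Injective a := fun i j hij => by
  by_contra hne
  have := hd.le_dE i j hne
  rw [hij, dE_self] at this
  linarith [hd.pos]

lemma half_fst_le_of_dE_le {i : ι} {p : ℝ × ℝ} (hp : dE p (a i) ≤ d) : (a i).1 / 2 ≤ p.1 := by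
  have := abs_le.1 ((abs_fst_le_nE (p - a i)).trans hp)
  rw [Prod.fst_sub] at this
  linarith [hd.le_fst i]

lemma three_mul_le_dE {i j : ι} (hij : i ≠ j) {p : ℝ × ℝ} (hp : dE p (a i) ≤ d) :
    3 * d ≤ dE p (a j) := by
  linarith [hd.le_dE i j hij, dE_triangle (a i) p (a j), dE_comm (a i) p]

lemma fst_pos_of_dE_le {i : ι} {p : ℝ × ℝ} (hp : dE p (a i) ≤ d) : 0 < p.1 :=
  (half_pos (hd.mem_Hp i)).trans_le (hd.half_fst_le_of_dE_le hp)

lemma ne_of_dE_le {i j : ι} (hij : i ≠ j) {p : ℝ × ℝ} (hp : dE p (a i) ≤ d) : p ≠ a j :=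
  dE_pos.1 ((mul_pos three_pos hd.pos).trans_le (hd.three_mul_le_dE hij hp))

lemma mem_puncturedHp {i : ι} {p : ℝ × ℝ} (hne : p ≠ a i) (hp : dE p (a i) ≤ d) :
    p ∈ puncturedHp a := by
  refine ⟨hd.fst_pos_of_dE_le hp, fun j => ?_⟩
  rcases eq_or_ne i j with rfl | hij
  · exact hne
  · exact hd.ne_of_dE_le hij hp

variable {s t : ℝ} [Fintype ι]

lemma integral_radialWeight_mul_totalField (i : ι) (hs : 0 < s) (hst : s < t) (ht : t ≤ d) :
    ∫ p, radialWeight (a i) s t p * dotE (totalField a p) (p - a i) = -(2 * π) := by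
  have hmem (p) (hne : p ≠ a i) (hp : dE p (a i) ≤ d) := hd.mem_puncturedHp hne hp
  rw [integral_radialWeight_mul_flux
    (fun p hne hp => contDiffAt_totalField hd.mem_Hp (hmem p hne hp))
    (fun p hne hp => divE_totalField hd.mem_Hp (hmem p hne hp))
    (tendsto_dotE_totalField hd.mem_Hp hd.injective i) hs hst ht]
  ring

end IsSeparated

/-! ### The divergence theorem on the half plane -/

/-- A defining function of the boundary of the half plane: it is positive on `Hp` and tends to `0`
at the axis and at infinity. -/
def boundaryFn (p : ℝ × ℝ) : ℝ := p.1 / (1 + sqE p)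

/-- Smooth cutoff equal to `1` on `{2 ≤ N * boundaryFn}` and to `0` on `{N * boundaryFn ≤ 1}`. -/
def exhaustionCutoff (N : ℝ) (p : ℝ × ℝ) : ℝ := Real.smoothTransition (N * boundaryFn p - 1)

section BoundaryFn

variable {p : ℝ × ℝ}

lemma one_add_sqE_pos (p : ℝ × ℝ) : 0 < 1 + sqE p :=
  add_pos_of_pos_of_nonneg one_pos (add_nonneg (sq_nonneg _) (sq_nonneg _))

lemma boundaryFn_pos_iff : 0 < boundaryFn p ↔ p ∈ Hp := div_pos_iff_of_pos_right (one_add_sqE_pos p)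

lemma contDiff_boundaryFn : ContDiff ℝ 1 boundaryFn :=
  ContDiff.div (by fun_prop) (by unfold sqE; fun_prop) fun p => (one_add_sqE_pos p).ne'

lemma gradR_boundaryFn (p : ℝ × ℝ) : gradR boundaryFn p =
    ((1 + p.2 ^ 2 - p.1 ^ 2) / (1 + sqE p) ^ 2, -2 * p.1 * p.2 / (1 + sqE p) ^ 2) := by
  have hq := (one_add_sqE_pos p).ne'
  have hdiff := contDiff_boundaryFn.differentiable one_ne_zero p
  have hr : HasDerivAt (fun r => 1 + sqE (r, p.2)) (2 * p.1) p.1 := by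
    simpa [sqE] using ((hasDerivAt_pow 2 p.1).add_const (p.2 ^ 2)).const_add 1
  have hz : HasDerivAt (fun z => 1 + sqE (p.1, z)) (2 * p.2) p.2 := by
    simpa [sqE] using ((hasDerivAt_pow 2 p.2).const_add (p.1 ^ 2)).const_add 1
  ext
  · rw [gradR, (hasDerivAt_slice_fst hdiff).unique ((hasDerivAt_id p.1).div hr hq)]
    simp only [id_eq, sqE]
    ring
  · rw [gradR, (hasDerivAt_slice_snd hdiff).unique ((hasDerivAt_const p.2 p.1).div hz hq)]
    ring

lemma nE_gradR_boundaryFn_le (p : ℝ × ℝ) : nE (gradR boundaryFn p) ≤ 1 / (1 + sqE p) := by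
  have hq := one_add_sqE_pos p
  refine Real.sqrt_le_iff.2 ⟨by positivity, ?_⟩
  rw [gradR_boundaryFn, div_pow, div_pow, ← add_div, div_pow, one_pow,
    div_le_div_iff₀ (by positivity) (by positivity)]
  have hnum : (1 + p.2 ^ 2 - p.1 ^ 2) ^ 2 + (-2 * p.1 * p.2) ^ 2 ≤ (1 + sqE p) ^ 2 := by
    unfold sqE
    nlinarith [sq_nonneg p.1]
  calc _ ≤ (1 + sqE p) ^ 2 * (1 + sqE p) ^ 2 := mul_le_mul_of_nonneg_right hnum (sq_nonneg _)
    _ = 1 * ((1 + sqE p) ^ 2) ^ 2 := by ring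

lemma isCompact_le_boundaryFn {c : ℝ} (hc : 0 < c) : IsCompact {p | c ≤ boundaryFn p} := by
  refine (isCompact_dE_le 0 (1 / c)).of_isClosed_subset
    (isClosed_le continuous_const contDiff_boundaryFn.continuous) fun p hp => ?_
  have hcp : c * (1 + sqE p) ≤ p.1 := (le_div_iff₀ (one_add_sqE_pos p)).1 hp
  have hfst : p.1 ≤ nE p := (le_abs_self _).trans (abs_fst_le_nE p)
  rw [← nE_sq] at hcp
  rw [Set.mem_ofPred_eq, dE, sub_zero, le_div_iff₀ hc]
  nlinarith [nE_nonneg p]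

lemma integrable_one_div_one_add_sqE_sq : Integrable fun p : ℝ × ℝ => 1 / (1 + sqE p) ^ 2 := by
  have hcont : Continuous fun p : ℝ × ℝ => 1 / (1 + sqE p) ^ 2 :=
    continuous_const.div (by unfold sqE; fun_prop) fun p => (pow_pos (one_add_sqE_pos p) 2).ne'
  have hprod := integrable_inv_one_add_sq.mul_prod integrable_inv_one_add_sq
  rw [← Measure.volume_eq_prod] at hprod
  refine hprod.mono' hcont.aestronglyMeasurable (.of_forall fun p => ?_)
  have hq := one_add_sqE_pos p
  rw [Real.norm_of_nonneg (by positivity), ← mul_inv, one_div]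
  refine inv_anti₀ (by positivity) ?_
  unfold sqE
  nlinarith [sq_nonneg (p.1 * p.2), sq_nonneg p.1, sq_nonneg p.2, sq_nonneg (p.1 ^ 2),
    sq_nonneg (p.2 ^ 2)]

end BoundaryFn

section ExhaustionCutoff

variable {N : ℝ} {p : ℝ × ℝ}

lemma contDiff_exhaustionCutoff (N : ℝ) : ContDiff ℝ 1 (exhaustionCutoff N) :=
  Real.smoothTransition.contDiff.comp ((contDiff_const.mul contDiff_boundaryFn).sub contDiff_const)

lemma exhaustionCutoff_eq_one (h : 2 ≤ N * boundaryFn p) : exhaustionCutoff N p = 1 :=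
  Real.smoothTransition.one_of_one_le (by linarith)

lemma abs_exhaustionCutoff_le_one (N : ℝ) (p : ℝ × ℝ) : |exhaustionCutoff N p| ≤ 1 :=
  (abs_of_nonneg (Real.smoothTransition.nonneg _)).trans_le (Real.smoothTransition.le_one _)

lemma gradR_exhaustionCutoff (N : ℝ) (p : ℝ × ℝ) : gradR (exhaustionCutoff N) p =
    (deriv Real.smoothTransition (N * boundaryFn p - 1) * N) • gradR boundaryFn p := by
  have h := (hasDerivAt_smoothTransition (N * boundaryFn p - 1)).comp_hasFDerivAt p
    (((contDiff_boundaryFn.differentiable one_ne_zero p).hasFDerivAt.const_mul N).sub_const 1)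
  ext <;> simp only [gradR, pdRr, pdZr, Prod.smul_fst, Prod.smul_snd, smul_eq_mul, mul_assoc]
  exacts [congrArg (· (1, 0)) h.fderiv, congrArg (· (0, 1)) h.fderiv]

lemma gradR_exhaustionCutoff_eq_zero (h : 2 ≤ N * boundaryFn p) :
    gradR (exhaustionCutoff N) p = 0 := by
  rw [gradR_exhaustionCutoff, deriv_smoothTransition_eq_zero (.inr (by linarith)), zero_mul,
    zero_smul]

lemma nE_gradR_exhaustionCutoff_le {B : ℝ} (hB : ∀ x, |deriv Real.smoothTransition x| ≤ B)
    (hN : 0 ≤ N) (hp : p ∈ Hp) (h : N * boundaryFn p ≤ 2) :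
    nE (gradR (exhaustionCutoff N) p) ≤ B * (2 / p.1) := by
  have hp0 : 0 < p.1 := hp
  have hq := one_add_sqE_pos p
  rw [gradR_exhaustionCutoff, nE_smul, abs_mul, abs_of_nonneg hN, mul_assoc]
  refine mul_le_mul (hB _) ?_ (mul_nonneg hN (nE_nonneg _)) ((abs_nonneg _).trans (hB 0))
  calc N * nE (gradR boundaryFn p) ≤ N * (1 / (1 + sqE p)) :=
        mul_le_mul_of_nonneg_left (nE_gradR_boundaryFn_le p) hN
    _ = N * boundaryFn p / p.1 := by rw [boundaryFn]; field_simp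
    _ ≤ 2 / p.1 := div_le_div_of_nonneg_right h hp0.le

lemma tsupport_exhaustionCutoff_subset (hN : 0 < N) :
    tsupport (exhaustionCutoff N) ⊆ {p | 1 / N ≤ boundaryFn p} := by
  refine closure_minimal (fun p hp => ?_) (isCompact_le_boundaryFn (one_div_pos.2 hN)).isClosed
  rw [Set.mem_ofPred_eq, div_le_iff₀' hN]
  by_contra! h
  exact hp (Real.smoothTransition.zero_of_nonpos (by linarith))

lemma tsupport_exhaustionCutoff_subset_Hp (hN : 0 < N) : tsupport (exhaustionCutoff N) ⊆ Hp :=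
  fun _ hp => boundaryFn_pos_iff.1
    ((one_div_pos.2 hN).trans_le (tsupport_exhaustionCutoff_subset hN hp))

lemma hasCompactSupport_exhaustionCutoff (hN : 0 < N) : HasCompactSupport (exhaustionCutoff N) :=
  (isCompact_le_boundaryFn (one_div_pos.2 hN)).of_isClosed_subset (isClosed_tsupport _)
    (tsupport_exhaustionCutoff_subset hN)

lemma eventually_two_le_mul_boundaryFn (hp : p ∈ Hp) : ∀ᶠ N : ℝ in atTop, 2 ≤ N * boundaryFn p :=
  (tendsto_id.atTop_mul_const (boundaryFn_pos_iff.2 hp)).eventually_ge_atTop 2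

end ExhaustionCutoff

section HalfPlane

variable {W : ℝ × ℝ → ℝ × ℝ} {C : ℝ}

lemma measurableSet_Hp : MeasurableSet Hp := isOpen_Hp.measurableSet

lemma tendsto_setIntegral_exhaustionCutoff_mul {f : ℝ × ℝ → ℝ} (hf : IntegrableOn f Hp) :
    Tendsto (fun N => ∫ p in Hp, exhaustionCutoff N p * f p) atTop (𝓝 (∫ p in Hp, f p)) := by
  refine tendsto_integral_filter_of_dominated_convergence (fun p => |f p|)
    (.of_forall fun N => (contDiff_exhaustionCutoff N).continuous.aestronglyMeasurable.mul
      hf.aestronglyMeasurable)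
    (.of_forall fun N => .of_forall fun p => ?_) hf.abs ?_
  · rw [norm_mul]
    exact mul_le_of_le_one_left (abs_nonneg _) (abs_exhaustionCutoff_le_one N p)
  · filter_upwards [ae_restrict_mem measurableSet_Hp] with p hp
    refine tendsto_nhds_of_eventually_eq ?_
    filter_upwards [eventually_two_le_mul_boundaryFn hp] with N hN
    rw [exhaustionCutoff_eq_one hN, one_mul]

lemma abs_dotE_gradR_exhaustionCutoff_le {B N : ℝ} {p : ℝ × ℝ}
    (hB : ∀ x, |deriv Real.smoothTransition x| ≤ B) (hN : 0 ≤ N) (hNC : 2 * C ≤ N) (hp : p ∈ Hp)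
    (hbound : C * boundaryFn p ≤ 1 → nE (W p) ≤ C * p.1 / (1 + sqE p) ^ 2) :
    |dotE (gradR (exhaustionCutoff N) p) (W p)| ≤ 2 * |B| * |C| * (1 / (1 + sqE p) ^ 2) := by
  have hp0 : 0 < p.1 := hp
  have hq := one_add_sqE_pos p
  rcases le_total 2 (N * boundaryFn p) with h | h
  · rw [gradR_exhaustionCutoff_eq_zero h]
    simp only [dotE, Prod.fst_zero, Prod.snd_zero, zero_mul, add_zero, abs_zero]
    positivity
  · have hCp : C * boundaryFn p ≤ 1 := by nlinarith [boundaryFn_pos_iff.2 hp]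
    calc _ ≤ nE (gradR (exhaustionCutoff N) p) * nE (W p) := abs_dotE_le _ _
      _ ≤ B * (2 / p.1) * (C * p.1 / (1 + sqE p) ^ 2) :=
        mul_le_mul (nE_gradR_exhaustionCutoff_le hB hN hp h) (hbound hCp) (nE_nonneg _)
          (mul_nonneg ((abs_nonneg _).trans (hB 0)) (by positivity))
      _ = 2 * (B * C) * (1 / (1 + sqE p) ^ 2) := by field_simp
      _ ≤ 2 * |B * C| * (1 / (1 + sqE p) ^ 2) := by gcongr; exact le_abs_self _
      _ = _ := by rw [abs_mul, mul_assoc 2 |B|]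

lemma tendsto_setIntegral_gradR_exhaustionCutoff (hW : ContinuousOn W Hp)
    (hbound : ∀ p ∈ Hp, C * boundaryFn p ≤ 1 → nE (W p) ≤ C * p.1 / (1 + sqE p) ^ 2) :
    Tendsto (fun N => ∫ p in Hp, dotE (gradR (exhaustionCutoff N) p) (W p)) atTop (𝓝 0) := by
  obtain ⟨B, hB⟩ := exists_deriv_smoothTransition_le
  rw [← integral_zero (ℝ × ℝ) ℝ (μ := volume.restrict Hp)]
  refine tendsto_integral_filter_of_dominated_convergence
    (fun p => 2 * |B| * |C| * (1 / (1 + sqE p) ^ 2)) (.of_forall fun N => ?_) ?_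
    (integrable_one_div_one_add_sqE_sq.const_mul _).integrableOn ?_
  · have hgrad : Continuous (gradR (exhaustionCutoff N)) :=
      have hcont := (contDiff_exhaustionCutoff N).continuous_fderiv one_ne_zero
      (hcont.clm_apply continuous_const).prodMk (hcont.clm_apply continuous_const)
    exact (continuousOn_dotE hgrad.continuousOn hW).aestronglyMeasurable measurableSet_Hp
  · filter_upwards [eventually_ge_atTop (2 * C), eventually_ge_atTop 0] with N hNC hN
    filter_upwards [ae_restrict_mem measurableSet_Hp] with p hp
    exact abs_dotE_gradR_exhaustionCutoff_le hB hN hNC hp (hbound p hp)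
  · filter_upwards [ae_restrict_mem measurableSet_Hp] with p hp
    refine tendsto_nhds_of_eventually_eq ?_
    filter_upwards [eventually_two_le_mul_boundaryFn hp] with N hN
    simp only [gradR_exhaustionCutoff_eq_zero hN, dotE, Prod.fst_zero, Prod.snd_zero, zero_mul,
      add_zero]

lemma setIntegral_Hp_divE_eq_zero (hW : ∀ p ∈ Hp, ContDiffAt ℝ 1 W p)
    (hbound : ∀ p ∈ Hp, C * boundaryFn p ≤ 1 → nE (W p) ≤ C * p.1 / (1 + sqE p) ^ 2)
    (hdiv : IntegrableOn (divE W) Hp) : ∫ p in Hp, divE W p = 0 := by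
  have hcont : ContinuousOn W Hp := fun p hp => (hW p hp).continuousAt.continuousWithinAt
  have hibp : ∀ᶠ N : ℝ in atTop, ∫ p in Hp, exhaustionCutoff N p * divE W p =
      -∫ p in Hp, dotE (gradR (exhaustionCutoff N) p) (W p) := by
    filter_upwards [eventually_gt_atTop 0] with N hN
    have hsupp := tsupport_exhaustionCutoff_subset_Hp hN
    rw [setIntegral_eq_integral_of_forall_compl_eq_zero fun p hp => ?_,
      setIntegral_eq_integral_of_forall_compl_eq_zero fun p hp => ?_]
    · exact integral_mul_divE (contDiff_exhaustionCutoff N) (hasCompactSupport_exhaustionCutoff hN)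
        fun p hp => hW p (hsupp hp)
    · simp only [gradR, pdRr, pdZr, fderiv_of_notMem_tsupport ℝ fun h => hp (hsupp h), zero_apply,
        dotE, zero_mul, add_zero]
    · rw [image_eq_zero_of_notMem_tsupport fun h => hp (hsupp h), zero_mul]
  have hlim := (tendsto_setIntegral_gradR_exhaustionCutoff hcont hbound).neg
  rw [neg_zero] at hlim
  exact tendsto_nhds_unique (tendsto_setIntegral_exhaustionCutoff_mul hdiv)
    (hlim.congr' (hibp.mono fun _ h => h.symm))

end HalfPlane

/-! ### Decay at the axis and at infinity -/

section Decay

variable {a : ℝ × ℝ}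

lemma exists_forall_one_le_sqDistRatio (ha : 0 < a.1) : ∃ M > 0, ∀ p ∈ Hp, M * boundaryFn p ≤ 1 →
    1 ≤ sqDistRatio a p ∧ 1 ≤ M * boundaryFn p * sqDistRatio a p := by
  set B := 2 + (1 + 2 * a.2 ^ 2) / a.1 ^ 2
  have hB2 : 2 ≤ B := le_add_of_nonneg_right (by positivity)
  have hBa : 1 + 2 * a.2 ^ 2 ≤ B * a.1 ^ 2 := by
    rw [add_mul, div_mul_cancel₀ _ (by positivity)]
    exact le_add_of_nonneg_left (by positivity)
  refine ⟨8 * B * a.1, by positivity, fun p (hp : 0 < p.1) hfar => ?_⟩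
  have hq : 1 + sqE p ≤ B * ((p.1 + a.1) ^ 2 + (p.2 - a.2) ^ 2) := by
    have hz : p.2 ^ 2 ≤ 2 * (p.2 - a.2) ^ 2 + 2 * a.2 ^ 2 := by
      nlinarith [sq_nonneg (p.2 - 2 * a.2)]
    have hBz := mul_le_mul_of_nonneg_right hB2 (sq_nonneg (p.2 - a.2))
    have hBr := mul_le_mul_of_nonneg_right hB2 (sq_nonneg p.1)
    have hmix : 0 ≤ B * (2 * p.1 * a.1) := by positivity
    unfold sqE
    nlinarith [sq_nonneg p.1]
  have hone_add : 2 ≤ 8 * B * a.1 * boundaryFn p * (1 + sqDistRatio a p) := by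
    calc 2 ≤ 2 * (B * ((p.1 + a.1) ^ 2 + (p.2 - a.2) ^ 2)) / (1 + sqE p) := by
          rw [le_div_iff₀ (one_add_sqE_pos p)]
          linarith
      _ = _ := by
          unfold boundaryFn sqDistRatio
          simp only [sqE, Prod.fst_sub, Prod.snd_sub]
          field_simp
          ring
  have hh : 0 ≤ sqDistRatio a p :=
    div_nonneg (add_nonneg (sq_nonneg _) (sq_nonneg _)) (by positivity)
  have h1 : 1 ≤ sqDistRatio a p := by
    nlinarith [mul_le_mul_of_nonneg_right hfar (add_nonneg one_pos.le hh)]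
  exact ⟨h1, by nlinarith⟩

lemma exists_ringStream_ringField_decay (ha : 0 < a.1) : ∃ M > 0, ∀ p ∈ Hp,
    M * boundaryFn p ≤ 1 → p ≠ a ∧ |ringStream a p| ≤ M * √(p.1 * boundaryFn p ^ 3) ∧
      p.1 ^ 2 * nE (ringField a p) ≤ M * √(p.1 * boundaryFn p ^ 3) := by
  obtain ⟨M, hM, hfar⟩ := exists_forall_one_le_sqDistRatio ha
  refine ⟨M + 7 * √(a.1 * M ^ 3), by positivity, fun p (hp : 0 < p.1) hp' => ?_⟩
  have hv : 0 < boundaryFn p := boundaryFn_pos_iff.2 hp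
  obtain ⟨h1, hMh⟩ := hfar p hp (by
    nlinarith [mul_nonneg (Real.sqrt_nonneg (a.1 * M ^ 3)) hv.le])
  have hh : 0 < sqDistRatio a p := one_pos.trans_le h1
  have hpa : p ≠ a := by
    rintro rfl
    simp [sqDistRatio, sqE] at hh
  have hpow : 1 / √(sqDistRatio a p) ^ 3 ≤ √((M * boundaryFn p) ^ 3) := by
    refine Real.le_sqrt_of_sq_le ?_
    rw [div_pow, ← pow_mul, pow_mul' _ 3 2, Real.sq_sqrt hh.le, div_le_iff₀ (by positivity),
      ← mul_pow, one_pow]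
    exact one_le_pow₀ hMh
  have hbound : √(p.1 * a.1) * (7 / √(sqDistRatio a p) ^ 3) ≤
      (M + 7 * √(a.1 * M ^ 3)) * √(p.1 * boundaryFn p ^ 3) := by
    calc _ = 7 * (√(p.1 * a.1) * (1 / √(sqDistRatio a p) ^ 3)) := by ring
      _ ≤ 7 * (√(p.1 * a.1) * √((M * boundaryFn p) ^ 3)) := by gcongr
      _ = 7 * √(a.1 * M ^ 3) * √(p.1 * boundaryFn p ^ 3) := by
        rw [← Real.sqrt_mul (by positivity), mul_assoc 7 (√(a.1 * M ^ 3)),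
          ← Real.sqrt_mul (by positivity)]
        ring_nf
      _ ≤ _ := by gcongr; linarith
  refine ⟨hpa, le_trans ?_ hbound, (sq_mul_nE_ringField_le_of_one_le ha hp hpa h1).trans hbound⟩
  have hK := ringKernel_nonneg hh
  rw [ringStream, abs_of_nonneg (by positivity)]
  gcongr
  exact (ringKernel_le_two_div_sqrt_pow_three hh).trans (by gcongr; norm_num)

variable {ι : Type*} [Fintype ι] {a : ι → ℝ × ℝ}

lemma exists_totalStream_totalField_decay (ha : ∀ i, a i ∈ Hp) : ∃ S > 0, ∀ p ∈ Hp,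
    S * boundaryFn p ≤ 1 → p ∈ puncturedHp a ∧
      |totalStream a p| ≤ S * √(p.1 * boundaryFn p ^ 3) ∧
      p.1 ^ 2 * nE (totalField a p) ≤ S * √(p.1 * boundaryFn p ^ 3) := by
  choose M hM h using fun i => exists_ringStream_ringField_decay (ha i)
  refine ⟨1 + ∑ i, M i, add_pos_of_pos_of_nonneg one_pos (Finset.sum_nonneg fun i _ => (hM i).le),
    fun p hp hfar => ?_⟩
  have hv : 0 < boundaryFn p := boundaryFn_pos_iff.2 hp
  have hMi (i) : M i * boundaryFn p ≤ 1 := by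
    have := Finset.single_le_sum (fun j _ => (hM j).le) (Finset.mem_univ i)
    exact (mul_le_mul_of_nonneg_right (by linarith) hv.le).trans hfar
  have hsum : ∑ i, M i * √(p.1 * boundaryFn p ^ 3) ≤
      (1 + ∑ i, M i) * √(p.1 * boundaryFn p ^ 3) := by
    rw [← Finset.sum_mul]
    exact mul_le_mul_of_nonneg_right (by linarith) (Real.sqrt_nonneg _)
  refine ⟨⟨hp, fun i => (h i p hp (hMi i)).1⟩, ?_, ?_⟩
  · exact ((Finset.abs_sum_le_sum_abs _ _).trans
      (Finset.sum_le_sum fun i _ => (h i p hp (hMi i)).2.1)).trans hsum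
  · refine le_trans ?_ hsum
    refine (mul_le_mul_of_nonneg_left (nE_sum_le _ _) (sq_nonneg p.1)).trans ?_
    rw [Finset.mul_sum]
    exact Finset.sum_le_sum fun i _ => (h i p hp (hMi i)).2.2

lemma exists_energyDensity_decay (ha : ∀ i, a i ∈ Hp) : ∃ C > 0, ∀ p ∈ Hp,
    C * boundaryFn p ≤ 1 → p ∈ puncturedHp a ∧ energyDensity a p ≤ C / (1 + sqE p) ^ 2 ∧
      nE (totalStream a p • totalField a p) ≤ C * p.1 / (1 + sqE p) ^ 2 := by
  obtain ⟨S, hS, h⟩ := exists_totalStream_totalField_decay ha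
  refine ⟨S + S ^ 2, by positivity, fun p (hp : 0 < p.1) hfar => ?_⟩
  have hv : 0 < boundaryFn p := boundaryFn_pos_iff.2 hp
  have hq := one_add_sqE_pos p
  have hF := nE_nonneg (totalField a p)
  obtain ⟨hmem, hstream, hfield⟩ := h p hp (by nlinarith [sq_nonneg S])
  set y := √(p.1 * boundaryFn p ^ 3)
  have hy : (S * y) * (S * y) ≤ p.1 ^ 3 * ((S + S ^ 2) / (1 + sqE p) ^ 2) := by
    have hv1 : boundaryFn p ≤ 1 := by
      refine (div_le_one hq).2 ?_
      unfold sqE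
      nlinarith [sq_nonneg (p.1 - 1), sq_nonneg p.2]
    calc (S * y) * (S * y) = S ^ 2 * y ^ 2 := by ring
      _ = S ^ 2 * (p.1 * boundaryFn p ^ 2) * boundaryFn p := by
        rw [Real.sq_sqrt (by positivity)]
        ring
      _ ≤ (S + S ^ 2) * (p.1 * boundaryFn p ^ 2) * 1 := by gcongr; linarith
      _ = _ := by unfold boundaryFn; field_simp
  refine ⟨hmem, le_of_mul_le_mul_left ?_ (pow_pos hp 3), le_of_mul_le_mul_left ?_ (pow_pos hp 2)⟩
  · calc p.1 ^ 3 * energyDensity a p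
        = (p.1 ^ 2 * nE (totalField a p)) * (p.1 ^ 2 * nE (totalField a p)) := by
          rw [energyDensity, ← nE_sq]
          ring
      _ ≤ (S * y) * (S * y) := by gcongr
      _ ≤ _ := hy
  · calc p.1 ^ 2 * nE (totalStream a p • totalField a p)
        = |totalStream a p| * (p.1 ^ 2 * nE (totalField a p)) := by
          rw [nE_smul]
          ring
      _ ≤ (S * y) * (S * y) := by gcongr
      _ ≤ p.1 ^ 3 * ((S + S ^ 2) / (1 + sqE p) ^ 2) := hy
      _ = _ := by ring

end Decay

/-! ### The energy identity -/

/-- Cutoff which vanishes on the disks of radius `s` about the points `a i` and equals `1` off the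
disks of radius `t`, provided the latter are disjoint. -/
def coreCutoff {ι : Type*} [Fintype ι] (a : ι → ℝ × ℝ) (s t : ℝ) (p : ℝ × ℝ) : ℝ :=
  1 - ∑ i, (1 - radialCutoff (a i) s t p)

section CoreCutoff

variable {ι : Type*} [Fintype ι] {a : ι → ℝ × ℝ} {p : ℝ × ℝ} {s t d : ℝ}

lemma contDiff_coreCutoff (a : ι → ℝ × ℝ) (s t : ℝ) : ContDiff ℝ 1 (coreCutoff a s t) :=
  contDiff_const.sub (ContDiff.sum fun i _ => contDiff_const.sub (contDiff_radialCutoff (a i) s t))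

lemma gradR_coreCutoff (a : ι → ℝ × ℝ) (s t : ℝ) (p : ℝ × ℝ) :
    gradR (coreCutoff a s t) p = ∑ i, radialWeight (a i) s t p • (p - a i) := by
  have hdiff (i) := (contDiff_radialCutoff (a i) s t).differentiable one_ne_zero p
  have hneg : gradR (coreCutoff a s t) p = gradR (fun q => ∑ i, radialCutoff (a i) s t q) p := by
    have : coreCutoff a s t = fun q =>
        (1 - (Finset.univ : Finset ι).card • (1 : ℝ)) + ∑ i, radialCutoff (a i) s t q := by
      ext q
      simp only [coreCutoff, Finset.sum_sub_distrib, Finset.sum_const]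
      ring
    simp only [this, gradR, pdRr, pdZr, fderiv_const_add]
  rw [hneg, gradR_sum fun i _ => hdiff i]
  simp only [gradR_radialCutoff]

lemma coreCutoff_eq_one (hs : 0 ≤ s) (hst : s < t) (hp : ∀ i, t ≤ dE p (a i)) :
    coreCutoff a s t p = 1 := by
  simp only [coreCutoff, radialCutoff_eq_one hs hst (hp _), sub_self, Finset.sum_const_zero,
    sub_zero]

end CoreCutoff

lemma mem_puncturedHp_or_exists_eq {ι : Type*} {a : ι → ℝ × ℝ} {p : ℝ × ℝ} (hp : p ∈ Hp) :
    p ∈ puncturedHp a ∨ ∃ i, p = a i := by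
  by_contra! h
  exact h.1 ⟨hp, h.2⟩

namespace IsSeparated

variable {ι : Type*} {a : ι → ℝ × ℝ} {d : ℝ} (hd : IsSeparated a d) {p : ℝ × ℝ} {s t : ℝ}
include hd

lemma mem_puncturedHp_of_mem_closedAnnulus (hs : 0 < s) (ht : t ≤ d) {i : ι}
    (hp : p ∈ closedAnnulus (a i) s t) : p ∈ puncturedHp a :=
  hd.mem_puncturedHp (ne_of_mem_closedAnnulus hs hp) (hp.2.trans ht)

lemma radialWeight_eq_zero_of_notMem_puncturedHp (hs : 0 < s) (hst : s < t) (ht : t ≤ d)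
    (hp : p ∉ puncturedHp a) (i : ι) :
    radialWeight (a i) s t p = 0 :=
  radialWeight_eq_zero hs.le hst fun h => hp (hd.mem_puncturedHp_of_mem_closedAnnulus hs ht h)

variable [Fintype ι]

lemma coreCutoff_eq_radialCutoff (hs : 0 ≤ s) (hst : s < t) (ht : t ≤ d) {i : ι}
    (hp : dE p (a i) ≤ t) : coreCutoff a s t p = radialCutoff (a i) s t p := by
  rw [coreCutoff, Finset.sum_eq_single i _ fun h => absurd (Finset.mem_univ i) h, sub_sub_cancel]
  intro j _ hj
  have := hd.three_mul_le_dE hj.symm (hp.trans ht)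
  rw [radialCutoff_eq_one hs hst (by linarith [hd.pos]), sub_self]

lemma coreCutoff_eq_zero (hs : 0 ≤ s) (hst : s < t) (ht : t ≤ d) {i : ι} (hp : dE p (a i) ≤ s) :
    coreCutoff a s t p = 0 := by
  rw [hd.coreCutoff_eq_radialCutoff hs hst ht (hp.trans hst.le), radialCutoff_eq_zero hs hst hp]

lemma coreCutoff_mem_Icc (hs : 0 ≤ s) (hst : s < t) (ht : t ≤ d) (p : ℝ × ℝ) :
    coreCutoff a s t p ∈ Set.Icc 0 1 := by
  by_cases! h : ∀ i, t ≤ dE p (a i)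
  · simp only [coreCutoff_eq_one hs hst h, Set.mem_Icc, zero_le_one, le_refl, and_self]
  · obtain ⟨i, hi⟩ := h
    rw [hd.coreCutoff_eq_radialCutoff hs hst ht hi.le]
    exact ⟨radialCutoff_nonneg _ _ _ _, radialCutoff_le_one _ _ _ _⟩

variable (hs : 0 < s) (hst : s < t) (ht : t ≤ d)
include hs hst ht

lemma coreCutoff_eventuallyEq_zero (i : ι) : coreCutoff a s t =ᶠ[𝓝 (a i)] 0 := by
  filter_upwards [(isOpen_lt (continuous_dE (a i)) continuous_const).mem_nhds
    (show dE (a i) (a i) < s by rwa [dE_self])] with q hq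
  exact hd.coreCutoff_eq_zero hs.le hst ht (le_of_lt hq)

lemma contDiffAt_coreCutoff_smul {W : ℝ × ℝ → ℝ × ℝ} (hW : ∀ q ∈ puncturedHp a, ContDiffAt ℝ 1 W q)
    (hp : p ∈ Hp) : ContDiffAt ℝ 1 (fun q => coreCutoff a s t q • W q) p := by
  rcases mem_puncturedHp_or_exists_eq (a := a) hp with hp | ⟨i, rfl⟩
  · exact (contDiff_coreCutoff a s t).contDiffAt.smul (hW p hp)
  · refine contDiffAt_const (c := (0 : ℝ × ℝ)) |>.congr_of_eventuallyEq ?_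
    filter_upwards [hd.coreCutoff_eventuallyEq_zero hs hst ht i] with q hq
    rw [hq, Pi.zero_apply, zero_smul]

lemma continuousOn_coreCutoff_mul_energyDensity :
    ContinuousOn (fun p => coreCutoff a s t p * energyDensity a p) Hp := by
  intro p hp
  have hX := (contDiff_coreCutoff a s t).continuous.continuousAt (x := p)
  refine ContinuousAt.continuousWithinAt ?_
  rcases mem_puncturedHp_or_exists_eq (a := a) hp with hp | ⟨i, rfl⟩
  · have hF := (contDiffAt_totalField hd.mem_Hp hp).continuousAt
    exact hX.mul (continuousAt_fst.mul ((hF.fst.pow 2).add (hF.snd.pow 2)))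
  · refine continuousAt_const (y := (0 : ℝ)) |>.congr ?_
    filter_upwards [hd.coreCutoff_eventuallyEq_zero hs hst ht i] with q hq
    rw [hq, Pi.zero_apply, zero_mul]

lemma integrableOn_coreCutoff_mul_energyDensity :
    IntegrableOn (fun p => coreCutoff a s t p * energyDensity a p) Hp := by
  obtain ⟨C, hC, hdecay⟩ := exists_energyDensity_decay hd.mem_Hp
  have hcont := hd.continuousOn_coreCutoff_mul_energyDensity hs hst ht
  have hK := isCompact_le_boundaryFn (one_div_pos.2 hC)
  have hKH : {p | 1 / C ≤ boundaryFn p} ⊆ Hp := fun p hp =>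
    boundaryFn_pos_iff.1 ((one_div_pos.2 hC).trans_le hp)
  have hm : MeasurableSet (Hp \ {p | 1 / C ≤ boundaryFn p}) :=
    measurableSet_Hp.diff hK.measurableSet
  rw [← Set.union_sdiff_cancel hKH]
  refine ((hcont.mono hKH).integrableOn_compact hK).union ?_
  refine Integrable.mono' (integrable_one_div_one_add_sqE_sq.const_mul C).integrableOn
    ((hcont.mono Set.sdiff_subset).aestronglyMeasurable hm) ?_
  filter_upwards [ae_restrict_mem hm] with p hp
  have hX := hd.coreCutoff_mem_Icc hs.le hst ht p
  have hfar : C * boundaryFn p ≤ 1 := ((lt_div_iff₀' hC).1 (not_le.1 hp.2)).le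
  have henergy := energyDensity_nonneg (a := a) hp.1
  rw [Real.norm_of_nonneg (mul_nonneg hX.1 henergy), mul_one_div]
  exact (mul_le_of_le_one_left henergy hX.2).trans (hdecay p hp.1 hfar).2.1

lemma integrable_radialWeight_mul_flux_totalField (i : ι) : Integrable fun p =>
    radialWeight (a i) s t p * (totalStream a p * dotE (totalField a p) (p - a i)) := by
  have hmem (p) (hp : p ∈ closedAnnulus (a i) s t) :=
    hd.mem_puncturedHp_of_mem_closedAnnulus hs ht hp
  refine integrable_radialWeight_mul hs.le hst (ContinuousOn.mul (fun p hp => ?_)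
    (continuousOn_dotE (fun p hp => ?_) (by fun_prop)))
  · exact (contDiffAt_totalStream hd.mem_Hp (hmem p hp)).continuousAt.continuousWithinAt
  · exact (contDiffAt_totalField hd.mem_Hp (hmem p hp)).continuousAt.continuousWithinAt

lemma divE_coreCutoff_smul (hp : p ∈ Hp) :
    divE (fun q => coreCutoff a s t q • (totalStream a q • totalField a q)) p =
      coreCutoff a s t p * energyDensity a p + ∑ i, radialWeight (a i) s t p *
        (totalStream a p * dotE (totalField a p) (p - a i)) := by
  rcases mem_puncturedHp_or_exists_eq (a := a) hp with hp | ⟨i, rfl⟩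
  · have hW : DifferentiableAt ℝ (fun q => totalStream a q • totalField a q) p :=
      ((contDiffAt_totalStream hd.mem_Hp hp).smul
        (contDiffAt_totalField hd.mem_Hp hp)).differentiableAt one_ne_zero
    rw [divE_smul ((contDiff_coreCutoff a s t).differentiable one_ne_zero p) hW,
      divE_totalStream_smul_totalField hd.mem_Hp hp, gradR_coreCutoff, dotE_sum_left]
    congr 1
    refine Finset.sum_congr rfl fun i _ => ?_
    rw [dotE_smul_left, dotE_smul_right]
    simp only [dotE, mul_comm]
  · have hzero := hd.coreCutoff_eventuallyEq_zero hs hst ht i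
    have hdiv :
        divE (fun q => coreCutoff a s t q • (totalStream a q • totalField a q)) (a i) = 0 := by
      rw [divE_congr (W := fun _ => 0) (hzero.mono fun q hq => by
        rw [hq, Pi.zero_apply, zero_smul])]
      simp [divE, pdRr, pdZr]
    have hw := hd.radialWeight_eq_zero_of_notMem_puncturedHp hs hst ht fun h => h.2 i rfl
    rw [hdiv, hzero.eq_of_nhds, Finset.sum_eq_zero fun j _ => by rw [hw j, zero_mul]]
    simp

/-- Integrating `X |j|²`, where `X` is the cutoff and `j` the field, by parts: the boundary is the
family of annuli on which `X` varies. -/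
lemma setIntegral_coreCutoff_mul_energyDensity :
    ∫ p in Hp, coreCutoff a s t p * energyDensity a p = -∑ i, ∫ p, radialWeight (a i) s t p *
      (totalStream a p * dotE (totalField a p) (p - a i)) := by
  obtain ⟨C, -, hdecay⟩ := exists_energyDensity_decay hd.mem_Hp
  have henergy := hd.integrableOn_coreCutoff_mul_energyDensity hs hst ht
  have hflux := hd.integrable_radialWeight_mul_flux_totalField hs hst ht
  have hfluxes := (integrable_finsetSum Finset.univ fun i _ => hflux i).integrableOn (s := Hp)
  have hdiv (p) (hp : p ∈ Hp) := hd.divE_coreCutoff_smul hs hst ht hp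
  have hzero :
      ∫ p in Hp, divE (fun q => coreCutoff a s t q • (totalStream a q • totalField a q)) p = 0 := by
    refine setIntegral_Hp_divE_eq_zero (C := C) (fun p hp => ?_) (fun p hp hfar => ?_)
      ((henergy.add hfluxes).congr_fun (fun p hp => (hdiv p hp).symm) measurableSet_Hp)
    · exact hd.contDiffAt_coreCutoff_smul hs hst ht (fun q hq =>
        (contDiffAt_totalStream hd.mem_Hp hq).smul (contDiffAt_totalField hd.mem_Hp hq)) hp
    · have hX := hd.coreCutoff_mem_Icc hs.le hst ht p
      rw [nE_smul, abs_of_nonneg hX.1]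
      exact (mul_le_of_le_one_left (nE_nonneg _) hX.2).trans (hdecay p hp hfar).2.2
  have hset : ∫ p in Hp, ∑ i, radialWeight (a i) s t p *
      (totalStream a p * dotE (totalField a p) (p - a i)) =
      ∑ i, ∫ p, radialWeight (a i) s t p * (totalStream a p * dotE (totalField a p) (p - a i)) := by
    rw [setIntegral_eq_integral_of_forall_compl_eq_zero fun p hp => ?_,
      integral_finsetSum _ fun i _ => hflux i]
    refine Finset.sum_eq_zero fun i _ => ?_
    rw [hd.radialWeight_eq_zero_of_notMem_puncturedHp hs hst ht fun h => hp h.1, zero_mul]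
  rw [setIntegral_congr_fun measurableSet_Hp hdiv, integral_add henergy hfluxes, hset] at hzero
  linarith

end IsSeparated

/-! ### Estimates near the cores -/

lemma abs_log_le_two_mul_abs_sub_one {x : ℝ} (hx : |x - 1| ≤ 1 / 2) :
    |Real.log x| ≤ 2 * |x - 1| := by
  have hlow := (abs_le.1 hx).1
  have hpos : 0 < x := by linarith
  have hupper := Real.log_le_sub_one_of_pos hpos
  have hlower : (x - 1) / x ≤ Real.log x := by
    have := Real.one_sub_inv_le_log_of_pos hpos
    rwa [sub_div, div_self hpos.ne', one_div]
  have hquot : |(x - 1) / x| ≤ 2 * |x - 1| := by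
    rw [abs_div, abs_of_pos hpos, div_le_iff₀ hpos]
    nlinarith [abs_nonneg (x - 1)]
  exact abs_le.2 ⟨(abs_le.1 hquot).1.trans hlower,
    by linarith [le_abs_self (x - 1), abs_nonneg (x - 1)]⟩

lemma two_le_neg_log {x : ℝ} (hx : 0 < x) (hx8 : x ≤ 1 / 8) : 2 ≤ -Real.log x := by
  have h8 : Real.log (1 / 8) = -(3 * Real.log 2) := by
    rw [one_div, Real.log_inv, show (8 : ℝ) = 2 ^ 3 by norm_num, Real.log_pow, Nat.cast_ofNat]
  linarith [Real.log_le_log hx hx8, Real.log_two_gt_d9]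

section NearRing

variable {a p : ℝ × ℝ} (ha : 0 < a.1)
include ha

lemma abs_sqrt_mul_fst_sub_fst_le (hp : 0 < p.1) : |√(p.1 * a.1) - a.1| ≤ dE p a := by
  have hsqrt := Real.sqrt_nonneg (p.1 * a.1)
  have hmul : |√(p.1 * a.1) - a.1| * (√(p.1 * a.1) + a.1) = |p.1 - a.1| * a.1 := by
    rw [← abs_of_nonneg (add_nonneg hsqrt ha.le), ← abs_mul, ← abs_of_pos ha, ← abs_mul,
      abs_of_pos ha]
    congr 1
    linear_combination Real.sq_sqrt (mul_pos hp ha).le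
  have hle : |√(p.1 * a.1) - a.1| ≤ |p.1 - a.1| := by
    refine le_of_mul_le_mul_right ?_ ha
    linarith [mul_nonneg (abs_nonneg (√(p.1 * a.1) - a.1)) hsqrt]
  exact hle.trans (abs_fst_le_nE (p - a))

lemma abs_sqrt_mul_fst_mul_log_le (hp : 0 < p.1) (hnear : dE p a ≤ a.1 / 8) :
    |√(p.1 * a.1) * Real.log (√(p.1 * a.1) / a.1)| ≤ 9 / 4 * dE p a := by
  have hWR := abs_sqrt_mul_fst_sub_fst_le ha hp
  set W := √(p.1 * a.1)
  have hW : 0 < W := by positivity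
  have hratio : |W / a.1 - 1| ≤ dE p a / a.1 := by
    rw [div_sub_one ha.ne', abs_div, abs_of_pos ha]
    gcongr
  have hlog := abs_log_le_two_mul_abs_sub_one
    (hratio.trans ((div_le_iff₀ ha).2 (by linarith)))
  calc |W * Real.log (W / a.1)| = W * |Real.log (W / a.1)| := by rw [abs_mul, abs_of_pos hW]
    _ ≤ 9 / 8 * a.1 * (2 * (dE p a / a.1)) := by
      gcongr
      · linarith [(abs_le.1 hWR).2]
      · linarith
    _ = 9 / 4 * dE p a := by field_simp; ring

lemma log_sqDistRatio (hp : 0 < p.1) (hpa : p ≠ a) :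
    Real.log (sqDistRatio a p) =
      -2 * (Real.log (√(p.1 * a.1) / a.1) + Real.log (a.1 / dE p a) + Real.log 2) := by
  have hσ : 0 < dE p a := dE_pos.2 hpa
  have hW : 0 < √(p.1 * a.1) := by positivity
  have hh := sqDistRatio_pos ha hp hpa
  have hprod := congrArg Real.log (two_mul_sqrt_mul_sqrt_sqDistRatio ha hp (p := p))
  rw [Real.log_mul (by positivity) (Real.sqrt_pos.2 hh).ne', Real.log_mul two_ne_zero hW.ne',
    Real.log_sqrt hh.le] at hprod
  rw [Real.log_div hW.ne' ha.ne', Real.log_div ha.ne' hσ.ne']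
  linarith

lemma sqDistRatio_le_one (hp : 0 < p.1) (hnear : dE p a ≤ a.1 / 2) : sqDistRatio a p ≤ 1 := by
  suffices √(sqDistRatio a p) ≤ 1 by simpa using (Real.sqrt_le_left zero_le_one).1 this
  refine le_of_mul_le_mul_left ?_ (show 0 < √(p.1 * a.1) by positivity)
  linarith [(abs_le.1 (abs_sqrt_mul_fst_sub_fst_le ha hp)).1,
    two_mul_sqrt_mul_sqrt_sqDistRatio ha hp (p := p)]

lemma abs_ringStream_sub_le (hpa : p ≠ a) (hnear : dE p a ≤ a.1 / 8) :
    |ringStream a p - a.1 * (Real.log (a.1 / dE p a) + 3 * Real.log 2 - 2)| ≤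
      dE p a * (6 + Real.log (a.1 / dE p a)) := by
  have hσ : 0 < dE p a := dE_pos.2 hpa
  have hp : 0 < p.1 := by
    have := (abs_le.1 ((abs_fst_le_nE (p - a)).trans hnear)).1
    rw [Prod.fst_sub] at this
    linarith
  have hWR := abs_sqrt_mul_fst_sub_fst_le ha hp
  have hscale := two_mul_sqrt_mul_sqrt_sqDistRatio ha hp
  have hloghh := log_sqDistRatio ha hp hpa
  set W := √(p.1 * a.1)
  set σ := dE p a
  set h := sqDistRatio a p
  have hW : 0 < W := by positivity
  have hhle : h ≤ 1 := sqDistRatio_le_one ha hp (by linarith)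
  have hkernel : |W * (ringKernel h - (2 * Real.log 2 - Real.log h / 2 - 2))| ≤ 5 / 2 * σ := by
    rw [abs_mul, abs_of_pos hW]
    have := mul_le_mul_of_nonneg_left
      (abs_ringKernel_sub_le (sqDistRatio_pos ha hp hpa) hhle) hW.le
    linarith
  have hlogW : |W * Real.log (W / a.1)| ≤ 9 / 4 * σ :=
    abs_sqrt_mul_fst_mul_log_le ha hp hnear
  have hlogR : 0 ≤ Real.log (a.1 / σ) := Real.log_nonneg ((one_le_div hσ).2 (by linarith))
  have hmain : |(W - a.1) * (Real.log (a.1 / σ) + 3 * Real.log 2 - 2)| ≤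
      σ * (Real.log (a.1 / σ) + 1) := by
    rw [abs_mul]
    gcongr
    rw [abs_le]
    constructor <;> linarith [Real.log_two_gt_d9, Real.log_two_lt_d9]
  have hsplit : ringStream a p - a.1 * (Real.log (a.1 / σ) + 3 * Real.log 2 - 2) =
      W * (ringKernel h - (2 * Real.log 2 - Real.log h / 2 - 2)) + W * Real.log (W / a.1) +
        (W - a.1) * (Real.log (a.1 / σ) + 3 * Real.log 2 - 2) := by
    rw [hloghh, ringStream]
    ring
  rw [hsplit]
  refine (abs_add_three _ _ _).trans ?_
  linarith

lemma abs_ringStream_sub_le_add (hpa : p ≠ a) (hnear : dE p a ≤ a.1 / 8) {ρ η : ℝ} (hρ : 0 < ρ)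
    (hη : η ≤ 1 / 2) (hp : |dE p a - ρ| ≤ ρ * η) :
    |ringStream a p - a.1 * (Real.log (a.1 / ρ) + 3 * Real.log 2 - 2)| ≤
      dE p a * (6 + Real.log (a.1 / dE p a)) + a.1 * (2 * η) := by
  have hσ : 0 < dE p a := dE_pos.2 hpa
  have hratio : |dE p a / ρ - 1| ≤ η := by
    rw [div_sub_one hρ.ne', abs_div, abs_of_pos hρ]
    exact (div_le_iff₀' hρ).2 hp
  have hlog : |Real.log (dE p a / ρ)| ≤ 2 * η :=
    (abs_log_le_two_mul_abs_sub_one (hratio.trans hη)).trans (by gcongr)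
  have hsplit : ringStream a p - a.1 * (Real.log (a.1 / ρ) + 3 * Real.log 2 - 2) =
      ringStream a p - a.1 * (Real.log (a.1 / dE p a) + 3 * Real.log 2 - 2) -
        a.1 * Real.log (dE p a / ρ) := by
    rw [Real.log_div ha.ne' hσ.ne', Real.log_div ha.ne' hρ.ne', Real.log_div hσ.ne' hρ.ne']
    ring
  rw [hsplit]
  refine (abs_sub _ _).trans (add_le_add (abs_ringStream_sub_le ha hpa hnear) ?_)
  rw [abs_mul, abs_of_pos ha]
  gcongr

lemma abs_ringStream_sub_le_negMulLog {d ρ : ℝ} (had : 4 * d ≤ a.1) (hρ : 0 < ρ) (hρd : ρ ≤ d / 8)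
    (hp : |dE p a - ρ| ≤ ρ * (ρ / d / 2)) :
    |ringStream a p - a.1 * (Real.log (a.1 / ρ) + 3 * Real.log 2 - 2)| ≤
      3 * (a.1 * Real.negMulLog (ρ / d)) := by
  have hd : 0 < d := by linarith
  have hτ : 0 < ρ / d := by positivity
  have hτ8 : ρ / d ≤ 1 / 8 := (div_le_iff₀ hd).2 (by linarith)
  have hτR : 4 * ρ ≤ a.1 * (ρ / d) := by
    rw [mul_div_left_comm, mul_comm]
    exact mul_le_mul_of_nonneg_left ((le_div_iff₀ hd).2 had) hρ.le
  have hσle : dE p a ≤ 17 / 16 * ρ := by nlinarith [(abs_le.1 hp).2]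
  have hleσ : 15 / 16 * ρ ≤ dE p a := by nlinarith [(abs_le.1 hp).1]
  have hσ : 0 < dE p a := by linarith
  have hlog : Real.log (a.1 / dE p a) ≤ 16 / 15 * (a.1 / d) - 1 - Real.log (ρ / d) := by
    have hle : a.1 / dE p a ≤ 16 / 15 * (a.1 / d) / (ρ / d) := by
      rw [show 16 / 15 * (a.1 / d) / (ρ / d) = a.1 / (15 / 16 * ρ) by field_simp]
      gcongr
    refine (Real.log_le_log (by positivity) hle).trans ?_
    rw [Real.log_div (by positivity) hτ.ne']
    gcongr
    exact Real.log_le_sub_one_of_pos (by positivity)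
  have hL := two_le_neg_log hτ hτ8
  calc _ ≤ dE p a * (6 + Real.log (a.1 / dE p a)) + a.1 * (2 * (ρ / d / 2)) :=
        abs_ringStream_sub_le_add ha (dE_pos.1 hσ) (by linarith) hρ (by linarith) hp
    _ ≤ dE p a * (6 + (16 / 15 * (a.1 / d) - 1 - Real.log (ρ / d))) + a.1 * (ρ / d) := by
        gcongr
        linarith
    _ ≤ 17 / 16 * ρ * (6 + (16 / 15 * (a.1 / d) - 1 - Real.log (ρ / d))) + a.1 * (ρ / d) := by
        gcongr
        linarith [div_pos ha hd]
    _ = 17 / 64 * (4 * ρ) * (5 - Real.log (ρ / d)) + 32 / 15 * (a.1 * (ρ / d)) := by ring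
    _ ≤ 17 / 64 * (a.1 * (ρ / d)) * (5 - Real.log (ρ / d)) + 32 / 15 * (a.1 * (ρ / d)) := by
        gcongr
        linarith
    _ ≤ 3 * (a.1 * Real.negMulLog (ρ / d)) := by
        rw [Real.negMulLog]
        nlinarith [mul_pos ha hτ]

end NearRing

namespace IsSeparated

variable {ι : Type*} {a : ι → ℝ × ℝ} {d : ℝ} (hd : IsSeparated a d)
include hd

lemma mul_nE_ringField_le {i j : ι} (hij : i ≠ j) {p : ℝ × ℝ} (hp : dE p (a i) ≤ d) :
    p.1 * nE (ringField (a j) p) ≤ 5 * (a i).1 / d := by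
  have hfield := dE_mul_nE_ringField_le (hd.mem_Hp j) (hd.fst_pos_of_dE_le hp)
    (hd.ne_of_dE_le hij hp)
  have hfar := hd.three_mul_le_dE hij hp
  have hd0 := hd.pos
  have hradius : (a j).1 ≤ (a i).1 + d + dE p (a j) := by
    have hi := (abs_le.1 ((abs_fst_le_nE (p - a i)).trans hp)).2
    have hj := (abs_le.1 (abs_fst_le_nE (p - a j))).1
    rw [Prod.fst_sub] at hi hj
    rw [dE]
    linarith
  have hratio : (a j).1 * d ≤ dE p (a j) * (a i).1 := by
    nlinarith [hd.le_fst i]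
  rw [le_div_iff₀ hd0]
  refine le_of_mul_le_mul_left ?_ ((mul_pos three_pos hd0).trans_le hfar)
  linear_combination d * hfield + 5 * hratio

lemma abs_ringStream_sub_ringStream_le {i j : ι} (hij : i ≠ j) {p : ℝ × ℝ} (hp : dE p (a i) ≤ d) :
    |ringStream (a j) p - ringStream (a j) (a i)| ≤ 5 * (a i).1 / d * dE p (a i) := by
  refine abs_sub_le_of_nE_gradR_le (convex_dE_le (a i) d) hp
    ((dE_self (a i)).trans_le hd.pos.le) (fun q hq => ?_) (fun q hq => ?_)
  · exact (contDiffAt_ringStream (hd.mem_Hp j) (hd.fst_pos_of_dE_le hq)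
      (hd.ne_of_dE_le hij hq)).differentiableAt two_ne_zero
  · have hq0 := hd.fst_pos_of_dE_le hq
    rw [gradR_ringStream (hd.mem_Hp j) hq0 (hd.ne_of_dE_le hij hq), nE_smul, abs_of_pos hq0]
    exact hd.mul_nE_ringField_le hij hq

lemma abs_dotE_ringField_le (i j : ι) {p : ℝ × ℝ} (hne : p ≠ a i) (hp : dE p (a i) ≤ d) :
    |dotE (ringField (a j) p) (p - a i)| ≤ 10 := by
  have hi := hd.mem_Hp i
  have hbound : dE p (a i) * (p.1 * nE (ringField (a j) p)) ≤ 5 * (a i).1 := by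
    rcases eq_or_ne i j with rfl | hij
    · exact dE_mul_nE_ringField_le hi (hd.fst_pos_of_dE_le hp) hne
    · have hfield := hd.mul_nE_ringField_le hij hp
      have hnonneg := mul_nonneg (hd.fst_pos_of_dE_le hp).le (nE_nonneg (ringField (a j) p))
      calc _ ≤ d * (5 * (a i).1 / d) := mul_le_mul hp hfield hnonneg hd.pos.le
        _ = 5 * (a i).1 := mul_div_cancel₀ _ hd.pos.ne'
  refine (abs_dotE_le _ _).trans (le_of_mul_le_mul_left ?_ (half_pos hi))
  calc (a i).1 / 2 * (nE (ringField (a j) p) * dE p (a i))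
      ≤ p.1 * (nE (ringField (a j) p) * dE p (a i)) :=
        mul_le_mul_of_nonneg_right (hd.half_fst_le_of_dE_le hp)
          (mul_nonneg (nE_nonneg _) (dE_nonneg _ _))
    _ ≤ (a i).1 / 2 * 10 := by linarith

lemma abs_dotE_totalField_le [Fintype ι] (i : ι) {p : ℝ × ℝ} (hne : p ≠ a i)
    (hp : dE p (a i) ≤ d) :
    |dotE (totalField a p) (p - a i)| ≤ 10 * Fintype.card ι := by
  rw [totalField, dotE_sum_left, mul_comm, ← nsmul_eq_mul]
  exact (Finset.abs_sum_le_sum_abs _ _).trans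
    (Finset.sum_le_card_nsmul _ _ _ fun j _ => hd.abs_dotE_ringField_le i j hne hp)

end IsSeparated

/-! ### The energy outside the cores -/

/-- The constant to which the total stream function reduces, up to a small error, on the circle of
radius `ρ` around `a i`. -/
def coreStream {ι : Type*} [Fintype ι] [DecidableEq ι] (a : ι → ℝ × ℝ) (ρ : ℝ) (i : ι) : ℝ :=
  (a i).1 * (Real.log ((a i).1 / ρ) + (∑ j ∈ Finset.univ.erase i, Avec (a j) (a i)) +
    3 * Real.log 2 - 2)

/-- The open half plane with the cores of radius `ρ` around the points `a i` removed. -/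
def coreComplement {ι : Type*} (a : ι → ℝ × ℝ) (ρ : ℝ) : Set (ℝ × ℝ) := Hp \ ⋃ i, ballE (a i) ρ

section CoreComplement

variable {ι : Type*} {a : ι → ℝ × ℝ} {p : ℝ × ℝ} {ρ : ℝ}

lemma mem_coreComplement : p ∈ coreComplement a ρ ↔ p ∈ Hp ∧ ∀ i, ρ ≤ dE p (a i) := by
  simp only [coreComplement, Set.mem_sdiff, Set.mem_iUnion, not_exists, ballE, Set.mem_ofPred_eq,
    not_lt]

lemma coreComplement_subset_Hp : coreComplement a ρ ⊆ Hp := Set.sdiff_subset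

lemma measurableSet_coreComplement (a : ι → ℝ × ℝ) (ρ : ℝ) :
    MeasurableSet (coreComplement a ρ) :=
  measurableSet_Hp.diff (isOpen_iUnion fun i =>
    isOpen_lt (continuous_dE (a i)) continuous_const).measurableSet

lemma coreComplement_subset_puncturedHp (hρ : 0 < ρ) : coreComplement a ρ ⊆ puncturedHp a :=
  fun _ hp => ⟨hp.1, fun i => dE_pos.1 (hρ.trans_le ((mem_coreComplement.1 hp).2 i))⟩

end CoreComplement

lemma thinAnnulus_bounds {ρ d : ℝ} (hρ : 0 < ρ) (hρd : ρ ≤ d / 8) :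
    0 < ρ * (ρ / d / 2) ∧ 0 < ρ - ρ * (ρ / d / 2) ∧ ρ + ρ * (ρ / d / 2) ≤ d := by
  have hd : 0 < d := by linarith
  have hτ : ρ / d ≤ 1 / 8 := (div_le_iff₀ hd).2 (by linarith)
  refine ⟨by positivity, by nlinarith, by nlinarith⟩

namespace IsSeparated

variable {ι : Type*} [Fintype ι] {a : ι → ℝ × ℝ} {d : ℝ} (hd : IsSeparated a d)
include hd

section Sandwich

variable {s t : ℝ} (hs : 0 < s) (hst : s < t) (ht : t ≤ d)
include hs hst ht

lemma integrableOn_energyDensity_coreComplement :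
    IntegrableOn (energyDensity a) (coreComplement a t) :=
  have hint := hd.integrableOn_coreCutoff_mul_energyDensity hs hst ht
  (hint.mono_set coreComplement_subset_Hp).congr_fun (fun p hp => by
    simp only [coreCutoff_eq_one hs.le hst (mem_coreComplement.1 hp).2, one_mul])
    (measurableSet_coreComplement a t)

lemma setIntegral_energyDensity_coreComplement_le :
    ∫ p in coreComplement a t, energyDensity a p ≤
      ∫ p in Hp, coreCutoff a s t p * energyDensity a p := by
  calc ∫ p in coreComplement a t, energyDensity a p
      = ∫ p in coreComplement a t, coreCutoff a s t p * energyDensity a p :=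
        setIntegral_congr_fun (μ := volume) (measurableSet_coreComplement a t) fun p hp => by
          simp only [coreCutoff_eq_one hs.le hst (mem_coreComplement.1 hp).2, one_mul]
    _ ≤ _ := by
        refine setIntegral_mono_set (hd.integrableOn_coreCutoff_mul_energyDensity hs hst ht) ?_
          (.of_forall coreComplement_subset_Hp)
        filter_upwards [ae_restrict_mem measurableSet_Hp] with p hp
        exact mul_nonneg (hd.coreCutoff_mem_Icc hs.le hst ht p).1 (energyDensity_nonneg hp)

lemma setIntegral_coreCutoff_mul_energyDensity_le :
    ∫ p in Hp, coreCutoff a s t p * energyDensity a p ≤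
      ∫ p in coreComplement a s, energyDensity a p := by
  have hint := hd.integrableOn_coreCutoff_mul_energyDensity hs hst ht
  have hvanish (p) (hp : p ∈ Hp \ coreComplement a s) :
      coreCutoff a s t p * energyDensity a p = 0 := by
    obtain ⟨i, hi⟩ : ∃ i, dE p (a i) < s := by
      by_contra! h
      exact hp.2 (mem_coreComplement.2 ⟨hp.1, h⟩)
    rw [hd.coreCutoff_eq_zero hs.le hst ht hi.le, zero_mul]
  calc ∫ p in Hp, coreCutoff a s t p * energyDensity a p
      = ∫ p in coreComplement a s, coreCutoff a s t p * energyDensity a p :=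
        setIntegral_eq_of_subset_of_forall_sdiff_eq_zero measurableSet_Hp coreComplement_subset_Hp
          hvanish
    _ ≤ _ := by
        refine setIntegral_mono_on (hint.mono_set coreComplement_subset_Hp)
          (hd.integrableOn_energyDensity_coreComplement (half_pos hs) (half_lt_self hs)
            (hst.le.trans ht)) (measurableSet_coreComplement a s) fun p hp => ?_
        exact mul_le_of_le_one_left (energyDensity_nonneg hp.1)
          (hd.coreCutoff_mem_Icc hs.le hst ht p).2

end Sandwich

lemma totalStream_sub_coreStream [DecidableEq ι] (i : ι) (ρ : ℝ) (p : ℝ × ℝ) :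
    totalStream a p - coreStream a ρ i =
      (ringStream (a i) p - (a i).1 * (Real.log ((a i).1 / ρ) + 3 * Real.log 2 - 2)) +
        ∑ j ∈ Finset.univ.erase i, (ringStream (a j) p - ringStream (a j) (a i)) := by
  have hA : ∑ j ∈ Finset.univ.erase i, ringStream (a j) (a i) =
      (a i).1 * ∑ j ∈ Finset.univ.erase i, Avec (a j) (a i) := by
    rw [Finset.mul_sum]
    exact Finset.sum_congr rfl fun j hj => (mul_Avec_eq_ringStream (hd.mem_Hp j) (hd.mem_Hp i)
      (hd.injective.ne (Finset.ne_of_mem_erase hj).symm)).symm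
  rw [totalStream, coreStream, ← Finset.add_sum_erase _ _ (Finset.mem_univ i),
    Finset.sum_sub_distrib, hA]
  ring

variable [DecidableEq ι] {ρ : ℝ} (hρ : 0 < ρ) (hρd : ρ ≤ d / 8)
include hρ hρd

lemma abs_totalStream_sub_coreStream_le (i : ι) {p : ℝ × ℝ}
    (hp : |dE p (a i) - ρ| ≤ ρ * (ρ / d / 2)) :
    |totalStream a p - coreStream a ρ i| ≤
      3 * Fintype.card ι * ((a i).1 * Real.negMulLog (ρ / d)) := by
  have hd0 := hd.pos
  have hi : 0 < (a i).1 := hd.mem_Hp i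
  have hτ : 0 < ρ / d := by positivity
  have hτ8 : ρ / d ≤ 1 / 8 := (div_le_iff₀ hd0).2 (by linarith)
  have hσ : dE p (a i) ≤ 17 / 16 * ρ := by nlinarith [(abs_le.1 hp).2]
  have hown := abs_ringStream_sub_le_negMulLog hi (hd.le_fst i) hρ hρd hp
  have hother (j) (hj : j ∈ Finset.univ.erase i) :
      |ringStream (a j) p - ringStream (a j) (a i)| ≤
        3 * ((a i).1 * Real.negMulLog (ρ / d)) := by
    have hlog := two_le_neg_log hτ hτ8
    calc _ ≤ 5 * (a i).1 / d * dE p (a i) :=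
          hd.abs_ringStream_sub_ringStream_le (Finset.ne_of_mem_erase hj).symm (by linarith)
      _ ≤ 5 * (a i).1 / d * (17 / 16 * ρ) := by gcongr
      _ = 85 / 16 * ((a i).1 * (ρ / d)) := by ring
      _ ≤ 3 * ((a i).1 * Real.negMulLog (ρ / d)) := by
        rw [Real.negMulLog]
        nlinarith [mul_pos hi hτ]
  calc |totalStream a p - coreStream a ρ i|
      ≤ 3 * ((a i).1 * Real.negMulLog (ρ / d)) +
        ∑ j ∈ Finset.univ.erase i, 3 * ((a i).1 * Real.negMulLog (ρ / d)) := by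
        rw [hd.totalStream_sub_coreStream i ρ p]
        exact (abs_add_le _ _).trans (add_le_add hown
          ((Finset.abs_sum_le_sum_abs _ _).trans (Finset.sum_le_sum hother)))
    _ = ∑ j : ι, 3 * ((a i).1 * Real.negMulLog (ρ / d)) :=
        Finset.add_sum_erase Finset.univ (fun _ => _) (Finset.mem_univ i)
    _ = 3 * Fintype.card ι * ((a i).1 * Real.negMulLog (ρ / d)) := by
        rw [Finset.sum_const, Finset.card_univ, nsmul_eq_mul]
        ring

section ThinAnnulus

variable {s t : ℝ} (hst : s < t) (hρs : ρ - ρ * (ρ / d / 2) ≤ s) (htρ : t ≤ ρ + ρ * (ρ / d / 2))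
include hst hρs htρ

lemma abs_integral_radialWeight_mul_flux_add_le (i : ι) :
    |(∫ p, radialWeight (a i) s t p * (totalStream a p * dotE (totalField a p) (p - a i))) +
        2 * π * coreStream a ρ i| ≤
      60 * π * Fintype.card ι ^ 2 * ((a i).1 * Real.negMulLog (ρ / d)) := by
  obtain ⟨-, hlow, hupp⟩ := thinAnnulus_bounds hρ hρd
  have hs := hlow.trans_le hρs
  have ht := htρ.trans hupp
  have hfield (p) (hne : p ≠ a i) (hp : dE p (a i) ≤ d) : ContDiffAt ℝ 1 (totalField a) p :=
    contDiffAt_totalField hd.mem_Hp (hd.mem_puncturedHp hne hp)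
  have hW (p) (hne : p ≠ a i) (hp : dE p (a i) ≤ d) :
      ContDiffAt ℝ 1 (fun q => (totalStream a q - coreStream a ρ i) • totalField a q) p :=
    ((contDiffAt_totalStream hd.mem_Hp (hd.mem_puncturedHp hne hp)).sub contDiffAt_const).smul
      (hfield p hne hp)
  have hflux := abs_integral_radialWeight_mul_flux_sub_le (c := 0) hW hs hst ht
    (ε := 3 * Fintype.card ι * ((a i).1 * Real.negMulLog (ρ / d)) * (10 * Fintype.card ι))
    fun p hp => by
      have hclose : |dE p (a i) - ρ| ≤ ρ * (ρ / d / 2) :=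
        abs_le.2 ⟨by linarith [hp.1], by linarith [hp.2]⟩
      have hstream := hd.abs_totalStream_sub_coreStream_le hρ hρd i hclose
      rw [dotE_smul_left, sub_zero, abs_mul]
      exact mul_le_mul hstream (hd.abs_dotE_totalField_le i (ne_of_mem_closedAnnulus hs hp)
        (hp.2.trans ht)) (abs_nonneg _) ((abs_nonneg _).trans hstream)
  have hsplit : ∫ p, radialWeight (a i) s t p *
        dotE ((totalStream a p - coreStream a ρ i) • totalField a p) (p - a i) =
      (∫ p, radialWeight (a i) s t p * (totalStream a p * dotE (totalField a p) (p - a i))) +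
        2 * π * coreStream a ρ i := by
    have h1 := hd.integral_radialWeight_mul_totalField i hs hst ht
    have h2 := integrable_radialWeight_mul_flux hfield hs hst ht
    rw [show 2 * π * coreStream a ρ i = -(coreStream a ρ i * -(2 * π)) by ring, ← h1,
      ← sub_eq_add_neg, ← integral_const_mul, ← integral_sub
      (hd.integrable_radialWeight_mul_flux_totalField hs hst ht i) (h2.const_mul _)]
    congr 1 with p
    rw [dotE_smul_left]
    ring
  rw [hsplit] at hflux
  rw [← sub_zero (_ + _), ← mul_zero (2 * π)]
  exact hflux.trans_eq (by ring)

lemma abs_setIntegral_coreCutoff_mul_energyDensity_sub_le :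
    |(∫ p in Hp, coreCutoff a s t p * energyDensity a p) - 2 * π * ∑ i, coreStream a ρ i| ≤
      60 * π * Fintype.card ι ^ 2 * ((∑ i, (a i).1) * Real.negMulLog (ρ / d)) := by
  obtain ⟨-, hlow, hupp⟩ := thinAnnulus_bounds hρ hρd
  have hs := hlow.trans_le hρs
  have ht := htρ.trans hupp
  rw [hd.setIntegral_coreCutoff_mul_energyDensity hs hst ht, ← neg_add', abs_neg, Finset.mul_sum,
    ← Finset.sum_add_distrib, Finset.sum_mul, Finset.mul_sum]
  exact (Finset.abs_sum_le_sum_abs _ _).trans (Finset.sum_le_sum fun i _ =>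
    hd.abs_integral_radialWeight_mul_flux_add_le hρ hρd hst hρs htρ i)

end ThinAnnulus

lemma abs_setIntegral_energyDensity_sub_le :
    |(∫ p in coreComplement a ρ, energyDensity a p) - 2 * π * ∑ i, coreStream a ρ i| ≤
      60 * π * Fintype.card ι ^ 2 * ((∑ i, (a i).1) * Real.negMulLog (ρ / d)) := by
  obtain ⟨hwidth, hlow, hupp⟩ := thinAnnulus_bounds hρ hρd
  have hinner := hd.abs_setIntegral_coreCutoff_mul_energyDensity_sub_le hρ hρd
    (sub_lt_self ρ hwidth) le_rfl (by linarith)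
  have houter := hd.abs_setIntegral_coreCutoff_mul_energyDensity_sub_le hρ hρd
    (lt_add_of_pos_right ρ hwidth) (by linarith) le_rfl
  have hupper := hd.setIntegral_energyDensity_coreComplement_le hlow (sub_lt_self ρ hwidth)
    (by linarith)
  have hlower := hd.setIntegral_coreCutoff_mul_energyDensity_le hρ (lt_add_of_pos_right ρ hwidth)
    hupp
  exact abs_le.2 ⟨by linarith [(abs_le.1 houter).1], by linarith [(abs_le.1 hinner).2]⟩

end IsSeparated

section Fin

variable {n : ℕ} {a : Fin n → ℝ × ℝ} (ha : ∀ i, a i ∈ Hp)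
include ha

lemma isSeparated_rhoConf (hρ : 0 < rhoConf a) : IsSeparated a (rhoConf a) := by
  have hbdd : BddBelow ({d | ∃ i j : Fin n, i ≠ j ∧ d = dE (a i) (a j)} ∪
      {d | ∃ i, d = (a i).1}) := by
    refine ⟨0, ?_⟩
    rintro _ (⟨i, j, -, rfl⟩ | ⟨i, rfl⟩)
    · exact dE_nonneg _ _
    · exact le_of_lt (ha i)
  refine ⟨hρ, fun i => ?_, fun i j hij => ?_⟩
  · linarith [csInf_le hbdd (Or.inr ⟨i, rfl⟩), rhoConf.eq_1 a]
  · linarith [csInf_le hbdd (Or.inl ⟨i, j, hij, rfl⟩), rhoConf.eq_1 a]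

lemma setIntegral_rPsiStar_eq {ρ : ℝ} (hρ : 0 < ρ) :
    ∫ p in Hp \ ⋃ i, ballE (a i) ρ,
      (1 / (2 * p.1)) * ((pdRr (rPsiStar a) p) ^ 2 + (pdZr (rPsiStar a) p) ^ 2) =
    (∫ p in coreComplement a ρ, energyDensity a p) / 2 :=
  (setIntegral_congr_fun (μ := volume) (measurableSet_coreComplement a ρ) fun _ hp =>
    energyDensity_eq ha (coreComplement_subset_puncturedHp hρ hp)).trans (integral_div _ _)

end Fin

lemma negMulLog_le_mul_log_sq {x : ℝ} (hx : 0 < x) (hx8 : x ≤ 1 / 8) :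
    Real.negMulLog x ≤ x * Real.log x ^ 2 := by
  rw [Real.negMulLog]
  nlinarith [mul_nonneg hx.le (sub_nonneg.2 (two_le_neg_log hx hx8)), two_le_neg_log hx hx8]

/-- **Lemma A.1** (energy of the singular vortex-ring field outside the cores). -/
theorem singular_ring_energy_outside_cores (n : ℕ) (hn : 1 ≤ n) :
    ∃ C > (0:ℝ), ∃ δ₀ > (0:ℝ),
      ∀ a : Fin n → ℝ × ℝ, (∀ i, a i ∈ Hp) → Function.Injective a →
      ∀ ρ : ℝ, 0 < ρ → ρ ≤ δ₀ * rhoConf a →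
        |(∫ p in Hp \ ⋃ i, ballE (a i) ρ,
            (1 / (2 * p.1)) * ((pdRr (rPsiStar a) p) ^ 2 + (pdZr (rPsiStar a) p) ^ 2))
          - π * ∑ i, (a i).1 * (Real.log ((a i).1 / ρ)
              + (∑ j ∈ Finset.univ.erase i, Avec (a j) (a i)) + 3 * Real.log 2 - 2)|
          ≤ C * (∑ i, (a i).1) * (ρ / rhoConf a) * Real.log (ρ / rhoConf a) ^ 2 := by
  refine ⟨30 * π * n ^ 2, by positivity, 1 / 8, by norm_num, fun a ha _ ρ hρ hρδ => ?_⟩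
  have hpos : 0 < rhoConf a := by linarith
  have henergy := (isSeparated_rhoConf ha hpos).abs_setIntegral_energyDensity_sub_le hρ
    (by linarith)
  rw [Fintype.card_fin] at henergy
  have hsum : 0 ≤ ∑ i, (a i).1 := Finset.sum_nonneg fun i _ => le_of_lt (ha i)
  have hlog := negMulLog_le_mul_log_sq (div_pos hρ hpos) ((div_le_iff₀ hpos).2 hρδ)
  rw [setIntegral_rPsiStar_eq ha hρ]
  calc |(∫ p in coreComplement a ρ, energyDensity a p) / 2 - π * ∑ i, coreStream a ρ i|
      = |(∫ p in coreComplement a ρ, energyDensity a p) - 2 * π * ∑ i, coreStream a ρ i| / 2 := by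
        rw [← abs_two (α := ℝ), ← abs_div, abs_two]
        congr 1
        ring
    _ ≤ 30 * π * n ^ 2 * ((∑ i, (a i).1) * Real.negMulLog (ρ / rhoConf a)) := by linarith
    _ ≤ 30 * π * n ^ 2 * ((∑ i, (a i).1) * (ρ / rhoConf a * Real.log (ρ / rhoConf a) ^ 2)) := by
        gcongr
    _ = _ := by ring

end
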